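/- arXiv:1812.05301 — 4 statements merged into one kernel-verified Lean document; each statement's English description precedes it below -/
import Mathlib

section
/- Let n ≥ 2, let U ⊂ ℝⁿ be open, bounded and star-shaped with respect to a ball, and assume the operator 𝔸 is ℂ-elliptic. Let (v_k) be a sequence in L¹(U;ℝⁿ) with sup_k (‖v_k‖_{L¹(U;ℝⁿ)} + |𝔸v_k|(U)) < ∞. Then for every p ∈ [1, n/(n−1)) there exist a subsequence (v_{k_j}) and a function v ∈ L^p(U;ℝⁿ) such that v_{k_j} → v in L^p(U;ℝⁿ) (compact embedding of BV^𝔸(U) into L^p(U;ℝⁿ) for p < n/(n−1)). -/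
/-!
Compactness follows from a quantitative approximation `‖u - P_K u‖_{Lᵖ} ≲ τ ^ K`, with `τ < 1`, by
dyadic mollifications `P_K`, uniform over sets bounded in `BV^𝔸`: on a weak-* convergent
subsequence each `P_K u_j` converges strongly, so `(u_j)` is Cauchy in `Lᵖ`.

*Kernel.* ℂ-ellipticity says that the only possible common complex zero of the ideal `rowIdeal`
(the polynomials `q` for which `q · 1` is a polynomial matrix times the symbol) is the origin. By the
Nullstellensatz a power `𝔪 ^ m` of the ideal generated by the variables lies in it
(`exists_pow_le_rowIdeal`). Hence a test function which is a sum of derivatives of order `m` can,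
placed in any coordinate `i`, be written as `𝔸*Ψ_i` with test fields `Ψ_i` supported in the same set
(`IsDiv.solve`). For an open set `Γ` stable under contractions there is a smooth `ρ` with compact
support in `Γ` and `∫ ρ = 1` such that `ρ - 2ⁿ ρ(2 ·)` is a sum of derivatives of order as high as
desired (`exists_kernel`); so `(ρ - 2ⁿ ρ(2 ·)) e_i = 𝔸*Ψ_i` (`exists_real_kernel`).

*Estimate.* Put `P_k u(x) = ∫ u(y) 2^{kn} ρ(2^k (y - x)) dy`, which only uses the values of `u` in
`x + Γ`. By the kernel identity, `P_k u - P_{k+1} u` is a pairing of `u` with `𝔸*` of a rescaled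
field. If `V + Γ ⊆ U` and `M` is the `𝔸`-variation of `u` on `U`, this bounds the difference on `V`
by `M 2^{k(n-1)}` in the sup norm and, by duality, by `M 2^{-k}` in `L¹`, up to constants
(`corr_bound_sup`, `corr_bound_L1`). Interpolation gives geometric decay in `Lᵖ`, precisely because
`p < n/(n-1)` (`step_bound`), and the telescoping sum converges to `u` at Lebesgue points
(`tail_bound`).

*Geometry.* Star-shapedness with respect to a ball yields finitely many compact sets `V a` which
cover `U` and contraction-stable open sets `Γ a` with `V a + Γ a ⊆ U` (`exists_patches`), so no
extension operator is needed.
-/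

open MeasureTheory
open scoped ENNReal

noncomputable section

/-- The Frobenius norm of an `n × n` array. -/
def frobNorm {n : ℕ} (M : Fin n → Fin n → ℝ) : ℝ := Real.sqrt (∑ i, ∑ j, (M i j) ^ 2)

/-- The Euclidean norm of a vector in `ℝⁿ`. -/
def vecNorm {n : ℕ} (v : Fin n → ℝ) : ℝ := Real.sqrt (∑ i, (v i) ^ 2)

/-- The differential operator `𝔸 u (x) = ∑ j, A_j (∂_j u (x))`. -/
def Aop (n : ℕ) (A : Fin n → ((Fin n → ℝ) →ₗ[ℝ] (Fin n → Fin n → ℝ)))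
    (u : (Fin n → ℝ) → (Fin n → ℝ)) (x : Fin n → ℝ) : Fin n → Fin n → ℝ :=
  ∑ j, A j (fderiv ℝ u x (Pi.single j 1))

/-- ℂ-ellipticity of `𝔸`: the complexified symbol `v ↦ ∑ j, z_j A_j^ℂ v` is injective for
every `z ∈ ℂⁿ \ {0}`. -/
def CElliptic (n : ℕ) (A : Fin n → ((Fin n → ℝ) →ₗ[ℝ] (Fin n → Fin n → ℝ))) : Prop :=
  ∀ z : Fin n → ℂ, z ≠ 0 → ∀ v : Fin n → ℂ,
    (∀ k l, (∑ j, z j * ((A j (fun i => (v i).re) k l : ℂ)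
        + Complex.I * (A j (fun i => (v i).im) k l : ℂ))) = 0) → v = 0

/-- `U` is star-shaped with respect to (each point of) a ball contained in it. -/
def StarShapedWrtBall (n : ℕ) (U : Set (Fin n → ℝ)) : Prop :=
  ∃ x₀ : Fin n → ℝ, ∃ r : ℝ, 0 < r ∧ Metric.ball x₀ r ⊆ U ∧
    ∀ c ∈ Metric.ball x₀ r, StarConvex ℝ c U

/-- The adjoint `A_j^* : M_sym → ℝⁿ`, `(A_j^* φ)_i = ⟨A_j e_i, φ⟩` (Frobenius pairing). -/
def Aadj (n : ℕ) (A : Fin n → ((Fin n → ℝ) →ₗ[ℝ] (Fin n → Fin n → ℝ)))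
    (j : Fin n) (φ : Fin n → Fin n → ℝ) : Fin n → ℝ :=
  fun i => ∑ k, ∑ l, φ k l * A j (Pi.single i 1) k l

/-- Admissible test fields for the total `𝔸`-variation on `U`: `C¹`, compactly supported
in `U`, symmetric-matrix-valued, with Frobenius norm at most `1`. -/
def IsTest (n : ℕ) (U : Set (Fin n → ℝ))
    (φ : (Fin n → ℝ) → (Fin n → Fin n → ℝ)) : Prop :=
  ContDiff ℝ 1 φ ∧ HasCompactSupport φ ∧ tsupport φ ⊆ U ∧
    (∀ x k l, φ x k l = φ x l k) ∧ (∀ x, frobNorm (φ x) ≤ 1)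

/-- The pairing `∑ j ∫_U v(x) · A_j^*(∂_j φ(x)) dx`. -/
def pairing (n : ℕ) (A : Fin n → ((Fin n → ℝ) →ₗ[ℝ] (Fin n → Fin n → ℝ)))
    (v : (Fin n → ℝ) → (Fin n → ℝ)) (U : Set (Fin n → ℝ))
    (φ : (Fin n → ℝ) → (Fin n → Fin n → ℝ)) : ℝ :=
  ∑ j, ∫ x in U, ∑ i, v x i * Aadj n A j (fderiv ℝ φ x (Pi.single j 1)) i

/-- The total `𝔸`-variation `|𝔸v|(U)`, as a value in `[0, ∞]`. -/
def AvarE (n : ℕ) (A : Fin n → ((Fin n → ℝ) →ₗ[ℝ] (Fin n → Fin n → ℝ)))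
    (v : (Fin n → ℝ) → (Fin n → ℝ)) (U : Set (Fin n → ℝ)) : ℝ≥0∞ :=
  ⨆ φ : {φ : (Fin n → ℝ) → (Fin n → Fin n → ℝ) // IsTest n U φ},
    ENNReal.ofReal (pairing n A v U φ.1)

section
open scoped ContDiff Topology

/-! ### The symbol of a ℂ-elliptic operator and the Nullstellensatz -/

open MvPolynomial in
/-- The symbol `z ↦ ∑ j, z_j A_j` as a matrix of polynomials; the rows are indexed by the entries
`(k, l)` of the target matrix, the columns by the coordinates of `ℝⁿ`. -/
def symbolMatrix (n : ℕ) (A : Fin n → ((Fin n → ℝ) →ₗ[ℝ] (Fin n → Fin n → ℝ))) :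
    Matrix (Fin n × Fin n) (Fin n) (MvPolynomial (Fin n) ℂ) :=
  Matrix.of fun kl i => ∑ j, X j * C (A j (Pi.single i 1) kl.1 kl.2 : ℂ)

/-- The polynomials `q` such that `q · 1` is a left multiple, by a polynomial matrix, of the symbol
matrix; that is, every `q e_i` is a polynomial combination of the rows of the symbol. -/
def rowIdeal (n : ℕ) (A : Fin n → ((Fin n → ℝ) →ₗ[ℝ] (Fin n → Fin n → ℝ))) :
    Ideal (MvPolynomial (Fin n) ℂ) where
  carrier := {q | ∃ B : Matrix (Fin n) (Fin n × Fin n) (MvPolynomial (Fin n) ℂ),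
    B * symbolMatrix n A = q • (1 : Matrix (Fin n) (Fin n) (MvPolynomial (Fin n) ℂ))}
  add_mem' := by
    rintro a b ⟨B, hB⟩ ⟨B', hB'⟩
    exact ⟨B + B', by rw [Matrix.add_mul, hB, hB', add_smul]⟩
  zero_mem' := ⟨0, by simp⟩
  smul_mem' := by
    rintro c a ⟨B, hB⟩
    exact ⟨c • B, by rw [Matrix.smul_mul, hB, smul_smul, smul_eq_mul]⟩

/-- ℂ-ellipticity, restated for the evaluated symbol matrix. -/
lemma symbol_injective {n : ℕ} {A : Fin n → ((Fin n → ℝ) →ₗ[ℝ] (Fin n → Fin n → ℝ))}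
    (hC : CElliptic n A) (z : Fin n → ℂ) (hz : z ≠ 0) :
    Function.Injective ((symbolMatrix n A).map (MvPolynomial.eval z)).mulVecLin := by
  rw [← LinearMap.ker_eq_bot, LinearMap.ker_eq_bot']
  intro w hw
  apply hC z hz w
  intro k l
  have h := congrFun hw (k, l)
  simp only [Matrix.mulVecLin_apply, Matrix.mulVec, dotProduct, Matrix.map_apply, symbolMatrix,
    Matrix.of_apply, map_sum, map_mul, MvPolynomial.eval_X, MvPolynomial.eval_C,
    Pi.zero_apply] at h
  have hA : ∀ j (f : Fin n → ℝ), (A j f k l : ℂ) = ∑ i, (f i : ℂ) * (A j (Pi.single i 1) k l : ℂ) := by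
    intro j f
    have : f = ∑ i, f i • (Pi.single i 1 : Fin n → ℝ) := by
      ext t; simp [Finset.sum_apply, Pi.single_apply]
    conv_lhs => rw [this]
    simp [map_sum, Finset.sum_apply]
  rw [← h]
  simp_rw [Finset.sum_mul]
  rw [Finset.sum_comm]
  refine Finset.sum_congr rfl fun j _ => ?_
  rw [hA j, hA j, Finset.mul_sum, ← Finset.sum_add_distrib, Finset.mul_sum]
  refine Finset.sum_congr rfl fun i _ => ?_
  conv_rhs => rw [← Complex.re_add_im (w i)]
  ring

/-- `rowIdeal` has no common zero off the origin: a left inverse `B` of the symbol at `z` has constant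
entries, and the determinant of `B * symbolMatrix` lies in `rowIdeal` and equals `1` at `z`. -/
lemma exists_rowIdeal_eval_ne_zero {n : ℕ}
    {A : Fin n → ((Fin n → ℝ) →ₗ[ℝ] (Fin n → Fin n → ℝ))}
    (hC : CElliptic n A) (z : Fin n → ℂ) (hz : z ≠ 0) :
    ∃ q ∈ rowIdeal n A, MvPolynomial.eval z q ≠ 0 := by
  obtain ⟨g, hg⟩ := LinearMap.exists_leftInverse_of_injective _
    (LinearMap.ker_eq_bot.mpr (symbol_injective hC z hz))
  set N := (symbolMatrix n A).map (MvPolynomial.eval z) with hN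
  have hB : LinearMap.toMatrix' g * N = 1 := by
    have := congrArg LinearMap.toMatrix' hg
    rw [LinearMap.toMatrix'_comp, LinearMap.toMatrix'_id] at this
    rw [← this]; congr 1
    exact (LinearMap.toMatrix'_toLin' N).symm
  set B : Matrix (Fin n) (Fin n × Fin n) (MvPolynomial (Fin n) ℂ) :=
    (LinearMap.toMatrix' g).map MvPolynomial.C with hBdef
  refine ⟨(B * symbolMatrix n A).det, ⟨(B * symbolMatrix n A).adjugate * B, ?_⟩, ?_⟩
  · rw [Matrix.mul_assoc, Matrix.adjugate_mul]
  · rw [RingHom.map_det, RingHom.mapMatrix_apply, Matrix.map_mul]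
    have : B.map (MvPolynomial.eval z) = LinearMap.toMatrix' g := by
      ext a b; simp [hBdef]
    rw [this, hB]; simp

/-- The zero locus of `rowIdeal` is contained in `{0}`, so its radical contains all the variables. -/
lemma exists_pow_le_rowIdeal {n : ℕ}
    {A : Fin n → ((Fin n → ℝ) →ₗ[ℝ] (Fin n → Fin n → ℝ))} (hC : CElliptic n A) :
    ∃ m : ℕ, (Ideal.span (Set.range (MvPolynomial.X : Fin n → MvPolynomial (Fin n) ℂ))) ^ m
      ≤ rowIdeal n A := by
  obtain ⟨m, hm⟩ := Ideal.exists_radical_pow_le_of_fg (rowIdeal n A)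
    (IsNoetherian.noetherian _)
  refine ⟨m, (Ideal.pow_right_mono ?_ m).trans hm⟩
  rw [← MvPolynomial.vanishingIdeal_zeroLocus_eq_radical (K := ℂ), Ideal.span_le]
  rintro _ ⟨j, rfl⟩
  rw [SetLike.mem_coe, MvPolynomial.mem_vanishingIdeal_iff]
  intro z hz
  by_cases h0 : z = 0
  · simp [h0]
  · obtain ⟨q, hq, hq0⟩ := exists_rowIdeal_eval_ne_zero hC z h0
    exact absurd (by simpa [MvPolynomial.aeval_eq_eval] using MvPolynomial.mem_zeroLocus_iff.1 hz q hq) hq0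

/-! ### Test functions as a module over constant-coefficient operators -/

section

/-- The complex-valued smooth functions with compact support inside `Γ`. -/
def testSpace (n : ℕ) (Γ : Set (Fin n → ℝ)) : Submodule ℂ ((Fin n → ℝ) → ℂ) where
  carrier := {f | ContDiff ℝ ∞ f ∧ HasCompactSupport f ∧ tsupport f ⊆ Γ}
  add_mem' := by
    rintro f g ⟨hf, hf', hf''⟩ ⟨hg, hg', hg''⟩
    exact ⟨hf.add hg, hf'.add hg', (tsupport_add f g).trans (Set.union_subset hf'' hg'')⟩
  zero_mem' := ⟨contDiff_const, HasCompactSupport.zero, by simp [tsupport]⟩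
  smul_mem' := by
    rintro c f ⟨hf, hf', hf''⟩
    exact ⟨contDiff_const.smul hf, hf'.smul_left (f := fun _ => c),
      (tsupport_smul_subset_right (fun _ => c) f).trans hf''⟩

variable {n : ℕ} {Γ : Set (Fin n → ℝ)}

lemma testSpace.contDiff (f : testSpace n Γ) : ContDiff ℝ ∞ f.1 := f.2.1

lemma testSpace.differentiable (f : testSpace n Γ) : Differentiable ℝ f.1 :=
  f.2.1.differentiable (by simp)

/-- The partial derivative `∂_j` on test functions. -/
def dOp (j : Fin n) : testSpace n Γ →ₗ[ℂ] testSpace n Γ where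
  toFun f := ⟨fun x => fderiv ℝ f.1 x (Pi.single j 1), by
    refine ⟨(f.2.1.fderiv_right (by simp)).clm_apply contDiff_const, ?_, ?_⟩
    · exact f.2.2.1.fderiv_apply (𝕜 := ℝ) _
    · exact (tsupport_fderiv_apply_subset ℝ _).trans f.2.2.2⟩
  map_add' f g := by
    ext x
    simp only [Submodule.coe_add, Pi.add_apply]
    rw [fderiv_add (testSpace.differentiable f x) (testSpace.differentiable g x)]; rfl
  map_smul' c f := by
    ext x
    simp only [SetLike.val_smul, RingHom.id_apply, Pi.smul_apply]
    rw [fderiv_const_smul (testSpace.differentiable f x)]; rfl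

lemma dOp_apply (j : Fin n) (f : testSpace n Γ) (x : Fin n → ℝ) :
    (dOp j f).1 x = fderiv ℝ f.1 x (Pi.single j 1) := rfl

lemma dOp_comm (i j : Fin n) (f : testSpace n Γ) : dOp i (dOp j f) = dOp j (dOp i f) := by
  ext x
  have key : ∀ i j : Fin n, (dOp i (dOp j f)).1 x =
      fderiv ℝ (fderiv ℝ f.1) x (Pi.single i 1) (Pi.single j 1) := by
    intro i j
    rw [dOp_apply]
    have h : DifferentiableAt ℝ (fderiv ℝ f.1) x :=
      (((contDiff_infty.1 f.2.1 2).fderiv_right (m := 1) (by norm_num)).differentiable (by simp)) x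
    change fderiv ℝ (fun y => fderiv ℝ f.1 y (Pi.single j 1)) x _ = _
    rw [fderiv_clm_apply h (differentiableAt_const _)]
    simp
  rw [key, key]
  exact ((contDiff_infty.1 f.2.1 2).contDiffAt.isSymmSndFDerivAt (by simp)).eq _ _

/-- A commuting family in a (noncommutative) algebra extends to an action of polynomials. -/
lemma exists_algHom_of_comm {ι R : Type*} [Ring R] [Algebra ℂ R] (d : ι → R)
    (hd : ∀ i j, d i * d j = d j * d i) :
    ∃ φ : MvPolynomial ι ℂ →ₐ[ℂ] R, ∀ j, φ (MvPolynomial.X j) = d j := by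
  have hc := Algebra.isMulCommutative_adjoin ℂ (s := Set.range d)
    (by rintro _ ⟨i, rfl⟩ _ ⟨j, rfl⟩; exact hd i j)
  letI : CommSemiring (Algebra.adjoin ℂ (Set.range d)) :=
    { (Algebra.adjoin ℂ (Set.range d)).toSemiring with mul_comm := hc.is_comm.comm }
  let e : MvPolynomial ι ℂ →ₐ[ℂ] Algebra.adjoin ℂ (Set.range d) :=
    MvPolynomial.aeval (R := ℂ) (S₁ := Algebra.adjoin ℂ (Set.range d))
      (fun j => (⟨d j, Algebra.subset_adjoin ⟨j, rfl⟩⟩ : Algebra.adjoin ℂ (Set.range d)))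
  refine ⟨(Subalgebra.val (Algebra.adjoin ℂ (Set.range d))).comp e, fun j => ?_⟩
  change ((e (MvPolynomial.X j) : Algebra.adjoin ℂ (Set.range d)) : R) = d j
  have : e (MvPolynomial.X j) = ⟨d j, Algebra.subset_adjoin ⟨j, rfl⟩⟩ := MvPolynomial.aeval_X _ _
  rw [this]

/-- Polynomials act on test functions as constant-coefficient differential operators. -/
def polyAct (n : ℕ) (Γ : Set (Fin n → ℝ)) :
    MvPolynomial (Fin n) ℂ →ₐ[ℂ] Module.End ℂ (testSpace n Γ) :=
  (exists_algHom_of_comm (R := Module.End ℂ (testSpace n Γ)) dOp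
    (fun i j => LinearMap.ext fun f => dOp_comm i j f)).choose

lemma polyAct_X (j : Fin n) : polyAct n Γ (MvPolynomial.X j) = dOp j :=
  (exists_algHom_of_comm (R := Module.End ℂ (testSpace n Γ)) dOp
    (fun i j => LinearMap.ext fun f => dOp_comm i j f)).choose_spec j

lemma polyAct_C (c : ℂ) (f : testSpace n Γ) : polyAct n Γ (MvPolynomial.C c) f = c • f := by
  have := (polyAct n Γ).commutes c
  rw [MvPolynomial.algebraMap_eq] at this
  rw [this]; rfl

/-- `f` is a sum of partial derivatives of order exactly `m` of test functions supported in `Γ`. -/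
inductive IsDiv : ℕ → testSpace n Γ → Prop
  | zero (f) : IsDiv 0 f
  | step (m j f) : IsDiv m f → IsDiv (m + 1) (dOp j f)
  | add (m f g) : IsDiv m f → IsDiv m g → IsDiv m (f + g)

lemma IsDiv.smul {m : ℕ} {f : testSpace n Γ} (h : IsDiv m f) (c : ℂ) : IsDiv m (c • f) := by
  induction h with
  | zero f => exact .zero _
  | step m j f _ ih => rw [← map_smul]; exact .step _ _ _ ih
  | add m f g _ _ ih1 ih2 => rw [smul_add]; exact .add _ _ _ ih1 ih2

lemma IsDiv.sum {m : ℕ} {ι : Type*} (s : Finset ι) (f : ι → testSpace n Γ)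
    (h : ∀ i ∈ s, IsDiv m (f i)) (h0 : IsDiv m (0 : testSpace n Γ)) : IsDiv m (∑ i ∈ s, f i) := by
  classical
  induction s using Finset.induction_on with
  | empty => simpa
  | insert a s ha ih =>
    rw [Finset.sum_insert ha]
    exact .add _ _ _ (h _ (by simp)) (ih fun i hi => h i (by simp [hi]))

open MvPolynomial in
/-- If the `m`-th power of the ideal of the variables lies in `rowIdeal`, then a sum of derivatives of
order `m`, placed in the `i`-th coordinate, is the adjoint operator applied to test fields supported
in the same set `Γ`. The polynomials act as differential operators, so the matrix identity defining
`rowIdeal` turns into the required differential identity. -/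
lemma IsDiv.solve {A : Fin n → ((Fin n → ℝ) →ₗ[ℝ] (Fin n → Fin n → ℝ))} {m : ℕ}
    {f : testSpace n Γ} (hf : IsDiv m f) :
    ∀ (_ : (Ideal.span (Set.range (X : Fin n → MvPolynomial (Fin n) ℂ))) ^ m ≤ rowIdeal n A)
    (i : Fin n), ∃ Ψ : Fin n × Fin n → testSpace n Γ, ∀ i',
      ∑ kl, ∑ j, (A j (Pi.single i' 1) kl.1 kl.2 : ℂ) • dOp j (Ψ kl) = if i = i' then f else 0 := by
  -- The statement for `q(∂) f` with an auxiliary `q` is the one that passes to derivatives: a factor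
  -- `∂_j` of `f` is moved to `q`.
  suffices H : ∀ (q : MvPolynomial (Fin n) ℂ) (hq : ∀ r ∈ (Ideal.span (Set.range (X : Fin n → MvPolynomial (Fin n) ℂ))) ^ m, q * r ∈ rowIdeal n A) (i : Fin n),
      ∃ Ψ : Fin n × Fin n → testSpace n Γ, ∀ i',
      ∑ kl, ∑ j, (A j (Pi.single i' 1) kl.1 kl.2 : ℂ) • dOp j (Ψ kl) =
        if i = i' then polyAct n Γ q f else 0 by
    intro hm i
    simpa using H 1 (fun r hr => by simpa using hm hr) i
  induction hf with
  | zero f =>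
    intro q hq i
    obtain ⟨B, hB⟩ := hq 1 (by simp)
    refine ⟨fun kl => polyAct n Γ (B i kl) f, fun i' => ?_⟩
    have h := congrFun (congrFun hB i) i'
    rw [Matrix.mul_apply] at h
    have h2 := congrArg (fun p => polyAct n Γ p f) h
    simp only [map_sum, LinearMap.sum_apply, symbolMatrix, Matrix.of_apply] at h2
    have h3 : ∀ kl : Fin n × Fin n, polyAct n Γ (B i kl * ∑ j, X j * C (A j (Pi.single i' 1) kl.1 kl.2 : ℂ)) f
        = ∑ j, (A j (Pi.single i' 1) kl.1 kl.2 : ℂ) • dOp j (polyAct n Γ (B i kl) f) := by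
      intro kl
      rw [mul_comm, map_mul, Module.End.mul_apply, map_sum, LinearMap.sum_apply]
      refine Finset.sum_congr rfl fun j _ => ?_
      rw [mul_comm, map_mul, Module.End.mul_apply, polyAct_C, polyAct_X]
    rw [Finset.sum_congr rfl fun kl _ => h3 kl] at h2
    rw [h2]
    by_cases hi : i = i'
    · simp [hi]
    · simp [hi]
  | step m j f _ ih =>
    intro q hq i
    have := ih (q * X j) (fun r hr => by
      rw [mul_assoc]
      apply hq
      rw [pow_succ']
      exact Ideal.mul_mem_mul (Ideal.subset_span ⟨j, rfl⟩) hr) i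
    simpa [map_mul, polyAct_X] using this
  | add m f g _ _ ih1 ih2 =>
    intro q hq i
    obtain ⟨Ψ1, h1⟩ := ih1 q hq i
    obtain ⟨Ψ2, h2⟩ := ih2 q hq i
    refine ⟨Ψ1 + Ψ2, fun i' => ?_⟩
    simp only [Pi.add_apply, map_add, smul_add, Finset.sum_add_distrib]
    rw [h1, h2]
    by_cases hi : i = i' <;> simp [hi]

end

/-! ### Dyadic differences of kernels as derivatives of high order -/

section

/-- Differentiation under the integral sign for averages over dilations; the derivative has the same
form with a new weight, which gives smoothness by induction. -/
lemma contDiff_nat_dilate_integral {E : Type} [NormedAddCommGroup E] [NormedSpace ℝ E]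
    [FiniteDimensional ℝ E] (N : ℕ) :
    ∀ {F : Type} [NormedAddCommGroup F] [NormedSpace ℝ F] [CompleteSpace F] (w : ℝ → ℝ)
      (f : E → F), Continuous w → ContDiff ℝ ∞ f →
      ContDiff ℝ N (fun y => ∫ σ in (1:ℝ)..2, w σ • f (σ • y)) ∧
      ∀ y, HasFDerivAt (fun y => ∫ σ in (1:ℝ)..2, w σ • f (σ • y))
        (∫ σ in (1:ℝ)..2, (w σ * σ) • fderiv ℝ f (σ • y)) y := by
  have D : ∀ {F : Type} [NormedAddCommGroup F] [NormedSpace ℝ F] [CompleteSpace F] (w : ℝ → ℝ)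
      (f : E → F), Continuous w → ContDiff ℝ ∞ f → ∀ y,
      HasFDerivAt (fun y => ∫ σ in (1:ℝ)..2, w σ • f (σ • y))
        (∫ σ in (1:ℝ)..2, (w σ * σ) • fderiv ℝ f (σ • y)) y := by
    intro F _ _ _ w f hw hf y
    have hfc := hf.continuous
    have hf' : Continuous (fderiv ℝ f) := hf.continuous_fderiv (by simp)
    have hc' : Continuous fun p : ℝ × E => (w p.1 * p.1) • fderiv ℝ f (p.1 • p.2) := by fun_prop
    obtain ⟨B, hB⟩ := ((isCompact_Icc (a := (1:ℝ)) (b := 2)).prod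
      (isCompact_closedBall y 1)).exists_bound_of_continuousOn hc'.continuousOn
    refine intervalIntegral.hasFDerivAt_integral_of_dominated_of_fderiv_le
      (s := Metric.closedBall y 1) (bound := fun _ => B)
      (F := fun y σ => w σ • f (σ • y)) (F' := fun y σ => (w σ * σ) • fderiv ℝ f (σ • y))
      (Metric.closedBall_mem_nhds y one_pos)
      (.of_forall fun x => ?_) ?_ ?_ ?_ (by simp) ?_
    · exact Continuous.aestronglyMeasurable (by fun_prop)
    · exact Continuous.intervalIntegrable (by fun_prop) _ _
    · exact Continuous.aestronglyMeasurable (by fun_prop)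
    · refine .of_forall fun t ht x hx => hB (t, x) ⟨?_, hx⟩
      rw [Set.uIoc_of_le (by norm_num)] at ht
      exact ⟨ht.1.le, ht.2⟩
    · refine .of_forall fun t ht x hx => ?_
      have h1 : HasFDerivAt f (fderiv ℝ f (t • x)) (t • x) :=
        (hf.differentiable (by simp) _).hasFDerivAt
      have h2 : HasFDerivAt (fun x : E => t • x) (t • ContinuousLinearMap.id ℝ E) x :=
        (hasFDerivAt_id x).const_smul t
      have h3 := (h1.comp x h2).const_smul (w t)
      have h4 : HasFDerivAt (fun x => w t • f (t • x)) _ x := h3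
      refine h4.congr_fderiv ?_
      ext v; simp [smul_smul]
  induction N with
  | zero =>
    intro F _ _ _ w f hw hf
    refine ⟨?_, D w f hw hf⟩
    rw [Nat.cast_zero, contDiff_zero]
    exact continuous_iff_continuousAt.2 fun y => (D w f hw hf y).continuousAt
  | succ N ih =>
    intro F _ _ _ w f hw hf
    refine ⟨?_, D w f hw hf⟩
    rw [Nat.cast_succ, contDiff_succ_iff_hasFDerivAt]
    exact ⟨_, (ih (fun σ => w σ * σ) (fderiv ℝ f) (by fun_prop) (hf.fderiv_right (by simp))).1,
      D w f hw hf⟩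

variable {n : ℕ} {Γ : Set (Fin n → ℝ)}

/-- `Γ` is stable under contractions; the origin need not belong to `Γ`. -/
def ShrinkStable (Γ : Set (Fin n → ℝ)) : Prop :=
  ∀ t : ℝ, 0 < t → t ≤ 1 → ∀ y ∈ Γ, t • y ∈ Γ

lemma support_of_compact {E F : Type*} [TopologicalSpace E] [R1Space E] [T2Space E] [Zero F] {Γ : Set E}
    {f : E → F} (K : Set E) (hK : IsCompact K) (hKΓ : K ⊆ Γ)
    (h : ∀ x, f x ≠ 0 → x ∈ K) : HasCompactSupport f ∧ tsupport f ⊆ Γ :=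
  ⟨HasCompactSupport.intro hK fun x hx => by_contra fun h0 => hx (h x h0),
    (closure_minimal (fun x hx => h x hx) hK.isClosed).trans hKΓ⟩

/-- The `L¹`-normalised dilation `f ↦ 2ⁿ f(2 ·)`. -/
def dil (hΓ : ShrinkStable Γ) : testSpace n Γ →ₗ[ℂ] testSpace n Γ where
  toFun f := ⟨fun x => (2:ℂ) ^ n * f.1 ((2:ℝ) • x), by
    refine ⟨contDiff_const.mul (f.2.1.comp (contDiff_const_smul _)), ?_⟩
    refine support_of_compact ((fun x => (2⁻¹:ℝ) • x) '' tsupport f.1)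
      (f.2.2.1.isCompact.image (by fun_prop)) ?_ ?_
    · rintro _ ⟨x, hx, rfl⟩
      exact hΓ _ (by norm_num) (by norm_num) _ (f.2.2.2 hx)
    · intro x hx
      refine ⟨(2:ℝ) • x, subset_tsupport _ (right_ne_zero_of_mul hx), ?_⟩
      simp [smul_smul]⟩
  map_add' f g := by ext x; simp [mul_add]
  map_smul' c f := by ext x; simp; ring

lemma dil_apply (hΓ : ShrinkStable Γ) (f : testSpace n Γ) (x) :
    (dil hΓ f).1 x = (2:ℂ) ^ n * f.1 ((2:ℝ) • x) := rfl

lemma dil_dOp (hΓ : ShrinkStable Γ) (f : testSpace n Γ) (j : Fin n) :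
    (2:ℂ) • dil hΓ (dOp j f) = dOp j (dil hΓ f) := by
  ext x
  have h1 : HasFDerivAt f.1 (fderiv ℝ f.1 ((2:ℝ) • x)) ((2:ℝ) • x) :=
    (testSpace.differentiable f _).hasFDerivAt
  have h2 : HasFDerivAt (fun x : Fin n → ℝ => (2:ℝ) • x) ((2:ℝ) • ContinuousLinearMap.id ℝ _) x :=
    ((2:ℝ) • ContinuousLinearMap.id ℝ (Fin n → ℝ)).hasFDerivAt
  have h3 := (h1.comp x h2).const_smul ((2:ℂ) ^ n)
  have h4 : fderiv ℝ (dil hΓ f).1 x = _ := h3.fderiv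
  rw [dOp_apply, h4]
  simp only [SetLike.val_smul, Pi.smul_apply, dil_apply, dOp_apply]
  simp
  ring

lemma isDiv_zero (hn : 0 < n) : IsDiv 1 (0 : testSpace n Γ) := by
  have := IsDiv.step 0 (⟨0, hn⟩ : Fin n) (0 : testSpace n Γ) (.zero _)
  simpa using this

/-- `f - 2ⁿ f(2·)` is the divergence of the field `-y ∫₁² σⁿ⁻¹ f(σ y) dσ`. -/
lemma isDiv_sub_dil (hn : 0 < n) (hΓ : ShrinkStable Γ) (f : testSpace n Γ) :
    IsDiv 1 (f - dil hΓ f) := by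
  set h : (Fin n → ℝ) → ℂ := fun y => ∫ σ in (1:ℝ)..2, σ ^ (n - 1) • f.1 (σ • y) with hh
  have hD := fun N => contDiff_nat_dilate_integral N (fun σ => σ ^ (n - 1)) f.1 (by fun_prop) f.2.1
  have hcd : ContDiff ℝ ∞ h := contDiff_infty.2 fun N => (hD N).1
  set K := (fun p : ℝ × (Fin n → ℝ) => p.1 • p.2) '' (Set.Icc (2⁻¹:ℝ) 1 ×ˢ tsupport f.1) with hKdef
  have hK : IsCompact K := (isCompact_Icc.prod f.2.2.1.isCompact).image (by fun_prop)
  have hKΓ : K ⊆ Γ := by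
    rintro _ ⟨⟨t, y⟩, ⟨ht, hy⟩, rfl⟩
    exact hΓ t (by linarith [ht.1]) ht.2 _ (f.2.2.2 hy)
  have hsupp : ∀ y, h y ≠ 0 → y ∈ K := by
    intro y hy
    by_contra hyK
    apply hy
    rw [hh]
    simp only
    rw [intervalIntegral.integral_congr (g := fun _ => (0:ℂ)), intervalIntegral.integral_zero]
    intro σ hσ
    rw [Set.uIcc_of_le (by norm_num)] at hσ
    have hσ0 : 0 < σ := by linarith [hσ.1]
    have : f.1 (σ • y) = 0 := by
      by_contra hne
      exact hyK ⟨(σ⁻¹, σ • y), ⟨⟨inv_anti₀ hσ0 hσ.2, inv_le_one_of_one_le₀ hσ.1⟩,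
        subset_tsupport _ hne⟩, by simp [smul_smul, hσ0.ne']⟩
    simp [this]
  let g : Fin n → testSpace n Γ := fun j => ⟨fun y => -((y j : ℂ) * h y), by
    have : ContDiff ℝ ∞ fun y : Fin n → ℝ => ((y j : ℝ) : ℂ) :=
      Complex.ofRealCLM.contDiff.comp (contDiff_apply ℝ ℝ j)
    exact ⟨(this.mul hcd).neg, support_of_compact K hK hKΓ fun x hx => hsupp x
      (right_ne_zero_of_mul (neg_ne_zero.1 hx))⟩⟩
  have key : f - dil hΓ f = ∑ j, dOp j (g j) := by
    ext y
    have hfd : HasFDerivAt h (∫ σ in (1:ℝ)..2, (σ ^ (n - 1) * σ) • fderiv ℝ f.1 (σ • y)) y := (hD 0).2 y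
    set L := ∫ σ in (1:ℝ)..2, (σ ^ (n - 1) * σ) • fderiv ℝ f.1 (σ • y) with hL
    have hf' : Continuous (fderiv ℝ f.1) := f.2.1.continuous_fderiv (by simp)
    have hfc := f.2.1.continuous
    have hgj : ∀ j, (dOp j (g j)).1 y = -(h y + (y j : ℂ) * L (Pi.single j 1)) := by
      intro j
      have h1 : HasFDerivAt (fun y : Fin n → ℝ => ((y j : ℝ) : ℂ))
          (Complex.ofRealCLM.comp (ContinuousLinearMap.proj j)) y :=
        (Complex.ofRealCLM.comp (ContinuousLinearMap.proj (R := ℝ) (φ := fun _ : Fin n => ℝ) j)).hasFDerivAt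
      have h2 : fderiv ℝ (g j).1 y = _ := (h1.mul hfd).neg.fderiv
      rw [dOp_apply, h2]
      simp
      ring
    have hsum : ∑ j, (y j : ℂ) * L (Pi.single j 1) = L y := by
      conv_rhs => rw [← Finset.univ_sum_single y, map_sum]
      refine Finset.sum_congr rfl fun j _ => ?_
      have : (Pi.single j (y j) : Fin n → ℝ) = y j • Pi.single j 1 := by
        ext t; simp [Pi.single_apply]
      rw [this, map_smul, Complex.real_smul]
    have hLy : L y = ∫ σ in (1:ℝ)..2, (σ ^ (n - 1) * σ) • fderiv ℝ f.1 (σ • y) y := by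
      rw [hL, ContinuousLinearMap.intervalIntegral_apply]
      · rfl
      · exact Continuous.intervalIntegrable (by fun_prop) _ _
    have hpow : ∀ σ : ℝ, σ ^ (n - 1) * σ = σ ^ n := fun σ => by
      rw [← pow_succ, Nat.sub_add_cancel hn]
    -- The derivative of `σ ↦ σⁿ f(σ y)`, integrated over `[1, 2]`.
    have hFTC : ∫ σ in (1:ℝ)..2, ((n * σ ^ (n - 1)) • f.1 (σ • y) + (σ ^ n) • fderiv ℝ f.1 (σ • y) y)
        = (2:ℝ) ^ n • f.1 ((2:ℝ) • y) - (1:ℝ) ^ n • f.1 ((1:ℝ) • y) := by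
      refine intervalIntegral.integral_eq_sub_of_hasDerivAt (f := fun σ : ℝ => σ ^ n • f.1 (σ • y)) ?_ ?_
      · intro σ _
        have h1 : HasFDerivAt f.1 (fderiv ℝ f.1 (σ • y)) (σ • y) :=
          (testSpace.differentiable f _).hasFDerivAt
        have h2 : HasDerivAt (fun σ : ℝ => σ • y) y σ := by
          simpa using (hasDerivAt_id σ).smul_const y
        have h3 := (hasDerivAt_pow n σ).smul (h1.comp_hasDerivAt σ h2)
        have h4 : HasDerivAt (fun σ : ℝ => σ ^ n • f.1 (σ • y)) _ σ := h3
        rw [add_comm] at h4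
        exact h4
      · exact Continuous.intervalIntegrable (by fun_prop) _ _
    rw [intervalIntegral.integral_add (Continuous.intervalIntegrable (by fun_prop) _ _)
      (Continuous.intervalIntegrable (by fun_prop) _ _)] at hFTC
    simp_rw [hpow] at hLy
    have hn1 : ∫ σ in (1:ℝ)..2, (n * σ ^ (n - 1)) • f.1 (σ • y) = n * h y := by
      rw [hh]
      simp only
      rw [← intervalIntegral.integral_const_mul]
      refine intervalIntegral.integral_congr fun σ _ => ?_
      simp [mul_assoc]
    rw [hn1, ← hLy] at hFTC
    rw [show (∑ j, dOp j (g j) : testSpace n Γ).1 y = ∑ j, (dOp j (g j)).1 y by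
      rw [AddSubmonoidClass.coe_finsetSum, Finset.sum_apply]]
    simp only [hgj, Finset.sum_neg_distrib, Finset.sum_add_distrib, hsum]
    have h0 : (f - dil hΓ f).1 y = f.1 y - (2:ℂ) ^ n * f.1 ((2:ℝ) • y) := rfl
    rw [h0]
    simp at hFTC ⊢
    linear_combination hFTC
  rw [key]
  exact IsDiv.sum _ _ (fun j _ => .step _ _ _ (.zero _)) (isDiv_zero hn)

lemma IsDiv.sub_dil (hn : 0 < n) (hΓ : ShrinkStable Γ) {m : ℕ} {f : testSpace n Γ}
    (hf : IsDiv m f) : IsDiv (m + 1) (f - (2:ℂ) ^ m • dil hΓ f) := by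
  induction hf with
  | zero f => simpa using isDiv_sub_dil hn hΓ f
  | step m j f _ ih =>
    have : dOp j f - (2:ℂ) ^ (m + 1) • dil hΓ (dOp j f) = dOp j (f - (2:ℂ) ^ m • dil hΓ f) := by
      rw [map_sub, map_smul, ← dil_dOp, smul_smul, pow_succ]
    rw [this]; exact .step _ _ _ ih
  | add m f g _ _ ih1 ih2 =>
    have : f + g - (2:ℂ) ^ m • dil hΓ (f + g) = (f - (2:ℂ) ^ m • dil hΓ f)
      + (g - (2:ℂ) ^ m • dil hΓ g) := by
      rw [map_add, smul_add]; abel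
    rw [this]; exact .add _ _ _ ih1 ih2

lemma testSpace.integrable (f : testSpace n Γ) : Integrable f.1 :=
  f.2.1.continuous.integrable_of_hasCompactSupport f.2.2.1

lemma integral_dil (hΓ : ShrinkStable Γ) (f : testSpace n Γ) :
    ∫ x, (dil hΓ f).1 x = ∫ x, f.1 x := by
  simp only [dil_apply]
  rw [integral_const_mul, Measure.integral_comp_smul]
  simp

/-- A kernel of mass one whose dyadic difference `ρ - 2ⁿ ρ(2 ·)` is a sum of derivatives of order
`m + 1`. The combination `ρ - 2^(m+1) (2ⁿ ρ(2 ·))`, normalised, raises the order by one, because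
`IsDiv.sub_dil` applies to the dyadic difference itself. -/
lemma exists_kernel (hn : 0 < n) (hΓ : ShrinkStable Γ) (hΓo : IsOpen Γ) (hne : Γ.Nonempty) (m : ℕ) :
    ∃ ρ : testSpace n Γ, ∫ x, ρ.1 x = 1 ∧ IsDiv (m + 1) (ρ - dil hΓ ρ) := by
  induction m with
  | zero =>
    obtain ⟨c, hc⟩ := hne
    obtain ⟨r, hr, hrΓ⟩ := Metric.isOpen_iff.1 hΓo c hc
    let b : ContDiffBump c := ⟨r / 4, r / 2, by positivity, by linarith⟩
    refine ⟨⟨fun x => ((b.normed volume x : ℝ) : ℂ), ?_⟩, ?_, isDiv_sub_dil hn hΓ _⟩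
    · refine ⟨Complex.ofRealCLM.contDiff.comp b.contDiff_normed, ?_⟩
      refine support_of_compact (Metric.closedBall c (r / 2)) (isCompact_closedBall _ _)
        ((Metric.closedBall_subset_ball (by linarith)).trans hrΓ) fun x hx => ?_
      have : x ∈ Function.support (b.normed volume) := by
        intro h0; apply hx; simp [h0]
      rw [b.support_normed_eq] at this
      exact Metric.ball_subset_closedBall this
    · change ∫ x, ((b.normed volume x : ℝ) : ℂ) = 1
      rw [integral_complex_ofReal, b.integral_normed]; simp
  | succ m ih =>
    obtain ⟨ρ, h1, h2⟩ := ih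
    have h3 := h2.sub_dil hn hΓ
    have hne : (1 - (2:ℂ) ^ (m + 1)) ≠ 0 := by
      rw [sub_ne_zero]
      intro h
      have h' : (1:ℝ) = 2 ^ (m + 1) := by exact_mod_cast h
      have : (1:ℝ) < 2 ^ (m + 1) := one_lt_pow₀ (by norm_num) (by simp)
      linarith
    refine ⟨(1 - (2:ℂ) ^ (m + 1))⁻¹ • (ρ - (2:ℂ) ^ (m + 1) • dil hΓ ρ), ?_, ?_⟩
    · have : ∀ x, ((1 - (2:ℂ) ^ (m + 1))⁻¹ • (ρ - (2:ℂ) ^ (m + 1) • dil hΓ ρ)).1 x =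
        (1 - (2:ℂ) ^ (m + 1))⁻¹ * (ρ.1 x - (2:ℂ) ^ (m + 1) * (dil hΓ ρ).1 x) := fun x => rfl
      simp_rw [this]
      rw [integral_const_mul, integral_sub (testSpace.integrable _)
        ((testSpace.integrable _).const_mul _), integral_const_mul, integral_dil, h1]
      simp [hne]
    · have := h3.smul (1 - (2:ℂ) ^ (m + 1))⁻¹
      convert this using 1
      simp only [map_smul, map_sub, smul_sub, smul_smul]
      ring_nf
      abel_nf

end

/-! ### The kernel and its representation through the adjoint operator -/

/-- Smooth real functions with compact support inside `Γ`. -/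
def IsKer {n : ℕ} (Γ : Set (Fin n → ℝ)) (f : (Fin n → ℝ) → ℝ) : Prop :=
  ContDiff ℝ ∞ f ∧ HasCompactSupport f ∧ tsupport f ⊆ Γ

/-- The `i`-th coordinate of `∑ j, A_j^* (∂_j Ψ)`: the formal adjoint of `𝔸`, up to sign, applied to a
matrix field which need not be symmetric. -/
def adjOp {n : ℕ} (A : Fin n → ((Fin n → ℝ) →ₗ[ℝ] (Fin n → Fin n → ℝ)))
    (Ψ : Fin n → Fin n → (Fin n → ℝ) → ℝ) (i : Fin n) (x : Fin n → ℝ) : ℝ :=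
  ∑ k, ∑ l, ∑ j, A j (Pi.single i 1) k l * fderiv ℝ (Ψ k l) x (Pi.single j 1)

lemma isKer_re {n : ℕ} {Γ : Set (Fin n → ℝ)} (f : testSpace n Γ) :
    IsKer Γ (fun x => (f.1 x).re) :=
  ⟨Complex.reCLM.contDiff.comp f.2.1, support_of_compact (tsupport f.1) f.2.2.1 f.2.2.2
    fun x hx => subset_tsupport _ fun h0 => hx (by simp [h0])⟩

lemma fderiv_re {n : ℕ} {Γ : Set (Fin n → ℝ)} (f : testSpace n Γ) (x : Fin n → ℝ) (j : Fin n) :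
    fderiv ℝ (fun x => (f.1 x).re) x (Pi.single j 1) = ((dOp j f).1 x).re := by
  have h : HasFDerivAt (fun x => (f.1 x).re) _ x :=
    Complex.reCLM.hasFDerivAt.comp x (testSpace.differentiable f x).hasFDerivAt
  rw [h.fderiv]; rfl

/-- The kernel `ρ` with `(ρ - 2ⁿ ρ(2 ·)) e_i = 𝔸*Ψ_i`. The coefficients of `𝔸` are real, so the real parts
of the complex kernel and fields will do. -/
lemma exists_real_kernel {n : ℕ} {Γ : Set (Fin n → ℝ)}
    {A : Fin n → ((Fin n → ℝ) →ₗ[ℝ] (Fin n → Fin n → ℝ))} (hC : CElliptic n A)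
    (hn : 0 < n) (hΓ : ShrinkStable Γ) (hΓo : IsOpen Γ) (hne : Γ.Nonempty) :
    ∃ (ρ : (Fin n → ℝ) → ℝ) (Ψ : Fin n → Fin n → Fin n → (Fin n → ℝ) → ℝ),
      IsKer Γ ρ ∧ ∫ x, ρ x = 1 ∧ (∀ i k l, IsKer Γ (Ψ i k l)) ∧
      ∀ i i' x, adjOp A (Ψ i) i' x = if i = i' then ρ x - 2 ^ n * ρ ((2:ℝ) • x) else 0 := by
  obtain ⟨m, hm⟩ := exists_pow_le_rowIdeal hC
  obtain ⟨ρ, hρ1, hρ⟩ := exists_kernel hn hΓ hΓo hne m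
  choose Ψ hΨ using hρ.solve ((Ideal.pow_le_pow_right (Nat.le_succ m)).trans hm)
  refine ⟨fun x => (ρ.1 x).re, fun i k l x => ((Ψ i (k, l)).1 x).re, isKer_re ρ, ?_,
    fun i k l => isKer_re _, fun i i' x => ?_⟩
  · have := integral_re (testSpace.integrable ρ)
    simp only [RCLike.re_eq_complex_re] at this
    rw [this, hρ1]; simp
  · have h := congrArg (fun f : testSpace n Γ => (f.1 x).re) (hΨ i i')
    simp only [adjOp, fderiv_re]
    have h2 : ((∑ kl : Fin n × Fin n, ∑ j, (A j (Pi.single i' 1) kl.1 kl.2 : ℂ) • dOp j (Ψ i kl)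
        : testSpace n Γ).1 x).re = ∑ kl : Fin n × Fin n, ∑ j, A j (Pi.single i' 1) kl.1 kl.2 *
          ((dOp j (Ψ i kl)).1 x).re := by
      simp only [AddSubmonoidClass.coe_finsetSum, Finset.sum_apply, Complex.re_sum,
        SetLike.val_smul, Pi.smul_apply, smul_eq_mul, Complex.re_ofReal_mul]
    rw [h2, Fintype.sum_prod_type] at h
    rw [h]
    by_cases hi : i = i'
    · simp only [hi, if_true]
      change (ρ.1 x - (2:ℂ) ^ n * ρ.1 ((2:ℝ) • x)).re = _
      rw [Complex.sub_re]
      congr 1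
      rw [show (2:ℂ) ^ n = ((2 ^ n : ℝ) : ℂ) by push_cast; rfl, Complex.re_ofReal_mul]
    · simp [hi]

/-! ### The 𝔸-variation tested against fields that need not be symmetric -/

/-- The distribution `𝔸u` is bounded by `M` on `U`, in integrated form: `|∫ u · 𝔸*φ| ≤ M c` for all
`C¹` fields `φ` with compact support in `U` and entries at most `c` in absolute value. In contrast to
`IsTest`, the fields need not be symmetric and are measured entrywise. -/
def PairBd {n : ℕ} (A : Fin n → ((Fin n → ℝ) →ₗ[ℝ] (Fin n → Fin n → ℝ))) (U : Set (Fin n → ℝ))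
    (u : Fin n → (Fin n → ℝ) → ℝ) (M : ℝ) : Prop :=
  ∀ (φ : Fin n → Fin n → (Fin n → ℝ) → ℝ) (c : ℝ), 0 < c →
    (∀ k l, ContDiff ℝ 1 (φ k l) ∧ HasCompactSupport (φ k l) ∧ tsupport (φ k l) ⊆ U) →
    (∀ k l x, |φ k l x| ≤ c) → |∑ i, ∫ x, u i x * adjOp A φ i x| ≤ M * c

lemma integrable_mul_of_compact {n : ℕ} {μ : Measure (Fin n → ℝ)} {u g : (Fin n → ℝ) → ℝ}
    (hu : Integrable u μ) (hg : Continuous g) (hc : HasCompactSupport g) :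
    Integrable (fun x => u x * g x) μ := by
  obtain ⟨C, hC⟩ := hc.exists_bound_of_continuous hg
  exact hu.mul_bdd hg.aestronglyMeasurable (Filter.Eventually.of_forall hC)

lemma hasFDerivAt_matrix {n : ℕ} {S : (Fin n → ℝ) → Fin n → Fin n → ℝ} (x w : Fin n → ℝ)
    (k l : Fin n) (h : Differentiable ℝ S) :
    fderiv ℝ S x w k l = fderiv ℝ (fun x => S x k l) x w := by
  have h1 := (h x).hasFDerivAt
  have h2 := hasFDerivAt_pi'.1 (hasFDerivAt_pi'.1 h1 k) l
  rw [h2.fderiv]; rfl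

lemma adjOp_sub {n : ℕ} (A : Fin n → ((Fin n → ℝ) →ₗ[ℝ] (Fin n → Fin n → ℝ)))
    (Ψ : Fin n → Fin n → (Fin n → ℝ) → ℝ) (i : Fin n) (x y : Fin n → ℝ) :
    adjOp A (fun k l y => Ψ k l (y - x)) i y = adjOp A Ψ i (y - x) := by
  simp only [adjOp, fderiv_comp_sub]

lemma adjOp_neg {n : ℕ} (A : Fin n → ((Fin n → ℝ) →ₗ[ℝ] (Fin n → Fin n → ℝ)))
    (Ψ : Fin n → Fin n → (Fin n → ℝ) → ℝ) (i : Fin n) (y : Fin n → ℝ) :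
    adjOp A (fun k l y => - Ψ k l y) i y = - adjOp A Ψ i y := by
  simp only [adjOp, fderiv_fun_neg, neg_apply, mul_neg, Finset.sum_neg_distrib]

/-- Since the `A_j` take symmetric values, a matrix field and its symmetrization have the same
pairing, up to the factor `2`. -/
lemma pairing_eq {n : ℕ} {A : Fin n → ((Fin n → ℝ) →ₗ[ℝ] (Fin n → Fin n → ℝ))}
    (hsymA : ∀ j w k l, A j w k l = A j w l k) {U : Set (Fin n → ℝ)} (hU : MeasurableSet U)
    {v : (Fin n → ℝ) → (Fin n → ℝ)} (hv : IntegrableOn v U volume)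
    {φ : Fin n → Fin n → (Fin n → ℝ) → ℝ}
    (h : ∀ k l, ContDiff ℝ 1 (φ k l)) (hc : ∀ k l, HasCompactSupport (φ k l)) (a : ℝ) :
    pairing n A v U (fun x k l => a * (φ k l x + φ l k x)) =
      2 * a * ∑ i, ∫ x, U.indicator (fun x => v x i) x * adjOp A φ i x := by
  have hd : Differentiable ℝ (fun x k l => a * (φ k l x + φ l k x) : _ → Fin n → Fin n → ℝ) := by
    refine differentiable_pi.2 fun k => differentiable_pi.2 fun l => ?_
    have h1 := (h k l).differentiable one_ne_zero
    have h2 := (h l k).differentiable one_ne_zero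
    fun_prop
  have h1 : ∀ j x i, Aadj n A j (fderiv ℝ (fun x k l => a * (φ k l x + φ l k x)) x (Pi.single j 1)) i
      = 2 * a * ∑ k, ∑ l, A j (Pi.single i 1) k l * fderiv ℝ (φ k l) x (Pi.single j 1) := by
    intro j x i
    have : ∀ k l, fderiv ℝ (fun x => a * (φ k l x + φ l k x)) x (Pi.single j 1)
        = a * (fderiv ℝ (φ k l) x (Pi.single j 1) + fderiv ℝ (φ l k) x (Pi.single j 1)) := by
      intro k l
      have h1 := ((h k l).differentiable one_ne_zero x).hasFDerivAt
      have h2 := ((h l k).differentiable one_ne_zero x).hasFDerivAt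
      rw [((h1.fun_add h2).const_mul a).fderiv]; rfl
    simp only [Aadj, hasFDerivAt_matrix _ _ _ _ hd, this]
    have e : ∑ k, ∑ l, fderiv ℝ (φ l k) x (Pi.single j 1) * A j (Pi.single i 1) k l =
        ∑ k, ∑ l, fderiv ℝ (φ k l) x (Pi.single j 1) * A j (Pi.single i 1) k l := by
      rw [Finset.sum_comm]
      refine Finset.sum_congr rfl fun k _ => Finset.sum_congr rfl fun l _ => ?_
      rw [hsymA j _ l k]
    simp only [mul_assoc, add_mul, ← Finset.mul_sum, Finset.sum_add_distrib, e]
    simp only [mul_comm (A j _ _ _)]; ring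
  have hcont : ∀ k l j, Continuous fun x => fderiv ℝ (φ k l) x (Pi.single j 1) := fun k l j =>
    ((h k l).continuous_fderiv one_ne_zero).clm_apply continuous_const
  have hcs : ∀ k l j, HasCompactSupport fun x => fderiv ℝ (φ k l) x (Pi.single j 1) := fun k l j =>
    ((hc k l).fderiv (𝕜 := ℝ)).comp_left (g := fun L : (Fin n → ℝ) →L[ℝ] ℝ => L (Pi.single j 1)) rfl
  have hvi : ∀ i, Integrable (fun x => v x i) (volume.restrict U) := fun i =>
    (ContinuousLinearMap.proj (R := ℝ) i : (Fin n → ℝ) →L[ℝ] ℝ).integrable_comp hv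
  have hI : ∀ i k l j, Integrable (fun x => v x i * (A j (Pi.single i 1) k l *
      fderiv ℝ (φ k l) x (Pi.single j 1))) (volume.restrict U) := fun i k l j =>
    integrable_mul_of_compact (hvi i) (continuous_const.mul (hcont k l j)) ((hcs k l j).mul_left)
  unfold pairing
  simp only [h1]
  have h2 : ∀ i, ∫ x, U.indicator (fun x => v x i) x * adjOp A φ i x =
      ∑ j, ∑ k, ∑ l, ∫ x in U, v x i * (A j (Pi.single i 1) k l *
        fderiv ℝ (φ k l) x (Pi.single j 1)) := by
    intro i
    simp_rw [← Set.indicator_mul_left]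
    rw [integral_indicator hU]
    simp only [adjOp, Finset.mul_sum]
    rw [integral_finsetSum _ fun k _ => integrable_finsetSum _ fun l _ =>
      integrable_finsetSum _ fun j _ => hI i k l j]
    conv_rhs => rw [Finset.sum_comm]
    refine Finset.sum_congr rfl fun k _ => ?_
    rw [integral_finsetSum _ fun l _ => integrable_finsetSum _ fun j _ => hI i k l j]
    conv_rhs => rw [Finset.sum_comm]
    refine Finset.sum_congr rfl fun l _ => ?_
    rw [integral_finsetSum _ fun j _ => hI i k l j]
  simp only [h2]
  rw [Finset.sum_comm, Finset.mul_sum]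
  refine Finset.sum_congr rfl fun j _ => ?_
  have h3 : ∀ x, ∑ i, v x i * (2 * a * ∑ k, ∑ l, A j (Pi.single i 1) k l *
      fderiv ℝ (φ k l) x (Pi.single j 1)) = 2 * a * ∑ i, ∑ k, ∑ l, v x i * (A j (Pi.single i 1) k l *
      fderiv ℝ (φ k l) x (Pi.single j 1)) := by
    intro x
    simp only [Finset.mul_sum]
    refine Finset.sum_congr rfl fun i _ => Finset.sum_congr rfl fun k _ =>
      Finset.sum_congr rfl fun l _ => by ring
  simp only [h3]
  rw [integral_const_mul, integral_finsetSum _ fun i _ => integrable_finsetSum _ fun k _ =>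
      integrable_finsetSum _ fun l _ => hI i k l j]
  congr 1
  refine Finset.sum_congr rfl fun i _ => ?_
  rw [integral_finsetSum _ fun k _ => integrable_finsetSum _ fun l _ => hI i k l j]
  refine Finset.sum_congr rfl fun k _ => ?_
  rw [integral_finsetSum _ fun l _ => hI i k l j]

/-- The factor `n` comes from comparing the Frobenius norm with the largest entry. -/
lemma pairBd_of_AvarE {n : ℕ} (hn : 0 < n) {A : Fin n → ((Fin n → ℝ) →ₗ[ℝ] (Fin n → Fin n → ℝ))}
    (hsymA : ∀ j w k l, A j w k l = A j w l k) {U : Set (Fin n → ℝ)} (hU : MeasurableSet U)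
    {v : (Fin n → ℝ) → (Fin n → ℝ)} (hv : IntegrableOn v U volume) (hA : AvarE n A v U ≠ ⊤) :
    PairBd A U (fun i => U.indicator fun x => v x i) (n * (AvarE n A v U).toReal) := by
  have key : ∀ (φ : Fin n → Fin n → (Fin n → ℝ) → ℝ) (c : ℝ), 0 < c →
    (∀ k l, ContDiff ℝ 1 (φ k l) ∧ HasCompactSupport (φ k l) ∧ tsupport (φ k l) ⊆ U) →
    (∀ k l x, |φ k l x| ≤ c) → ∑ i, ∫ x, U.indicator (fun x => v x i) x * adjOp A φ i x ≤
      n * (AvarE n A v U).toReal * c := by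
    intro φ c hc h hb
    have hn' : (0:ℝ) < n := by exact_mod_cast hn
    -- Symmetrized and rescaled, `φ` has entries at most `1 / n`, hence Frobenius norm at most `1`.
    have htest : IsTest n U (fun x k l => (2 * n * c)⁻¹ * (φ k l x + φ l k x)) := by
      obtain ⟨hs1, hs2⟩ := support_of_compact (f := fun x k l => (2 * n * c)⁻¹ * (φ k l x + φ l k x))
        (⋃ k, ⋃ l, tsupport (φ k l))
        (isCompact_iUnion fun k => isCompact_iUnion fun l => (h k l).2.1)
        (Set.iUnion_subset fun k => Set.iUnion_subset fun l => (h k l).2.2) (by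
          intro x hx
          by_contra hx'
          simp only [Set.mem_iUnion, not_exists] at hx'
          apply hx
          funext k l
          simp [image_eq_zero_of_notMem_tsupport (hx' k l), image_eq_zero_of_notMem_tsupport (hx' l k)])
      refine ⟨?_, hs1, hs2, fun x k l => by simp only [add_comm], fun x => ?_⟩
      · refine contDiff_pi.2 fun k => contDiff_pi.2 fun l => ?_
        exact contDiff_const.mul ((h k l).1.add (h l k).1)
      · unfold frobNorm
        rw [Real.sqrt_le_one]
        have : ∀ k l, ((2 * n * c)⁻¹ * (φ k l x + φ l k x)) ^ 2 ≤ ((n:ℝ)⁻¹) ^ 2 := by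
          intro k l
          rw [sq_le_sq, abs_mul, abs_of_pos (by positivity), abs_of_pos (by positivity : (0:ℝ) < (n:ℝ)⁻¹)]
          have := (abs_add_le (φ k l x) (φ l k x)).trans (add_le_add (hb k l x) (hb l k x))
          calc _ ≤ (2 * n * c)⁻¹ * (c + c) := by gcongr
            _ = _ := by field_simp; ring
        calc _ ≤ ∑ k : Fin n, ∑ l : Fin n, ((n:ℝ)⁻¹) ^ 2 :=
              Finset.sum_le_sum fun k _ => Finset.sum_le_sum fun l _ => this k l
          _ = 1 := by simp; field_simp
    have h1 : ENNReal.ofReal (pairing n A v U (fun x k l => (2 * n * c)⁻¹ * (φ k l x + φ l k x)))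
        ≤ AvarE n A v U := le_iSup (fun φ : {φ : (Fin n → ℝ) → (Fin n → Fin n → ℝ) // IsTest n U φ} =>
    ENNReal.ofReal (pairing n A v U φ.1)) ⟨_, htest⟩
    have h2 := (ENNReal.ofReal_le_iff_le_toReal hA).1 h1
    rw [pairing_eq hsymA hU hv (fun k l => (h k l).1) (fun k l => (h k l).2.1)] at h2
    have h3 : 2 * (2 * n * c)⁻¹ = (n * c)⁻¹ := by field_simp
    rw [h3, inv_mul_le_iff₀ (by positivity)] at h2
    linarith
  intro φ c hc h hb
  rw [abs_le']
  refine ⟨key φ c hc h hb, ?_⟩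
  have hsn : ∀ k l, HasCompactSupport (fun x => - φ k l x) ∧ tsupport (fun x => - φ k l x) ⊆ U :=
    fun k l => support_of_compact (tsupport (φ k l)) (h k l).2.1 (h k l).2.2 fun x hx =>
      subset_tsupport _ fun h0 => hx (by simp [h0])
  have := key (fun k l x => - φ k l x) c hc (fun k l => ⟨(h k l).1.neg, hsn k l⟩)
    (fun k l x => by rw [abs_neg]; exact hb k l x)
  simpa only [adjOp_neg, mul_neg, integral_neg, Finset.sum_neg_distrib] using this

/-! ### Bounds for correlations in the sup norm and in `L¹` -/

/-- The correlation `∫ f(y) θ(y - x) dy` of `f` with the kernel `θ`. For `θ` supported in `Γ` it only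
depends on the values of `f` in `x + Γ`. -/
def corr {n : ℕ} (f θ : (Fin n → ℝ) → ℝ) (x : Fin n → ℝ) : ℝ := ∫ y, f y * θ (y - x)

lemma IsKer.continuous {n : ℕ} {Γ : Set (Fin n → ℝ)} {θ : (Fin n → ℝ) → ℝ} (h : IsKer Γ θ) :
    Continuous θ := h.1.continuous

lemma IsKer.shift {n : ℕ} {Γ U : Set (Fin n → ℝ)} {θ : (Fin n → ℝ) → ℝ} (h : IsKer Γ θ)
    {x : Fin n → ℝ} (hx : ∀ z ∈ Γ, x + z ∈ U) : IsKer U (fun y => θ (y - x)) := by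
  refine ⟨h.1.comp (contDiff_id.sub contDiff_const), support_of_compact ((fun z => x + z) '' tsupport θ)
    (h.2.1.isCompact.image (by fun_prop)) ?_ ?_⟩
  · rintro _ ⟨z, hz, rfl⟩; exact hx z (h.2.2 hz)
  · intro y hy
    exact ⟨y - x, subset_tsupport _ hy, by simp⟩

lemma continuous_corr {n : ℕ} {Γ : Set (Fin n → ℝ)} {f θ : (Fin n → ℝ) → ℝ} (h : IsKer Γ θ)
    (hf : Integrable f) : Continuous (corr f θ) := by
  have h1 : HasCompactSupport (fun z => θ (-z)) := h.2.1.comp_homeomorph (Homeomorph.neg _)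
  have := h1.continuous_convolution_right (ContinuousLinearMap.mul ℝ ℝ) (μ := volume)
    hf.locallyIntegrable (h.continuous.comp continuous_neg)
  refine this.congr fun x => ?_
  simp [corr, convolution]

/-- The sup bound: `corr (u i) θ x` is the pairing of `u` with `𝔸*` of the translate by `x` of `Ψ`, which is
supported in `x + Γ ⊆ U`. -/
lemma corr_bound_sup {n : ℕ} {A : Fin n → ((Fin n → ℝ) →ₗ[ℝ] (Fin n → Fin n → ℝ))}
    {U Γ : Set (Fin n → ℝ)} {u : Fin n → (Fin n → ℝ) → ℝ} {M : ℝ} (hB : PairBd A U u M)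
    {Ψ : Fin n → Fin n → (Fin n → ℝ) → ℝ} {θ : (Fin n → ℝ) → ℝ} (hΨ : ∀ k l, IsKer Γ (Ψ k l))
    {i : Fin n} (h : ∀ i' x, adjOp A Ψ i' x = if i = i' then θ x else 0) {c : ℝ} (hc : 0 < c)
    (hΨc : ∀ k l x, |Ψ k l x| ≤ c) {x : Fin n → ℝ} (hx : ∀ z ∈ Γ, x + z ∈ U) :
    |corr (u i) θ x| ≤ M * c := by
  have h1 := hB (fun k l y => Ψ k l (y - x)) c hc (fun k l =>
    ⟨((hΨ k l).shift hx).1.of_le (by simp), ((hΨ k l).shift hx).2⟩) (fun k l y => hΨc k l _)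
  simp only [adjOp_sub, h, mul_ite, mul_zero] at h1
  have : ∀ i', ∫ y, (if i = i' then u i' y * θ (y - x) else 0) = if i = i' then corr (u i) θ x else 0 := by
    intro i'
    by_cases hi : i = i'
    · subst hi; simp [corr]
    · simp [hi]
  simpa [this] using h1

lemma fubini_corr {n : ℕ} {Γ : Set (Fin n → ℝ)} {f g θ : (Fin n → ℝ) → ℝ} (h : IsKer Γ θ)
    (hf : Integrable f) (hg : Integrable g) :
    ∫ y, f y * ∫ x, g x * θ (y - x) = ∫ x, g x * corr f θ x := by
  obtain ⟨C, hC⟩ := h.2.1.exists_bound_of_continuous h.continuous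
  have hI : Integrable (fun p : (Fin n → ℝ) × (Fin n → ℝ) => f p.1 * g p.2 * θ (p.1 - p.2))
      (volume.prod volume) :=
    (hf.mul_prod hg).mul_bdd (h.continuous.comp (by fun_prop)).aestronglyMeasurable
      (Filter.Eventually.of_forall fun p => hC _)
  unfold corr
  simp only [← integral_const_mul]
  simp only [← mul_assoc]
  rw [integral_integral_swap hI]
  simp only [mul_comm (f _) (g _)]

/-- The `L¹` bound, by duality: testing `corr (u i) θ` on `V` against its sign `g` amounts to pairing `u`
with `𝔸*` of the convolution `g ∗ Ψ`, which is supported in `V + Γ ⊆ U` and bounded by `‖Ψ‖_{L¹}`. -/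
lemma corr_bound_L1 {n : ℕ} {A : Fin n → ((Fin n → ℝ) →ₗ[ℝ] (Fin n → Fin n → ℝ))}
    {U Γ V : Set (Fin n → ℝ)} {u : Fin n → (Fin n → ℝ) → ℝ} {M : ℝ} (hB : PairBd A U u M)
    (hu : ∀ i, Integrable (u i))
    {Ψ : Fin n → Fin n → (Fin n → ℝ) → ℝ} {θ : (Fin n → ℝ) → ℝ} (hΨ : ∀ k l, IsKer Γ (Ψ k l))
    (hθ : IsKer Γ θ)
    {i : Fin n} (h : ∀ i' x, adjOp A Ψ i' x = if i = i' then θ x else 0) {c : ℝ} (hc : 0 < c)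
    (hΨc : ∀ k l, ∫ x, |Ψ k l x| ≤ c) (hV : IsCompact V) (hVU : ∀ x ∈ V, ∀ z ∈ Γ, x + z ∈ U) :
    ∫ x in V, |corr (u i) θ x| ≤ M * c := by
  have hco := continuous_corr hθ (hu i)
  set g : (Fin n → ℝ) → ℝ := V.indicator fun x => SignType.sign (corr (u i) θ x) with hg
  have hsm : Measurable (fun x => ((SignType.sign (corr (u i) θ x) : SignType) : ℝ)) := by
    have : Measurable (fun y : ℝ => ((SignType.sign y : SignType) : ℝ)) := by
      simp only [sign_apply, apply_ite (fun s : SignType => (s : ℝ))]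
      exact Measurable.ite measurableSet_Ioi measurable_const
        (Measurable.ite measurableSet_Iio measurable_const measurable_const)
    exact this.comp hco.measurable
  have hg1 : ∀ x, |g x| ≤ 1 := by
    intro x
    by_cases hx : x ∈ V
    · simp only [hg, Set.indicator_of_mem hx]
      rcases lt_trichotomy (corr (u i) θ x) 0 with h | h | h <;> simp [h]
    · simp [hg, hx]
  have hgi : Integrable g := by
    rw [hg, integrable_indicator_iff hV.measurableSet]
    have : Integrable (fun _ : Fin n → ℝ => (1:ℝ)) (volume.restrict V) :=
      integrableOn_const hV.measure_lt_top.ne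
    refine this.mono' hsm.aestronglyMeasurable (Filter.Eventually.of_forall fun x => ?_)
    rcases lt_trichotomy (corr (u i) θ x) 0 with h | h | h <;> simp [h]
  have hgs : HasCompactSupport g := HasCompactSupport.intro hV fun x hx => by simp [hg, hx]
  have hφ : ∀ k l y, HasFDerivAt (fun y => ∫ x, g x * Ψ k l (y - x)) _ y := fun k l y =>
    (hΨ k l).2.1.hasFDerivAt_convolution_right (ContinuousLinearMap.mul ℝ ℝ) (μ := volume)
    hgi.locallyIntegrable ((hΨ k l).1.of_le (by simp)) y
  have hφ1 : ∀ k l, ContDiff ℝ 1 (fun y => ∫ x, g x * Ψ k l (y - x)) := fun k l =>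
    (hΨ k l).2.1.contDiff_convolution_right (ContinuousLinearMap.mul ℝ ℝ) (μ := volume)
    hgi.locallyIntegrable ((hΨ k l).1.of_le (by simp))
  have hfd : ∀ k l j, Continuous (fun x => fderiv ℝ (Ψ k l) x (Pi.single j 1)) := fun k l j =>
    ((hΨ k l).1.continuous_fderiv (by simp)).clm_apply continuous_const
  have hfc : ∀ k l j, HasCompactSupport (fun x => fderiv ℝ (Ψ k l) x (Pi.single j 1)) := fun k l j =>
    ((hΨ k l).2.1.fderiv (𝕜 := ℝ)).comp_left (g := fun L : (Fin n → ℝ) →L[ℝ] ℝ => L (Pi.single j 1)) rfl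
  have hI : ∀ k l j y, Integrable (fun x => g x * fderiv ℝ (Ψ k l) (y - x) (Pi.single j 1)) := by
    intro k l j y
    obtain ⟨C, hC⟩ := (hfc k l j).exists_bound_of_continuous (hfd k l j)
    exact hgi.mul_bdd ((hfd k l j).comp (by fun_prop)).aestronglyMeasurable
      (Filter.Eventually.of_forall fun x => hC _)
  have hφd : ∀ k l y j, fderiv ℝ (fun y => ∫ x, g x * Ψ k l (y - x)) y (Pi.single j 1) =
      ∫ x, g x * fderiv ℝ (Ψ k l) (y - x) (Pi.single j 1) := by
    intro k l y j
    rw [(hφ k l y).fderiv]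
    unfold convolution
    rw [ContinuousLinearMap.integral_apply]
    · rfl
    · have hb := (((hΨ k l).2.1.fderiv (𝕜 := ℝ)).convolutionExists_right
        (ContinuousLinearMap.precompR (Fin n → ℝ) (ContinuousLinearMap.mul ℝ ℝ)) (μ := volume)
        hgi.locallyIntegrable ((hΨ k l).1.continuous_fderiv (by simp)) y)
      exact hb
  have hadj : ∀ i' y, adjOp A (fun k l y => ∫ x, g x * Ψ k l (y - x)) i' y =
      if i = i' then ∫ x, g x * θ (y - x) else 0 := by
    intro i' y
    have : adjOp A (fun k l y => ∫ x, g x * Ψ k l (y - x)) i' y =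
        ∫ x, g x * adjOp A Ψ i' (y - x) := by
      have hI' : ∀ k l j, Integrable (fun x => g x * (A j (Pi.single i' 1) k l *
          fderiv ℝ (Ψ k l) (y - x) (Pi.single j 1))) := fun k l j => by
        simpa only [mul_left_comm] using (hI k l j y).const_mul (A j (Pi.single i' 1) k l)
      simp only [adjOp, hφd, Finset.mul_sum]
      rw [integral_finsetSum _ fun k _ => integrable_finsetSum _ fun l _ =>
        integrable_finsetSum _ fun j _ => hI' k l j]
      refine Finset.sum_congr rfl fun k _ => ?_
      rw [integral_finsetSum _ fun l _ => integrable_finsetSum _ fun j _ => hI' k l j]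
      refine Finset.sum_congr rfl fun l _ => ?_
      rw [integral_finsetSum _ fun j _ => hI' k l j]
      refine Finset.sum_congr rfl fun j _ => ?_
      rw [← integral_const_mul]
      simp only [mul_left_comm]
    rw [this]
    by_cases hi : i = i'
    · simp [h, hi]
    · simp [h, hi]
  have hsupp : ∀ k l, HasCompactSupport (fun y => ∫ x, g x * Ψ k l (y - x)) ∧
      tsupport (fun y => ∫ x, g x * Ψ k l (y - x)) ⊆ U := by
    intro k l
    refine support_of_compact ((fun p : (Fin n → ℝ) × (Fin n → ℝ) => p.1 + p.2) ''
      (V ×ˢ tsupport (Ψ k l))) ((hV.prod (hΨ k l).2.1.isCompact).image (by fun_prop)) ?_ ?_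
    · rintro _ ⟨⟨x, z⟩, ⟨hx, hz⟩, rfl⟩
      exact hVU x hx z ((hΨ k l).2.2 hz)
    · intro y hy
      by_contra hy'
      apply hy
      refine integral_eq_zero_of_ae (Filter.Eventually.of_forall fun x => ?_)
      by_cases hx : x ∈ V
      · by_cases hz : y - x ∈ tsupport (Ψ k l)
        · exact absurd ⟨(x, y - x), ⟨hx, hz⟩, by simp⟩ hy'
        · simp [image_eq_zero_of_notMem_tsupport hz]
      · simp [hg, hx]
  have hbd : ∀ k l y, |∫ x, g x * Ψ k l (y - x)| ≤ c := by
    intro k l y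
    have hΨi : Integrable (Ψ k l) := (hΨ k l).continuous.integrable_of_hasCompactSupport (hΨ k l).2.1
    calc |∫ x, g x * Ψ k l (y - x)| ≤ ∫ x, |g x * Ψ k l (y - x)| := abs_integral_le_integral_abs
      _ ≤ ∫ x, |Ψ k l (y - x)| := by
        refine integral_mono_of_nonneg (Filter.Eventually.of_forall fun x => abs_nonneg _)
          ((hΨi.comp_sub_left y).abs) (Filter.Eventually.of_forall fun x => ?_)
        simp only [abs_mul]
        exact mul_le_of_le_one_left (abs_nonneg _) (hg1 x)
      _ = ∫ x, |Ψ k l x| := integral_sub_left_eq_self (fun x => |Ψ k l x|) volume y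
      _ ≤ c := hΨc k l
  have h1 := hB (fun k l y => ∫ x, g x * Ψ k l (y - x)) c hc (fun k l => ⟨hφ1 k l, hsupp k l⟩) hbd
  have h2 : ∀ i', ∫ y, u i' y * adjOp A (fun k l y => ∫ x, g x * Ψ k l (y - x)) i' y =
      if i = i' then ∫ x, g x * corr (u i) θ x else 0 := by
    intro i'
    simp only [hadj]
    by_cases hi : i = i'
    · subst hi; simp only [if_true]; exact fubini_corr hθ (hu i) hgi
    · simp [hi]
  simp only [h2, Finset.sum_ite_eq, Finset.mem_univ, if_true] at h1
  refine le_trans (le_of_eq ?_) ((le_abs_self _).trans h1)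
  rw [← integral_indicator hV.measurableSet]
  congr 1; funext x
  by_cases hx : x ∈ V
  · simp [hg, hx]
  · simp [hg, hx]

/-! ### Dyadic scaling, Lebesgue points and interpolation -/

lemma IsKer.scale {n : ℕ} {Γ : Set (Fin n → ℝ)} (hΓ : ShrinkStable Γ) {θ : (Fin n → ℝ) → ℝ}
    (h : IsKer Γ θ) (a : ℝ) {t : ℝ} (ht : 1 ≤ t) : IsKer Γ (fun z => a * θ (t • z)) := by
  have ht0 : 0 < t := by linarith
  refine ⟨contDiff_const.mul (h.1.comp (contDiff_const_smul t)),
    support_of_compact ((fun z => t⁻¹ • z) '' tsupport θ)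
    (h.2.1.isCompact.image (by fun_prop)) ?_ ?_⟩
  · rintro _ ⟨z, hz, rfl⟩
    exact hΓ _ (by positivity) (inv_le_one_of_one_le₀ ht) z (h.2.2 hz)
  · intro y hy
    refine ⟨t • y, subset_tsupport _ fun h0 => hy (by simp [h0]), ?_⟩
    simp [smul_smul, ht0.ne']

lemma IsKer.sub {n : ℕ} {Γ : Set (Fin n → ℝ)} {θ η : (Fin n → ℝ) → ℝ}
    (h : IsKer Γ θ) (h' : IsKer Γ η) : IsKer Γ (fun z => θ z - η z) := by
  refine ⟨h.1.sub h'.1, support_of_compact (tsupport θ ∪ tsupport η)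
    (h.2.1.isCompact.union h'.2.1.isCompact) (Set.union_subset h.2.2 h'.2.2) ?_⟩
  intro y hy
  by_contra h0
  simp only [Set.mem_union, not_or] at h0
  exact hy (by simp [image_eq_zero_of_notMem_tsupport h0.1, image_eq_zero_of_notMem_tsupport h0.2])

lemma IsKer.integrable {n : ℕ} {Γ : Set (Fin n → ℝ)} {θ : (Fin n → ℝ) → ℝ}
    (h : IsKer Γ θ) : Integrable θ := h.continuous.integrable_of_hasCompactSupport h.2.1

/-- The dyadic dilation `z ↦ 2^{kn} ρ(2^k z)`, normalised to keep the integral. -/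
def mol {n : ℕ} (ρ : (Fin n → ℝ) → ℝ) (k : ℕ) (z : Fin n → ℝ) : ℝ :=
  ((2:ℝ) ^ k) ^ n * ρ ((2:ℝ) ^ k • z)

lemma adjOp_scale {n : ℕ} (A : Fin n → ((Fin n → ℝ) →ₗ[ℝ] (Fin n → Fin n → ℝ)))
    (Ψ : Fin n → Fin n → (Fin n → ℝ) → ℝ) (a t : ℝ) (i : Fin n) (x : Fin n → ℝ)
    (hΨ : ∀ k l, Differentiable ℝ (Ψ k l)) :
    adjOp A (fun k l z => a * Ψ k l (t • z)) i x = a * t * adjOp A Ψ i (t • x) := by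
  have : ∀ k l j, fderiv ℝ (fun z => a * Ψ k l (t • z)) x (Pi.single j 1) =
      a * (t * fderiv ℝ (Ψ k l) (t • x) (Pi.single j 1)) := by
    intro k l j
    have h1 : HasFDerivAt (fun z : Fin n → ℝ => t • z) (t • ContinuousLinearMap.id ℝ _) x :=
      (hasFDerivAt_id x).fun_const_smul t
    have h2 : HasFDerivAt (fun z => a * Ψ k l (t • z)) _ x :=
      ((hΨ k l (t • x)).hasFDerivAt.comp x h1).const_mul a
    rw [h2.fderiv]
    simp
  simp only [adjOp, this, Finset.mul_sum]
  refine Finset.sum_congr rfl fun k _ => Finset.sum_congr rfl fun l _ =>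
    Finset.sum_congr rfl fun j _ => by ring

lemma integral_scale {n : ℕ} (f : (Fin n → ℝ) → ℝ) {t : ℝ} (ht : 0 < t) :
    ∫ z, f (t • z) = (t ^ n)⁻¹ * ∫ z, f z := by
  rw [Measure.integral_comp_smul_of_nonneg _ _ _ (hR := ht.le)]; simp

lemma integral_mol {n : ℕ} (ρ : (Fin n → ℝ) → ℝ) (k : ℕ) : ∫ z, mol ρ k z = ∫ z, ρ z := by
  unfold mol
  rw [integral_const_mul, integral_scale _ (by positivity), mul_inv_cancel_left₀ (by positivity)]

/-- Convergence at Lebesgue points; `ρ` may be signed and supported off the origin. -/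
lemma ae_tendsto_corr {n : ℕ} {Γ : Set (Fin n → ℝ)} {f ρ : (Fin n → ℝ) → ℝ} (h : IsKer Γ ρ)
    (h1 : ∫ z, ρ z = 1) (hf : Integrable f) :
    ∀ᵐ x, Filter.Tendsto (fun k => corr f (mol ρ k) x) Filter.atTop (𝓝 (f x)) := by
  obtain ⟨C, hC⟩ := h.2.1.exists_bound_of_continuous h.continuous
  obtain ⟨R, hR0, hR⟩ := h.2.1.isCompact.isBounded.subset_closedBall_lt 0 0
  set B := volume.real (Metric.ball (0 : Fin n → ℝ) 1) with hB
  have hBpos : 0 < B := by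
    rw [hB, measureReal_def]
    exact ENNReal.toReal_pos (Metric.measure_ball_pos _ _ one_pos).ne' measure_ball_lt_top.ne
  filter_upwards [IsUnifLocDoublingMeasure.ae_tendsto_average_norm_sub (volume)
    hf.locallyIntegrable 1] with x hx
  have hδ : Filter.Tendsto (fun k : ℕ => R * (2⁻¹:ℝ) ^ k) Filter.atTop (𝓝[>] 0) := by
    refine tendsto_nhdsWithin_iff.2 ⟨?_, Filter.Eventually.of_forall fun k => by
      simp only [Set.mem_Ioi]; positivity⟩
    simpa using (tendsto_pow_atTop_nhds_zero_of_lt_one (r := (2⁻¹:ℝ)) (by norm_num) (by norm_num)).const_mul R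
  have := hx (fun _ => x) (fun k : ℕ => R * (2⁻¹:ℝ) ^ k) hδ (Filter.Eventually.of_forall fun k => by
    simp only [one_mul]; exact Metric.mem_closedBall_self (by positivity))
  have key := tendsto_integral_smul_of_tendsto_average_norm_sub (g := fun k y => mol ρ k (y - x))
    (C * (R ^ n * B)) this (Filter.Eventually.of_forall fun k => hf.integrableOn) ?_ ?_ ?_
  · refine key.congr fun k => ?_
    simp only [corr, smul_eq_mul, mul_comm]
  · refine tendsto_const_nhds.congr fun k => ?_
    rw [integral_sub_right_eq_self (fun y => mol ρ k y) x, integral_mol, h1]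
  · refine Filter.Eventually.of_forall fun k y hy => ?_
    have h2 : (2:ℝ) ^ k • (y - x) ∈ tsupport ρ :=
      subset_tsupport _ fun h0 => hy (by simp [mol, h0])
    have h3 := hR h2
    rw [mem_closedBall_zero_iff, norm_smul, Real.norm_of_nonneg (by positivity)] at h3
    rw [mem_closedBall_iff_norm, inv_pow, ← div_eq_mul_inv, le_div_iff₀ (by positivity)]
    linarith
  · refine Filter.Eventually.of_forall fun k y => ?_
    rw [Measure.addHaar_real_closedBall _ _ (by positivity), ← hB]
    have : C * (R ^ n * B) / ((R * 2⁻¹ ^ k) ^ Module.finrank ℝ (Fin n → ℝ) * B) = ((2:ℝ) ^ k) ^ n * C := by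
      simp only [Module.finrank_fintype_fun_eq_card, Fintype.card_fin, mul_pow, inv_pow]
      field_simp
    rw [this, mol, abs_mul, abs_of_pos (by positivity)]
    gcongr
    exact hC _

lemma corr_sub {n : ℕ} {Γ : Set (Fin n → ℝ)} {f θ η : (Fin n → ℝ) → ℝ} (h : IsKer Γ θ)
    (h' : IsKer Γ η) (hf : Integrable f) (x : Fin n → ℝ) :
    corr f (fun z => θ z - η z) x = corr f θ x - corr f η x := by
  have : ∀ {θ}, IsKer Γ θ → Integrable (fun y => f y * θ (y - x)) := fun {θ} h =>
    integrable_mul_of_compact hf (h.continuous.comp (by fun_prop))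
      (h.2.1.comp_homeomorph (Homeomorph.subRight x))
  unfold corr
  rw [← integral_sub (this h) (this h')]
  simp only [mul_sub]

/-- Interpolation of `Lᵖ` between `L¹` and `L^∞`. -/
lemma eLpNorm_le_of_sup_L1 {α : Type*} [MeasurableSpace α] {μ : Measure α} {f : α → ℝ} {p S L : ℝ}
    (hp : 1 ≤ p) (hS : 0 ≤ S) (hf : Integrable f μ) (hs : ∀ᵐ x ∂μ, |f x| ≤ S) (hL : ∫ x, |f x| ∂μ ≤ L) :
    eLpNorm f (ENNReal.ofReal p) μ ≤ ENNReal.ofReal ((S ^ (p - 1) * L) ^ (1 / p)) := by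
  have hp0 : 0 < p := by linarith
  have hL0 : 0 ≤ L := (integral_nonneg fun x => abs_nonneg _).trans hL
  rw [eLpNorm_eq_lintegral_rpow_enorm_toReal (by simpa using hp0) ENNReal.ofReal_ne_top,
    ENNReal.toReal_ofReal hp0.le, ← ENNReal.ofReal_rpow_of_nonneg (by positivity) (by positivity)]
  gcongr
  calc ∫⁻ x, ‖f x‖ₑ ^ p ∂μ ≤ ∫⁻ x, ENNReal.ofReal (S ^ (p-1)) * ‖f x‖ₑ ∂μ := by
        refine lintegral_mono_ae ?_
        filter_upwards [hs] with x hx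
        rw [← ofReal_norm, ENNReal.ofReal_rpow_of_nonneg (norm_nonneg _) hp0.le,
          ← ENNReal.ofReal_mul (by positivity)]
        apply ENNReal.ofReal_le_ofReal
        rw [Real.norm_eq_abs]
        rcases eq_or_ne (f x) 0 with h0 | h0
        · simp [h0, Real.zero_rpow hp0.ne']
        · calc |f x| ^ p = |f x| ^ (p - 1) * |f x| := by
                rw [← Real.rpow_add_one (abs_pos.2 h0).ne']; simp
            _ ≤ _ := by
              gcongr
    _ = ENNReal.ofReal (S ^ (p-1)) * ENNReal.ofReal (∫ x, |f x| ∂μ) := by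
        rw [lintegral_const_mul' _ _ ENNReal.ofReal_ne_top, ← ofReal_integral_norm_eq_lintegral_enorm hf]
        rfl
    _ ≤ _ := by
        rw [ENNReal.ofReal_mul (by positivity)]
        gcongr

/-! ### Approximation with a geometric rate in `Lᵖ` -/

lemma rate_identity {n : ℕ} (hn : 1 ≤ n) {p m : ℝ} (hp : 1 ≤ p) (hm : 0 < m) (k : ℕ) :
    ((m * ((2:ℝ) ^ k) ^ (n - 1)) ^ (p - 1) * (m * ((2:ℝ) ^ k)⁻¹)) ^ (1 / p) =
      m * (((2:ℝ) ^ (((n:ℝ) - 1) * (p - 1) - 1)) ^ (1 / p)) ^ k := by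
  have hp0 : 0 < p := by linarith
  have h1 : (((2:ℝ) ^ k) ^ (n - 1)) ^ (p - 1) * ((2:ℝ) ^ k)⁻¹ =
      ((2:ℝ) ^ (((n:ℝ) - 1) * (p - 1) - 1)) ^ k := by
    have e1 : ((2:ℝ) ^ k)⁻¹ = (2:ℝ) ^ (-(k:ℝ)) := by rw [Real.rpow_neg (by norm_num), Real.rpow_natCast]
    have e2 : ((2:ℝ) ^ k) ^ (n - 1) = (2:ℝ) ^ ((k:ℝ) * ((n:ℝ) - 1)) := by
      rw [← pow_mul, ← Real.rpow_natCast]; push_cast [Nat.cast_sub hn]; rfl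
    rw [e1, e2, ← Real.rpow_mul (by norm_num), ← Real.rpow_add (by norm_num), ← Real.rpow_natCast,
      ← Real.rpow_mul (by norm_num)]
    congr 1; ring
  have h2 : m ^ (p - 1) * m = m ^ p := by
    rw [← Real.rpow_add_one hm.ne']; simp
  rw [Real.mul_rpow (z := p - 1) (by positivity) (by positivity)]
  have h3 : m ^ (p - 1) * (((2:ℝ) ^ k) ^ (n - 1)) ^ (p - 1) * (m * ((2:ℝ) ^ k)⁻¹) =
      m ^ p * ((2:ℝ) ^ (((n:ℝ) - 1) * (p - 1) - 1)) ^ k := by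
    rw [← h1, ← h2]; ring
  rw [h3, Real.mul_rpow (by positivity) (by positivity), ← Real.rpow_mul hm.le,
    mul_one_div_cancel hp0.ne', Real.rpow_one]
  generalize hσ : (2:ℝ) ^ (((n:ℝ) - 1) * (p - 1) - 1) = σ
  have hσ0 : 0 ≤ σ := by rw [← hσ]; positivity
  rw [← Real.rpow_natCast, ← Real.rpow_natCast, ← Real.rpow_mul hσ0, ← Real.rpow_mul hσ0,
    mul_comm (k:ℝ)]

/-- One dyadic step: the rescaled field `2^{k(n-1)} Ψ(2^k ·)` has sup norm of order `2^{k(n-1)}` and `L¹`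
norm of order `2^{-k}`; interpolation gives the stated rate. -/
lemma step_bound {n : ℕ} (hn : 2 ≤ n) {A : Fin n → ((Fin n → ℝ) →ₗ[ℝ] (Fin n → Fin n → ℝ))}
    {U Γ V : Set (Fin n → ℝ)} (hΓ : ShrinkStable Γ) (hV : IsCompact V)
    (hVU : ∀ x ∈ V, ∀ z ∈ Γ, x + z ∈ U)
    {ρ : (Fin n → ℝ) → ℝ} {Ψ : Fin n → Fin n → Fin n → (Fin n → ℝ) → ℝ} (hρ : IsKer Γ ρ)
    (hΨ : ∀ i k l, IsKer Γ (Ψ i k l))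
    (h : ∀ i i' x, adjOp A (Ψ i) i' x = if i = i' then ρ x - 2 ^ n * ρ ((2:ℝ) • x) else 0)
    {C : ℝ} (hC : 0 < C) (hΨ1 : ∀ i k l x, |Ψ i k l x| ≤ C) (hΨ2 : ∀ i k l, ∫ x, |Ψ i k l x| ≤ C)
    {p : ℝ} (hp : 1 ≤ p) {u : Fin n → (Fin n → ℝ) → ℝ} {M : ℝ} (hM : 0 < M)
    (hu : ∀ i, Integrable (u i)) (hB : PairBd A U u M) (i : Fin n) (k : ℕ) :
    eLpNorm (fun x => corr (u i) (mol ρ k) x - corr (u i) (mol ρ (k + 1)) x) (ENNReal.ofReal p)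
      (volume.restrict V) ≤
      ENNReal.ofReal (M * C * (((2:ℝ) ^ (((n:ℝ) - 1) * (p - 1) - 1)) ^ (1 / p)) ^ k) := by
  have ht1 : (1:ℝ) ≤ 2 ^ k := one_le_pow₀ (by norm_num)
  have ht0 : (0:ℝ) < 2 ^ k := by positivity
  set a : ℝ := ((2:ℝ) ^ k) ^ (n - 1) with ha
  have ha0 : 0 < a := by positivity
  have hat : a * 2 ^ k = ((2:ℝ) ^ k) ^ n := by
    rw [ha, ← pow_succ]; congr 1; omega
  -- One factor `2^k` of the normalisation `2^{kn}` is produced by the derivative in `adjOp`.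
  set Φ : Fin n → Fin n → (Fin n → ℝ) → ℝ := fun k' l z => a * Ψ i k' l ((2:ℝ) ^ k • z) with hΦ
  have hΦk : ∀ k' l, IsKer Γ (Φ k' l) := fun k' l => (hΨ i k' l).scale hΓ a ht1
  have hm0 : IsKer Γ (mol ρ k) := hρ.scale hΓ _ ht1
  have hm1 : IsKer Γ (mol ρ (k + 1)) := hρ.scale hΓ _ (one_le_pow₀ (by norm_num))
  have hθ := hm0.sub hm1
  have hadj : ∀ i' x, adjOp A Φ i' x = if i = i' then mol ρ k x - mol ρ (k + 1) x else 0 := by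
    intro i' x
    rw [hΦ, adjOp_scale _ _ _ _ _ _ fun k' l => (hΨ i k' l).1.differentiable (by simp), h, hat]
    by_cases hi : i = i'
    · simp only [hi, if_true, mol, smul_smul, ← pow_succ', mul_sub]
      rw [pow_succ (2:ℝ) k, mul_pow]; ring
    · simp [hi]
  have hs : ∀ x ∈ V, |corr (u i) (fun z => mol ρ k z - mol ρ (k + 1) z) x| ≤ M * (a * C) := by
    intro x hx
    refine corr_bound_sup hB hΦk hadj (by positivity) (fun k' l x => ?_) (hVU x hx)
    rw [hΦ, abs_mul, abs_of_pos ha0]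
    gcongr
    exact hΨ1 _ _ _ _
  have hL : ∫ x in V, |corr (u i) (fun z => mol ρ k z - mol ρ (k + 1) z) x| ≤
      M * (((2:ℝ) ^ k)⁻¹ * C) := by
    refine corr_bound_L1 hB hu hΦk hθ hadj (by positivity) (fun k' l => ?_) hV hVU
    simp only [hΦ, abs_mul, abs_of_pos ha0]
    rw [integral_const_mul, integral_scale (fun z => |Ψ i k' l z|) ht0, ← mul_assoc]
    have : a * (((2:ℝ) ^ k) ^ n)⁻¹ = ((2:ℝ) ^ k)⁻¹ := by
      rw [← hat]; field_simp
    rw [this]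
    gcongr
    exact hΨ2 _ _ _
  have hco := continuous_corr hθ (hu i)
  have hfin := eLpNorm_le_of_sup_L1 (μ := volume.restrict V) hp (by positivity)
    (hco.continuousOn.integrableOn_compact hV)
    ((ae_restrict_iff' hV.measurableSet).2 (Filter.Eventually.of_forall hs)) hL
  have e : (fun x => corr (u i) (mol ρ k) x - corr (u i) (mol ρ (k + 1)) x) =
      corr (u i) (fun z => mol ρ k z - mol ρ (k + 1) z) :=
    funext fun x => (corr_sub hm0 hm1 (hu i) x).symm
  rw [e]
  refine hfin.trans (le_of_eq ?_)
  rw [← rate_identity (by omega : 1 ≤ n) hp (by positivity : 0 < M * C)]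
  congr 3
  · rw [← ha]; ring_nf
  · ring

/-- Every integrable `u` with `𝔸u` bounded by `M` on `U` is approximated in `Lᵖ(V)`, as soon as
`V + Γ ⊆ U`, by its mollifications, with error `M C τ ^ K`. The kernel `ρ` and the constants do not depend
on `u`. -/
theorem tail_bound {n : ℕ} (hn : 2 ≤ n) {A : Fin n → ((Fin n → ℝ) →ₗ[ℝ] (Fin n → Fin n → ℝ))}
    (hCell : CElliptic n A) {U Γ V : Set (Fin n → ℝ)} (hΓ : ShrinkStable Γ) (hΓo : IsOpen Γ)
    (hne : Γ.Nonempty) (hV : IsCompact V) (hVU : ∀ x ∈ V, ∀ z ∈ Γ, x + z ∈ U)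
    {p : ℝ} (hp : 1 ≤ p) (hpn : p < (n : ℝ) / ((n : ℝ) - 1)) :
    ∃ (ρ : (Fin n → ℝ) → ℝ) (C τ : ℝ), IsKer Γ ρ ∧ 0 ≤ C ∧ 0 ≤ τ ∧ τ < 1 ∧
      ∀ (u : Fin n → (Fin n → ℝ) → ℝ) (M : ℝ), 0 < M → (∀ i, Integrable (u i)) → PairBd A U u M →
      ∀ i K, eLpNorm (fun x => u i x - corr (u i) (mol ρ K) x) (ENNReal.ofReal p)
        (volume.restrict V) ≤ ENNReal.ofReal (M * C * τ ^ K) := by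
  obtain ⟨ρ, Ψ, hρ, hρ1, hΨ, h⟩ := exists_real_kernel hCell (by omega) hΓ hΓo hne
  choose B hB using fun i k l => (hΨ i k l).2.1.exists_bound_of_continuous (hΨ i k l).continuous
  have hn1 : (0:ℝ) < (n:ℝ) - 1 := by
    have : (2:ℝ) ≤ n := by exact_mod_cast hn
    linarith
  set D : Fin n → Fin n → Fin n → ℝ := fun i k l => |B i k l| + ∫ x, |Ψ i k l x| with hD
  have hD0 : ∀ i k l, 0 ≤ D i k l := fun i k l =>
    add_nonneg (abs_nonneg _) (integral_nonneg fun x => abs_nonneg _)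
  set C : ℝ := 1 + ∑ i, ∑ k, ∑ l, D i k l with hC
  have hC0 : 0 < C := by
    have : 0 ≤ ∑ i, ∑ k, ∑ l, D i k l := Finset.sum_nonneg fun i _ => Finset.sum_nonneg fun k _ =>
      Finset.sum_nonneg fun l _ => hD0 i k l
    linarith
  have hDC : ∀ i k l, D i k l ≤ C := by
    intro i k l
    have h1 : D i k l ≤ ∑ l, D i k l := Finset.single_le_sum (fun l _ => hD0 i k l) (Finset.mem_univ l)
    have h2 : ∑ l, D i k l ≤ ∑ k, ∑ l, D i k l := Finset.single_le_sum
      (f := fun k => ∑ l, D i k l) (fun k _ => Finset.sum_nonneg fun l _ => hD0 i k l) (Finset.mem_univ k)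
    have h3 : ∑ k, ∑ l, D i k l ≤ ∑ i, ∑ k, ∑ l, D i k l := Finset.single_le_sum
      (f := fun i => ∑ k, ∑ l, D i k l) (fun i _ => Finset.sum_nonneg fun k _ =>
      Finset.sum_nonneg fun l _ => hD0 i k l) (Finset.mem_univ i)
    linarith
  have hΨ1 : ∀ i k l x, |Ψ i k l x| ≤ C := fun i k l x => by
    have h1 := (hB i k l x).trans (le_abs_self _)
    rw [Real.norm_eq_abs] at h1
    have h2 : 0 ≤ ∫ x, |Ψ i k l x| := integral_nonneg fun x => abs_nonneg _
    have h3 := hDC i k l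
    simp only [hD] at h3; linarith
  have hΨ2 : ∀ i k l, ∫ x, |Ψ i k l x| ≤ C := fun i k l => by
    have h3 := hDC i k l
    have := abs_nonneg (B i k l)
    simp only [hD] at h3; linarith
  set τ : ℝ := ((2:ℝ) ^ (((n:ℝ) - 1) * (p - 1) - 1)) ^ (1 / p) with hτ
  have hτ0 : 0 < τ := by positivity
  -- The exponent `(n - 1)(p - 1) - 1` is negative exactly when `p < n / (n - 1)`.
  have hτ1 : τ < 1 := by
    refine Real.rpow_lt_one (by positivity) (Real.rpow_lt_one_of_one_lt_of_neg (by norm_num) ?_)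
      (by positivity)
    rw [lt_div_iff₀ hn1] at hpn
    nlinarith
  refine ⟨ρ, C / (1 - τ), τ, hρ, by have : 0 < 1 - τ := by linarith
                                    positivity, hτ0.le, hτ1, ?_⟩
  intro u M hM hu hPB i K
  have h1τ : 0 < 1 - τ := by linarith
  have hcont : ∀ k, Continuous (corr (u i) (mol ρ k)) := fun k =>
    continuous_corr (hρ.scale hΓ _ (one_le_pow₀ (by norm_num)) : IsKer Γ (mol ρ k)) (hu i)
  have hstep := step_bound hn hΓ hV hVU hρ hΨ h hC0 hΨ1 hΨ2 hp hM hu hPB i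
  have htail : ∀ N, eLpNorm (fun x => corr (u i) (mol ρ (K + N)) x - corr (u i) (mol ρ K) x)
      (ENNReal.ofReal p) (volume.restrict V) ≤
      ENNReal.ofReal (M * (C / (1 - τ)) * (τ ^ K - τ ^ (K + N))) := by
    intro N
    induction N with
    | zero => simp
    | succ N ih =>
      have e : (fun x => corr (u i) (mol ρ (K + (N + 1))) x - corr (u i) (mol ρ K) x) =
          (fun x => corr (u i) (mol ρ (K + N)) x - corr (u i) (mol ρ K) x) -
          (fun x => corr (u i) (mol ρ (K + N)) x - corr (u i) (mol ρ (K + N + 1)) x) := by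
        funext x; simp [← add_assoc]
      rw [e]
      refine (eLpNorm_sub_le ((hcont _).sub (hcont _)).aestronglyMeasurable
        ((hcont _).sub (hcont _)).aestronglyMeasurable (by simpa using hp)).trans ?_
      refine (add_le_add ih (hstep (K + N))).trans (le_of_eq ?_)
      rw [← ENNReal.ofReal_add]
      · congr 1
        rw [← add_assoc, pow_succ τ (K + N)]; field_simp; ring
      · have : τ ^ (K + N) ≤ τ ^ K := pow_le_pow_of_le_one hτ0.le hτ1.le (by omega)
        have : 0 ≤ τ ^ K - τ ^ (K + N) := by linarith
        positivity
      · positivity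
  -- Fatou's lemma carries the uniform bound to the almost everywhere limit.
  have hlim : ∀ᵐ x ∂(volume.restrict V), Filter.Tendsto (fun N =>
      corr (u i) (mol ρ (K + N)) x - corr (u i) (mol ρ K) x) Filter.atTop
      (𝓝 (u i x - corr (u i) (mol ρ K) x)) := by
    filter_upwards [ae_restrict_of_ae (ae_tendsto_corr hρ hρ1 (hu i))] with x hx
    refine Filter.Tendsto.sub_const ?_ _
    have := (Filter.tendsto_add_atTop_iff_nat K).2 hx
    simpa only [add_comm] using this
  refine (Lp.eLpNorm_lim_le_liminf_eLpNorm (fun N => ((hcont _).sub (hcont _)).aestronglyMeasurable)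
    _ hlim).trans ?_
  refine Filter.liminf_le_of_le (by isBoundedDefault) fun b hb => ?_
  obtain ⟨N, hN⟩ := hb.exists
  refine hN.trans ((htail N).trans (ENNReal.ofReal_le_ofReal ?_))
  have : 0 ≤ τ ^ (K + N) := by positivity
  gcongr
  linarith

/-! ### Covering a star-shaped domain by patches -/

/-- A segment from a point of the closure of `U` to a point `c` of the ball lies in `U`, apart from its
first end: a nearby point of `U` is combined with a slightly moved `c`. -/
lemma star_closure {n : ℕ} {U : Set (Fin n → ℝ)} {x₀ : Fin n → ℝ} {r : ℝ}
    (h : ∀ c ∈ Metric.ball x₀ r, StarConvex ℝ c U) {x c : Fin n → ℝ} (hx : x ∈ closure U)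
    (hc : c ∈ Metric.ball x₀ r) {s : ℝ} (hs0 : 0 < s) (hs1 : s ≤ 1) : x + s • (c - x) ∈ U := by
  -- The point `x + s (c - x)` is a convex combination of `y` and `c + ((1 - s) / s) (x - y)`.
  have hO : IsOpen ((fun y => c + ((1 - s) / s) • (x - y)) ⁻¹' Metric.ball x₀ r) :=
    Metric.isOpen_ball.preimage (by fun_prop)
  obtain ⟨y, hyO, hyU⟩ := mem_closure_iff.1 hx _ hO (by simpa using hc)
  have := (h _ hyO) hyU hs0.le (by linarith : 0 ≤ 1 - s) (by ring)
  convert this using 1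
  funext i
  simp
  field_simp
  ring

open scoped Pointwise in
/-- A finite cover of `U` by compact sets `V a`, each with a contraction-stable open set `Γ a` such that
`V a + Γ a ⊆ U`. Here `V a` is a small piece of `closure U` near `a`, and `Γ a` is the truncated cone over
a ball around `x₀ - a`. -/
lemma exists_patches {n : ℕ} {U : Set (Fin n → ℝ)} (hUb : Bornology.IsBounded U)
    (hstar : StarShapedWrtBall n U) :
    ∃ (T : Finset (Fin n → ℝ)) (V Γ : (Fin n → ℝ) → Set (Fin n → ℝ)),
      (∀ a, ShrinkStable (Γ a) ∧ IsOpen (Γ a) ∧ (Γ a).Nonempty ∧ IsCompact (V a) ∧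
        V a ⊆ closure U ∧ ∀ x ∈ V a, ∀ z ∈ Γ a, x + z ∈ U) ∧ U ⊆ ⋃ a ∈ T, V a := by
  obtain ⟨x₀, r, hr, -, hst⟩ := hstar
  have hK : IsCompact (closure U) := hUb.isCompact_closure
  obtain ⟨T, -, hT⟩ := hK.elim_nhds_subcover (fun a => Metric.closedBall a (r / 4))
    fun a _ => Metric.closedBall_mem_nhds a (by positivity)
  refine ⟨T, fun a => closure U ∩ Metric.closedBall a (r / 4),
    fun a => ⋃ s ∈ Set.Ioc (0:ℝ) 1, s • Metric.ball (x₀ - a) (r / 2), fun a => ⟨?_, ?_, ?_, ?_, ?_, ?_⟩, ?_⟩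
  · intro t ht0 ht1 y hy
    simp only [Set.mem_iUnion, exists_prop] at hy ⊢
    obtain ⟨s, hs, g, hg, rfl⟩ := hy
    exact ⟨t * s, ⟨mul_pos ht0 hs.1, mul_le_one₀ ht1 hs.1.le hs.2⟩, g, hg, mul_smul _ _ _⟩
  · exact isOpen_biUnion fun s hs => Metric.isOpen_ball.smul₀ hs.1.ne'
  · exact ⟨x₀ - a, Set.mem_biUnion (⟨one_pos, le_rfl⟩ : (1:ℝ) ∈ Set.Ioc (0:ℝ) 1)
      ⟨x₀ - a, Metric.mem_ball_self (by positivity), one_smul _ _⟩⟩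
  · exact hK.inter_right Metric.isClosed_closedBall
  · exact Set.inter_subset_left
  · rintro x ⟨hxU, hxa⟩ z hz
    simp only [Set.mem_iUnion, exists_prop] at hz
    obtain ⟨s, hs, g, hg, rfl⟩ := hz
    have hc : x + g ∈ Metric.ball x₀ r := by
      rw [mem_ball_iff_norm] at hg ⊢
      rw [mem_closedBall_iff_norm] at hxa
      have : x + g - x₀ = (g - (x₀ - a)) + (x - a) := by abel
      rw [this]
      exact (norm_add_le _ _).trans_lt (by linarith)
    simpa using star_closure hst hxU hc hs.1 hs.2
  · intro x hx
    have := hT (subset_closure hx)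
    simp only [Set.mem_iUnion, exists_prop] at this ⊢
    obtain ⟨a, ha, hxa⟩ := this
    exact ⟨a, ha, subset_closure hx, hxa⟩

/-! ### Weak-* compactness -/

/-- Sequential Banach–Alaoglu in the dual of `C(K, ℝⁿ)`; a common subsequence serves all coordinates. -/
lemma exists_weak_subseq {n : ℕ} {K : Set (Fin n → ℝ)} (hK : IsCompact K) {M : ℝ}
    {f : ℕ → Fin n → (Fin n → ℝ) → ℝ} (hf : ∀ k i, Integrable (f k i))
    (h0 : ∀ k i, ∀ x ∉ K, f k i x = 0) (hM : ∀ k i, ∫ x, |f k i x| ≤ M) :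
    ∃ φ : ℕ → ℕ, StrictMono φ ∧ ∀ i (g : (Fin n → ℝ) → ℝ), Continuous g →
      ∃ l, Filter.Tendsto (fun j => ∫ x, f (φ j) i x * g x) Filter.atTop (𝓝 l) := by
  have : CompactSpace K := isCompact_iff_compactSpace.1 hK
  set μ : Measure K := volume.comap ((↑) : K → (Fin n → ℝ)) with hμ
  have hme : MeasurableEmbedding ((↑) : K → (Fin n → ℝ)) := MeasurableEmbedding.subtype_coe hK.measurableSet
  have hfi : ∀ k i, Integrable (fun x : K => f k i x) μ := fun k i =>
    (hme.integrableOn_range_iff_comap (μ := volume)).1 (hf k i).integrableOn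
  have hsub : ∀ (F : (Fin n → ℝ) → ℝ), (∀ x ∉ K, F x = 0) → ∫ x : K, F x ∂μ = ∫ x, F x := by
    intro F hF
    rw [hμ, integral_subtype_comap hK.measurableSet, setIntegral_eq_integral_of_forall_compl_eq_zero hF]
  have hgb : ∀ (g : C(K, Fin n → ℝ)) i (x : K), |g x i| ≤ ‖g‖ := fun g i x =>
    (norm_le_pi_norm (g x) i).trans (g.norm_coe_le_norm x)
  have hgi : ∀ k i (g : C(K, Fin n → ℝ)), Integrable (fun x : K => f k i x * g x i) μ := fun k i g =>
    (hfi k i).mul_bdd (by fun_prop : Continuous fun x => g x i).aestronglyMeasurable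
      (Filter.Eventually.of_forall fun x => hgb g i x)
  let L0 : ℕ → C(K, Fin n → ℝ) →ₗ[ℝ] ℝ := fun k =>
    { toFun := fun g => ∑ i, ∫ x : K, f k i x * g x i ∂μ
      map_add' := fun g h => by
        simp only [ContinuousMap.add_apply, Pi.add_apply, mul_add]
        rw [← Finset.sum_add_distrib]
        exact Finset.sum_congr rfl fun i _ => integral_add (hgi k i g) (hgi k i h)
      map_smul' := fun c g => by
        simp only [ContinuousMap.smul_apply, Pi.smul_apply, smul_eq_mul, RingHom.id_apply, Finset.mul_sum]
        refine Finset.sum_congr rfl fun i _ => ?_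
        rw [← integral_const_mul]
        simp only [mul_left_comm] }
  have hL0 : ∀ k g, ‖L0 k g‖ ≤ (n * M) * ‖g‖ := by
    intro k g
    calc ‖L0 k g‖ = ‖∑ i, ∫ x : K, f k i x * g x i ∂μ‖ := rfl
      _ ≤ ∑ i, ‖∫ x : K, f k i x * g x i ∂μ‖ := norm_sum_le _ _
      _ ≤ ∑ i : Fin n, M * ‖g‖ := by
        refine Finset.sum_le_sum fun i _ => ?_
        calc ‖∫ x : K, f k i x * g x i ∂μ‖ ≤ ∫ x : K, ‖f k i x * g x i‖ ∂μ :=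
              norm_integral_le_integral_norm _
          _ ≤ ∫ x : K, |f k i x| * ‖g‖ ∂μ := by
              refine integral_mono (hgi k i g).norm ((hfi k i).abs.mul_const _) fun x => ?_
              simp only [norm_mul, Real.norm_eq_abs]
              gcongr
              exact hgb g i x
          _ = (∫ x, |f k i x|) * ‖g‖ := by
              rw [integral_mul_const, hsub (fun x => |f k i x|) fun x hx => by simp [h0 k i x hx]]
          _ ≤ M * ‖g‖ := by gcongr; exact hM k i
      _ = _ := by simp; ring
  let L : ℕ → WeakDual ℝ C(K, Fin n → ℝ) := fun k =>
    StrongDual.toWeakDual ((L0 k).mkContinuous (n * M) (hL0 k))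
  have hLm : ∀ k, L k ∈ WeakDual.toStrongDual ⁻¹' Metric.closedBall (0 : StrongDual ℝ C(K, Fin n → ℝ)) |n * M| := by
    intro k
    exact mem_closedBall_zero_iff.2 (((L0 k).mkContinuous_norm_le' (hL0 k)).trans (max_le (le_abs_self _) (abs_nonneg _)))
  obtain ⟨a, -, φ, hφ, ha⟩ := WeakDual.isSeqCompact_closedBall ℝ _ _ _ hLm
  refine ⟨φ, hφ, fun i g hg => ?_⟩
  have hsc : Continuous (fun x : K => (Pi.single i (g x) : Fin n → ℝ)) :=
    (continuous_single i).comp (hg.comp continuous_subtype_val)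
  refine ⟨a ⟨_, hsc⟩, ?_⟩
  have h1 := ((WeakDual.eval_continuous (𝕜 := ℝ)
    (⟨_, hsc⟩ : C(K, Fin n → ℝ))).tendsto a).comp ha
  refine h1.congr fun j => ?_
  change ∑ i', ∫ x : K, f (φ j) i' x * (Pi.single i (g x) : Fin n → ℝ) i' ∂μ = _
  rw [Finset.sum_eq_single i]
  · simp only [Pi.single_eq_same]
    exact hsub (fun x => f (φ j) i x * g x) fun x hx => by simp [h0 _ i x hx]
  · intro b _ hb
    simp [hb]
  · simp

/-! ### Cauchy sequences in `Lᵖ` -/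

/-- Correlation with a fixed kernel turns weak-* convergence into strong convergence on compact sets:
pointwise convergence together with a uniform bound. -/
lemma corr_tendsto_Lp {n : ℕ} {Γ V : Set (Fin n → ℝ)} (hV : IsCompact V) {p : ℝ} (hp : 1 ≤ p)
    {f : ℕ → (Fin n → ℝ) → ℝ} {M : ℝ} (hf : ∀ j, Integrable (f j)) (hM : ∀ j, ∫ x, |f j x| ≤ M)
    (hw : ∀ g : (Fin n → ℝ) → ℝ, Continuous g →
      ∃ l, Filter.Tendsto (fun j => ∫ x, f j x * g x) Filter.atTop (𝓝 l))
    {θ : (Fin n → ℝ) → ℝ} (hθ : IsKer Γ θ) :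
    ∃ ℓ : (Fin n → ℝ) → ℝ, AEStronglyMeasurable ℓ (volume.restrict V) ∧
      Filter.Tendsto (fun j => eLpNorm (fun x => corr (f j) θ x - ℓ x) (ENNReal.ofReal p)
        (volume.restrict V)) Filter.atTop (𝓝 0) := by
  obtain ⟨B, hB⟩ := hθ.2.1.exists_bound_of_continuous hθ.continuous
  have hB0 : 0 ≤ B := (norm_nonneg _).trans (hB 0)
  have hM0 : 0 ≤ M := (integral_nonneg fun x => abs_nonneg _).trans (hM 0)
  choose ℓ hℓ using fun x : Fin n → ℝ => hw (fun y => θ (y - x)) (hθ.continuous.comp (by fun_prop))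
  have hco : ∀ j, Continuous (corr (f j) θ) := fun j => continuous_corr hθ (hf j)
  have hℓ' : ∀ x, Filter.Tendsto (fun j => corr (f j) θ x) Filter.atTop (𝓝 (ℓ x)) := hℓ
  have hbd : ∀ j x, |corr (f j) θ x| ≤ M * B := by
    intro j x
    calc |corr (f j) θ x| ≤ ∫ y, |f j y * θ (y - x)| := abs_integral_le_integral_abs
      _ ≤ ∫ y, |f j y| * B := by
        refine integral_mono_of_nonneg (Filter.Eventually.of_forall fun x => abs_nonneg _)
          ((hf j).abs.mul_const _) (Filter.Eventually.of_forall fun y => ?_)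
        simp only [abs_mul]
        gcongr
        exact hB _
      _ ≤ M * B := by rw [integral_mul_const]; gcongr; exact hM j
  have hbl : ∀ x, |ℓ x| ≤ M * B := fun x =>
    le_of_tendsto (hℓ' x).abs (Filter.Eventually.of_forall fun j => hbd j x)
  have hlm : AEStronglyMeasurable ℓ (volume.restrict V) :=
    aestronglyMeasurable_of_tendsto_ae Filter.atTop (fun j => (hco j).aestronglyMeasurable)
      (Filter.Eventually.of_forall hℓ')
  have hcst : ∀ c : ℝ, Integrable (fun _ : Fin n → ℝ => c) (volume.restrict V) := fun c =>
    integrableOn_const hV.measure_lt_top.ne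
  have hd : ∀ j x, |corr (f j) θ x - ℓ x| ≤ 2 * (M * B) := fun j x => by
    have := abs_sub (corr (f j) θ x) (ℓ x)
    linarith [hbd j x, hbl x]
  have hdi : ∀ j, Integrable (fun x => corr (f j) θ x - ℓ x) (volume.restrict V) := fun j =>
    (hcst (2 * (M * B))).mono' ((hco j).aestronglyMeasurable.sub hlm)
      (Filter.Eventually.of_forall fun x => hd j x)
  refine ⟨ℓ, hlm, ?_⟩
  have hL1 : Filter.Tendsto (fun j => ∫ x in V, |corr (f j) θ x - ℓ x|) Filter.atTop (𝓝 0) := by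
    have := tendsto_integral_of_dominated_convergence (μ := volume.restrict V)
      (F := fun j x => |corr (f j) θ x - ℓ x|) (f := fun _ => 0) (fun _ => 2 * (M * B))
      (fun j => (hdi j).abs.aestronglyMeasurable) (hcst _)
      (fun j => Filter.Eventually.of_forall fun x => by
        rw [Real.norm_eq_abs, abs_abs]; exact hd j x)
      (Filter.Eventually.of_forall fun x => by
        have := ((hℓ' x).sub_const (ℓ x)).abs
        simpa using this)
    simpa using this
  have hp0 : 0 < p := by linarith
  have hT : Filter.Tendsto (fun j => ENNReal.ofReal
      (((2 * (M * B)) ^ (p - 1) * ∫ x in V, |corr (f j) θ x - ℓ x|) ^ (1 / p))) Filter.atTop (𝓝 0) := by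
    have h1 := (hL1.const_mul ((2 * (M * B)) ^ (p - 1))).rpow_const (p := 1 / p) (Or.inr (by positivity))
    rw [mul_zero, Real.zero_rpow (by positivity)] at h1
    simpa using ENNReal.tendsto_ofReal h1
  refine tendsto_of_tendsto_of_tendsto_of_le_of_le tendsto_const_nhds hT (fun _ => zero_le) fun j => ?_
  exact eLpNorm_le_of_sup_L1 hp (by positivity) (hdi j) (Filter.Eventually.of_forall fun x => hd j x) le_rfl

/-- A uniform geometric approximation rate and weak-* convergence give a Cauchy sequence in `Lᵖ(V)`. -/
lemma patch_cauchy {n : ℕ} {Γ V : Set (Fin n → ℝ)} (hΓ : ShrinkStable Γ) (hV : IsCompact V)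
    {p : ℝ} (hp : 1 ≤ p)
    {f : ℕ → (Fin n → ℝ) → ℝ} {M : ℝ} (hf : ∀ j, Integrable (f j)) (hM : ∀ j, ∫ x, |f j x| ≤ M)
    (hw : ∀ g : (Fin n → ℝ) → ℝ, Continuous g →
      ∃ l, Filter.Tendsto (fun j => ∫ x, f j x * g x) Filter.atTop (𝓝 l))
    {ρ : (Fin n → ℝ) → ℝ} (hρ : IsKer Γ ρ) {C τ : ℝ} (hτ0 : 0 ≤ τ) (hτ1 : τ < 1)
    (ht : ∀ j K, eLpNorm (fun x => f j x - corr (f j) (mol ρ K) x) (ENNReal.ofReal p)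
        (volume.restrict V) ≤ ENNReal.ofReal (C * τ ^ K)) :
    (∀ j, MemLp (f j) (ENNReal.ofReal p) (volume.restrict V)) ∧
    ∀ ε : ℝ, 0 < ε → ∃ N, ∀ j ≥ N, ∀ j' ≥ N,
      eLpNorm (fun x => f j x - f j' x) (ENNReal.ofReal p) (volume.restrict V) ≤ ENNReal.ofReal ε := by
  have hp1 : 1 ≤ ENNReal.ofReal p := by simpa using hp
  have hk : ∀ K, IsKer Γ (mol ρ K) := fun K => hρ.scale hΓ _ (one_le_pow₀ (by norm_num))
  have hco : ∀ j K, Continuous (corr (f j) (mol ρ K)) := fun j K => continuous_corr (hk K) (hf j)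
  have hfm : ∀ j, AEStronglyMeasurable (f j) (volume.restrict V) := fun j =>
    (hf j).aestronglyMeasurable.restrict
  constructor
  · intro j
    have h1 : MemLp (corr (f j) (mol ρ 0)) (ENNReal.ofReal p) (volume.restrict V) := by
      have : IsFiniteMeasure (volume.restrict V) := isFiniteMeasure_restrict.2 hV.measure_lt_top.ne
      obtain ⟨B, hB⟩ := hV.exists_bound_of_continuousOn (hco j 0).continuousOn
      exact MemLp.of_bound (hco j 0).aestronglyMeasurable B
        ((ae_restrict_iff' hV.measurableSet).2 (Filter.Eventually.of_forall hB))
    have h2 : MemLp (fun x => f j x - corr (f j) (mol ρ 0) x) (ENNReal.ofReal p) (volume.restrict V) :=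
      ⟨(hfm j).sub (hco j 0).aestronglyMeasurable, (ht j 0).trans_lt ENNReal.ofReal_lt_top⟩
    have e : f j = (fun x => f j x - corr (f j) (mol ρ 0) x) + corr (f j) (mol ρ 0) := by
      funext x; simp
    rw [e]
    exact h2.add h1
  · intro ε hε
    obtain ⟨K, hK⟩ : ∃ K : ℕ, C * τ ^ K < ε / 4 := by
      have := ((tendsto_pow_atTop_nhds_zero_of_lt_one hτ0 hτ1).const_mul C)
      rw [mul_zero] at this
      exact (this.eventually (gt_mem_nhds (by positivity))).exists
    obtain ⟨ℓ, hℓm, hℓ⟩ := corr_tendsto_Lp hV hp hf hM hw (hk K)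
    obtain ⟨N, hN⟩ := Filter.eventually_atTop.1 (hℓ.eventually
      (gt_mem_nhds (ENNReal.ofReal_pos.2 (by positivity : 0 < ε / 4))))
    have hj : ∀ j ≥ N, eLpNorm (fun x => f j x - ℓ x) (ENNReal.ofReal p) (volume.restrict V) ≤
        ENNReal.ofReal (ε / 2) := by
      intro j hj
      have e : (fun x => f j x - ℓ x) = (fun x => f j x - corr (f j) (mol ρ K) x) +
          (fun x => corr (f j) (mol ρ K) x - ℓ x) := by funext x; simp
      rw [e]
      refine (eLpNorm_add_le ((hfm j).sub (hco j K).aestronglyMeasurable)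
        ((hco j K).aestronglyMeasurable.sub hℓm) hp1).trans ?_
      rw [show ε / 2 = ε / 4 + ε / 4 by ring, ENNReal.ofReal_add (by positivity) (by positivity)]
      exact add_le_add ((ht j K).trans (ENNReal.ofReal_le_ofReal hK.le)) (hN j hj).le
    refine ⟨N, fun j h1 j' h2 => ?_⟩
    have e : (fun x => f j x - f j' x) = (fun x => f j x - ℓ x) - (fun x => f j' x - ℓ x) := by
      funext x; simp
    rw [e]
    refine (eLpNorm_sub_le ((hfm j).sub hℓm) ((hfm j').sub hℓm) hp1).trans ?_
    rw [show ε = ε / 2 + ε / 2 by ring, ENNReal.ofReal_add (by positivity) (by positivity)]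
    exact add_le_add (hj j h1) (hj j' h2)

lemma eLpNorm_le_sum_patches {n : ℕ} {U : Set (Fin n → ℝ)} (hU : MeasurableSet U)
    {T : Finset (Fin n → ℝ)} {V : (Fin n → ℝ) → Set (Fin n → ℝ)} (hV : ∀ a, MeasurableSet (V a))
    (hUV : U ⊆ ⋃ a ∈ T, V a) {q : ℝ≥0∞} (hq : 1 ≤ q) {f : (Fin n → ℝ) → ℝ}
    (hf : AEStronglyMeasurable f) :
    eLpNorm f q (volume.restrict U) ≤ ∑ a ∈ T, eLpNorm f q (volume.restrict (V a)) := by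
  rw [← eLpNorm_indicator_eq_eLpNorm_restrict hU]
  calc eLpNorm (U.indicator f) q volume ≤ eLpNorm (∑ a ∈ T, (V a).indicator fun x => ‖f x‖) q volume := by
        refine eLpNorm_mono fun x => ?_
        have hnn : ∀ a ∈ T, 0 ≤ (V a).indicator (fun x => ‖f x‖) x := fun a _ =>
          Set.indicator_nonneg (fun _ _ => norm_nonneg _) _
        rw [Finset.sum_apply, Real.norm_of_nonneg (Finset.sum_nonneg hnn)]
        by_cases hx : x ∈ U
        · have := hUV hx
          simp only [Set.mem_iUnion, exists_prop] at this
          obtain ⟨a, ha, hxa⟩ := this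
          refine le_trans (le_of_eq ?_) (Finset.single_le_sum hnn ha)
          simp [hx, hxa]
        · simp only [hx, not_false_eq_true, Set.indicator_of_notMem, norm_zero]
          exact Finset.sum_nonneg hnn
    _ ≤ ∑ a ∈ T, eLpNorm ((V a).indicator fun x => ‖f x‖) q volume :=
        eLpNorm_sum_le (fun a _ => hf.norm.indicator (hV a)) hq
    _ = _ := by
        refine Finset.sum_congr rfl fun a _ => ?_
        rw [eLpNorm_indicator_eq_eLpNorm_restrict (hV a), eLpNorm_norm]

lemma exists_Lp_limit {α : Type*} [MeasurableSpace α] {μ : Measure α} {q : ℝ≥0∞} [Fact (1 ≤ q)]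
    {f : ℕ → α → ℝ} (hf : ∀ j, MemLp (f j) q μ)
    (hc : ∀ ε : ℝ, 0 < ε → ∃ N, ∀ j ≥ N, ∀ j' ≥ N, eLpNorm (fun x => f j x - f j' x) q μ ≤ ENNReal.ofReal ε) :
    ∃ w, MemLp w q μ ∧ Filter.Tendsto (fun j => eLpNorm (fun x => f j x - w x) q μ) Filter.atTop (𝓝 0) := by
  have hcs : CauchySeq (fun j => (hf j).toLp) := by
    rw [Metric.cauchySeq_iff]
    intro ε hε
    obtain ⟨N, hN⟩ := hc (ε / 2) (by positivity)
    refine ⟨N, fun j hj j' hj' => ?_⟩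
    rw [← ENNReal.ofReal_lt_ofReal_iff hε, ← edist_dist, Lp.edist_toLp_toLp]
    exact (hN j hj j' hj').trans_lt ((ENNReal.ofReal_lt_ofReal_iff hε).2 (by linarith))
  obtain ⟨g, hg⟩ := cauchySeq_tendsto_of_complete hcs
  refine ⟨g, Lp.memLp g, ?_⟩
  have := (Lp.tendsto_Lp_iff_tendsto_eLpNorm' _ _).1 hg
  refine this.congr fun j => eLpNorm_congr_ae ?_
  filter_upwards [(hf j).coeFn_toLp] with x hx
  simp [hx]

/-! ### Compactness on the whole domain -/

lemma PairBd.mono {n : ℕ} {A : Fin n → ((Fin n → ℝ) →ₗ[ℝ] (Fin n → Fin n → ℝ))} {U : Set (Fin n → ℝ)}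
    {u : Fin n → (Fin n → ℝ) → ℝ} {M M' : ℝ} (h : PairBd A U u M) (hM : M ≤ M') : PairBd A U u M' :=
  fun φ c hc h1 h2 => (h φ c hc h1 h2).trans (by gcongr)

/-- The compactness statement for fields on `ℝⁿ` vanishing outside `U`, coordinate by coordinate. -/
theorem compact_coord {n : ℕ} (hn : 2 ≤ n) {A : Fin n → ((Fin n → ℝ) →ₗ[ℝ] (Fin n → Fin n → ℝ))}
    (hCell : CElliptic n A) {U : Set (Fin n → ℝ)} (hUo : IsOpen U) (hUb : Bornology.IsBounded U)
    (hstar : StarShapedWrtBall n U) {p : ℝ} (hp : 1 ≤ p) (hpn : p < (n : ℝ) / ((n : ℝ) - 1))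
    {u : ℕ → Fin n → (Fin n → ℝ) → ℝ} {M : ℝ} (hM0 : 0 < M) (hu : ∀ k i, Integrable (u k i))
    (hu0 : ∀ k i, ∀ x ∉ U, u k i x = 0) (hM : ∀ k i, ∫ x, |u k i x| ≤ M)
    (hB : ∀ k, PairBd A U (u k) M) :
    ∃ φ : ℕ → ℕ, StrictMono φ ∧ ∀ i, ∃ w, MemLp w (ENNReal.ofReal p) (volume.restrict U) ∧
      Filter.Tendsto (fun j => eLpNorm (fun x => u (φ j) i x - w x) (ENNReal.ofReal p)
        (volume.restrict U)) Filter.atTop (𝓝 0) := by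
  obtain ⟨T, V, Γ, hVΓ, hUV⟩ := exists_patches hUb hstar
  have hp1 : 1 ≤ ENNReal.ofReal p := by simpa using hp
  have : Fact (1 ≤ ENNReal.ofReal p) := ⟨hp1⟩
  obtain ⟨φ, hφ, hw⟩ := exists_weak_subseq hUb.isCompact_closure hu
    (fun k i x hx => hu0 k i x fun h => hx (subset_closure h)) hM
  refine ⟨φ, hφ, fun i => ?_⟩
  have hpatch : ∀ a, (∀ j, MemLp (u (φ j) i) (ENNReal.ofReal p) (volume.restrict (V a))) ∧
    ∀ ε : ℝ, 0 < ε → ∃ N, ∀ j ≥ N, ∀ j' ≥ N, eLpNorm (fun x => u (φ j) i x - u (φ j') i x)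
      (ENNReal.ofReal p) (volume.restrict (V a)) ≤ ENNReal.ofReal ε := by
    intro a
    obtain ⟨h1, h2, h3, h4, -, h5⟩ := hVΓ a
    obtain ⟨ρ, C, τ, hρ, -, hτ0, hτ1, ht⟩ := tail_bound hn hCell h1 h2 h3 h4 h5 hp hpn
    exact patch_cauchy h1 h4 hp (fun j => hu (φ j) i) (fun j => hM (φ j) i) (hw i) hρ hτ0 hτ1
      (fun j K => ht (u (φ j)) M hM0 (hu _) (hB _) i K)
  have hVm : ∀ a, MeasurableSet (V a) := fun a => (hVΓ a).2.2.2.1.measurableSet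
  refine exists_Lp_limit (fun j => ⟨(hu _ i).aestronglyMeasurable.restrict, ?_⟩) fun ε hε => ?_
  · refine (eLpNorm_le_sum_patches hUo.measurableSet hVm hUV hp1 (hu _ i).aestronglyMeasurable).trans_lt ?_
    exact ENNReal.sum_lt_top.2 fun a _ => ((hpatch a).1 j).2
  · choose N hN using fun a => (hpatch a).2 (ε / (T.card + 1)) (by positivity)
    refine ⟨T.sup N, fun j hj j' hj' => ?_⟩
    refine (eLpNorm_le_sum_patches hUo.measurableSet hVm hUV hp1
      ((hu _ i).aestronglyMeasurable.sub (hu _ i).aestronglyMeasurable)).trans ?_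
    calc _ ≤ ∑ a ∈ T, ENNReal.ofReal (ε / (T.card + 1)) :=
          Finset.sum_le_sum fun a ha => hN a j ((Finset.le_sup ha).trans hj) j' ((Finset.le_sup ha).trans hj')
      _ ≤ ENNReal.ofReal ε := by
        rw [← ENNReal.ofReal_sum_of_nonneg fun _ _ => by positivity]
        apply ENNReal.ofReal_le_ofReal
        rw [Finset.sum_const, nsmul_eq_mul, mul_div_assoc', div_le_iff₀ (by positivity)]
        nlinarith

lemma vecNorm_nonneg {n : ℕ} (v : Fin n → ℝ) : 0 ≤ vecNorm v := Real.sqrt_nonneg _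

lemma abs_le_vecNorm {n : ℕ} (v : Fin n → ℝ) (i : Fin n) : |v i| ≤ vecNorm v :=
  Real.abs_le_sqrt (Finset.single_le_sum (f := fun i => (v i) ^ 2) (fun _ _ => sq_nonneg _)
    (Finset.mem_univ i))

lemma vecNorm_le_sum {n : ℕ} (v : Fin n → ℝ) : vecNorm v ≤ ∑ i, |v i| := by
  refine Real.sqrt_le_iff.2 ⟨Finset.sum_nonneg fun _ _ => abs_nonneg _, ?_⟩
  calc ∑ i, v i ^ 2 = ∑ i, |v i| ^ 2 := by simp
    _ ≤ (∑ i, |v i|) ^ 2 := Finset.sum_sq_le_sq_sum_of_nonneg fun _ _ => abs_nonneg _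

lemma continuous_vecNorm {n : ℕ} : Continuous (vecNorm : (Fin n → ℝ) → ℝ) := by
  unfold vecNorm; fun_prop

lemma eLpNorm_vecNorm_le {n : ℕ} {α : Type*} [MeasurableSpace α] {μ : Measure α} {q : ℝ≥0∞}
    (hq : 1 ≤ q) {f : α → Fin n → ℝ} (hf : ∀ i, AEStronglyMeasurable (fun x => f x i) μ) :
    eLpNorm (fun x => vecNorm (f x)) q μ ≤ ∑ i, eLpNorm (fun x => f x i) q μ := by
  calc _ ≤ eLpNorm (∑ i, fun x => ‖f x i‖) q μ := by
        refine eLpNorm_mono_real fun x => ?_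
        rw [Real.norm_of_nonneg (vecNorm_nonneg _), Finset.sum_apply]
        exact vecNorm_le_sum _
    _ ≤ ∑ i, eLpNorm (fun x => ‖f x i‖) q μ := eLpNorm_sum_le (fun i _ => (hf i).norm) hq
    _ = _ := by simp only [eLpNorm_norm]

lemma aesm_of_coord {n : ℕ} {α : Type*} [MeasurableSpace α] {μ : Measure α} {f : α → Fin n → ℝ}
    (hf : ∀ i, AEStronglyMeasurable (fun x => f x i) μ) : AEStronglyMeasurable f μ :=
  (aemeasurable_pi_iff.2 fun i => (hf i).aemeasurable).aestronglyMeasurable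

lemma memLp_vecNorm {n : ℕ} {α : Type*} [MeasurableSpace α] {μ : Measure α} {q : ℝ≥0∞}
    (hq : 1 ≤ q) {f : α → Fin n → ℝ} (hf : ∀ i, MemLp (fun x => f x i) q μ) :
    MemLp (fun x => vecNorm (f x)) q μ :=
  ⟨continuous_vecNorm.comp_aestronglyMeasurable (aesm_of_coord fun i => (hf i).1),
    (eLpNorm_vecNorm_le hq fun i => (hf i).1).trans_lt (ENNReal.sum_lt_top.2 fun i _ => (hf i).2)⟩

lemma tendsto_integral_rpow {α : Type*} [MeasurableSpace α] {μ : Measure α} {p : ℝ} (hp : 1 ≤ p)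
    {F : ℕ → α → ℝ} (h0 : ∀ j x, 0 ≤ F j x) (hF : ∀ j, MemLp (F j) (ENNReal.ofReal p) μ)
    (ht : Filter.Tendsto (fun j => eLpNorm (F j) (ENNReal.ofReal p) μ) Filter.atTop (𝓝 0)) :
    Filter.Tendsto (fun j => ∫ x, F j x ^ p ∂μ) Filter.atTop (𝓝 0) := by
  have hp0 : 0 < p := by linarith
  have h1 : ∀ j, ∫ x, F j x ^ p ∂μ = (eLpNorm (F j) (ENNReal.ofReal p) μ).toReal ^ p := by
    intro j
    have hnn : 0 ≤ ∫ x, F j x ^ p ∂μ := integral_nonneg fun x => Real.rpow_nonneg (h0 j x) _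
    rw [(hF j).eLpNorm_eq_integral_rpow_norm (by simpa using hp0) ENNReal.ofReal_ne_top,
      ENNReal.toReal_ofReal hp0.le]
    simp only [Real.norm_of_nonneg (h0 j _)]
    rw [ENNReal.toReal_ofReal (by positivity), ← Real.rpow_mul hnn, inv_mul_cancel₀ hp0.ne', Real.rpow_one]
  simp only [h1]
  have h2 := ((ENNReal.tendsto_toReal ENNReal.zero_ne_top).comp ht).rpow_const (p := p) (Or.inr hp0.le)
  simpa [Real.zero_rpow hp0.ne'] using h2

end

/-! ### Assembly of the coordinates -/

/-- compact embedding of `BV^𝔸(U)` into `L^p(U;ℝⁿ)` for `p < n/(n−1)`: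
if `U` is open, bounded and star-shaped with respect to a ball, `𝔸` is ℂ-elliptic, and
`(v_k) ⊂ L¹(U;ℝⁿ)` has `sup_k (‖v_k‖_{L¹} + |𝔸v_k|(U)) < ∞`, then for every
`p ∈ [1, n/(n−1))` some subsequence converges in `L^p(U;ℝⁿ)` to a function `w ∈ L^p`. -/
theorem statement10 (n : ℕ) (hn : 2 ≤ n) (U : Set (Fin n → ℝ))
    (hUo : IsOpen U) (hUb : Bornology.IsBounded U) (hstar : StarShapedWrtBall n U)
    (A : Fin n → ((Fin n → ℝ) →ₗ[ℝ] (Fin n → Fin n → ℝ)))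
    (hsymA : ∀ j w k l, A j w k l = A j w l k)
    (hcross : ∀ i j, A j (Pi.single i 1) = A i (Pi.single j 1))
    (hCell : CElliptic n A)
    (v : ℕ → (Fin n → ℝ) → (Fin n → ℝ))
    (hint : ∀ k, IntegrableOn (v k) U volume)
    (hbdd : ∃ M : ℝ, ∀ k, AvarE n A (v k) U ≠ ⊤ ∧
      (∫ x in U, vecNorm (v k x)) + (AvarE n A (v k) U).toReal ≤ M) :
    ∀ p : ℝ, 1 ≤ p → p < (n : ℝ) / ((n : ℝ) - 1) →
      ∃ (φ : ℕ → ℕ) (w : (Fin n → ℝ) → (Fin n → ℝ)),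
        StrictMono φ ∧
        AEStronglyMeasurable w (volume.restrict U) ∧
        (∫⁻ x in U, ENNReal.ofReal (vecNorm (w x) ^ p)) ≠ ⊤ ∧
        Filter.Tendsto (fun j => ∫ x in U, vecNorm (v (φ j) x - w x) ^ p)
          Filter.atTop (nhds 0) := by
  intro p hp hpn
  obtain ⟨M, hM⟩ := hbdd
  have hp1 : 1 ≤ ENNReal.ofReal p := by simpa using hp
  have hUm := hUo.measurableSet
  have hvi : ∀ k i, Integrable (fun x => v k x i) (volume.restrict U) := fun k i =>
    (ContinuousLinearMap.proj (R := ℝ) i : (Fin n → ℝ) →L[ℝ] ℝ).integrable_comp (hint k)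
  have hvn : ∀ k, Integrable (fun x => vecNorm (v k x)) (volume.restrict U) := fun k =>
    memLp_one_iff_integrable.1 (memLp_vecNorm le_rfl fun i => memLp_one_iff_integrable.2 (hvi k i))
  have hM1 : ∀ k, ∫ x in U, vecNorm (v k x) ≤ M := fun k =>
    (le_add_of_nonneg_right ENNReal.toReal_nonneg).trans (hM k).2
  have hM2 : ∀ k, (AvarE n A (v k) U).toReal ≤ M := fun k =>
    (le_add_of_nonneg_left (integral_nonneg fun x => vecNorm_nonneg _)).trans (hM k).2
  have hM0 : 0 ≤ M := ENNReal.toReal_nonneg.trans (hM2 0)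
  set u : ℕ → Fin n → (Fin n → ℝ) → ℝ := fun k i => U.indicator fun x => v k x i with hu
  have hui : ∀ k i, Integrable (u k i) := fun k i => (integrable_indicator_iff hUm).2 (hvi k i)
  obtain ⟨φ, hφ, hw⟩ := compact_coord hn hCell hUo hUb hstar hp hpn (u := u) (M := n * M + M + 1)
    (by positivity) hui (fun k i x hx => Set.indicator_of_notMem hx _)
    (fun k i => by
      have e : (fun x => |u k i x|) = U.indicator fun x => |v k x i| := by
        funext x
        by_cases hx : x ∈ U <;> simp [hu, hx]
      rw [e, integral_indicator hUm]
      have h1 : ∫ x in U, |v k x i| ≤ ∫ x in U, vecNorm (v k x) :=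
        integral_mono (hvi k i).abs (hvn k) fun x => abs_le_vecNorm _ _
      have h2 : 0 ≤ n * M := by positivity
      linarith [hM1 k])
    (fun k => (pairBd_of_AvarE (by omega) hsymA hUm (hint k) (hM k).1).mono (by
      have : n * (AvarE n A (v k) U).toReal ≤ n * M := by gcongr; exact hM2 k
      linarith))
  choose w hwm hwt using hw
  have hwm' : ∀ i, MemLp (fun x => (fun x i => w i x : (Fin n → ℝ) → Fin n → ℝ) x i)
      (ENNReal.ofReal p) (volume.restrict U) := hwm
  -- on `U` the coordinates of `v` agree with their extensions by zero
  have hae : ∀ j i, (fun x => u (φ j) i x - w i x) =ᵐ[volume.restrict U]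
      fun x => v (φ j) x i - w i x := fun j i =>
    (ae_restrict_iff' hUm).2 (Filter.Eventually.of_forall fun x hx => by simp [hu, hx])
  have hfin : ∀ᶠ j in Filter.atTop, ∀ i, eLpNorm (fun x => u (φ j) i x - w i x) (ENNReal.ofReal p)
      (volume.restrict U) < ⊤ := Filter.eventually_all.2 fun i =>
    (hwt i).eventually (gt_mem_nhds ENNReal.zero_lt_top)
  obtain ⟨N, hN⟩ := Filter.eventually_atTop.1 hfin
  have hd : ∀ j i, AEStronglyMeasurable (fun x => v (φ j) x i - w i x) (volume.restrict U) :=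
    fun j i => (hvi _ i).aestronglyMeasurable.sub (hwm i).1
  refine ⟨φ, fun x i => w i x, hφ, aesm_of_coord fun i => (hwm i).1, ?_, ?_⟩
  · have h1 := (memLp_vecNorm hp1 hwm').integrable_norm_rpow
      (by simp; linarith) ENNReal.ofReal_ne_top
    rw [ENNReal.toReal_ofReal (by linarith)] at h1
    simp only [Real.norm_of_nonneg (vecNorm_nonneg _)] at h1
    exact h1.lintegral_lt_top.ne
  · rw [← Filter.tendsto_add_atTop_iff_nat N]
    refine tendsto_integral_rpow hp (fun j x => vecNorm_nonneg _) (fun j => ?_) ?_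
    · exact memLp_vecNorm hp1 fun i => ⟨hd _ i, (eLpNorm_congr_ae (hae _ i)).symm.trans_lt
        (hN _ (Nat.le_add_left N j) i)⟩
    · have hs : Filter.Tendsto (fun j => ∑ i, eLpNorm (fun x => u (φ j) i x - w i x)
          (ENNReal.ofReal p) (volume.restrict U)) Filter.atTop (nhds 0) := by
        simpa using tendsto_finsetSum Finset.univ fun i _ => hwt i
      refine tendsto_of_tendsto_of_tendsto_of_le_of_le tendsto_const_nhds
        ((Filter.tendsto_add_atTop_iff_nat N).2 hs) (fun _ => zero_le) fun j => ?_
      refine (eLpNorm_vecNorm_le hp1 fun i => hd _ i).trans (le_of_eq ?_)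
      exact Finset.sum_congr rfl fun i _ => (eLpNorm_congr_ae (hae _ i)).symm
end
end

section
/- Let n ≥ 2, let c⁺, c⁻ ∈ ℝⁿ and ν ∈ ℝⁿ with |ν| = 1, and let u₀ : B₁(0) → ℝⁿ be the elementary jump function u₀(y) = c⁺ if y·ν > 0 and u₀(y) = c⁻ if y·ν < 0 (defined a.e. on the open unit ball B₁(0)). Then its total 𝔸-variation is |𝔸u₀|(B₁(0)) = ω_{n−1} |(c⁺ − c⁻) ⊗_𝔸 ν|, where ω_{n−1} is the Lebesgue measure of the unit ball of ℝ^{n−1} and |·| is the Frobenius norm on M_sym. -/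
/-!
Write `M = (c⁺ - c⁻) ⊗_𝔸 ν = ∑ j, ν_j A_j (c⁺ - c⁻)`. Since `w · A_j^* X = ⟨A_j w, X⟩`, the
pairing of `u₀` with a test field `φ` is `∑ j ∫ ⟨A_j u₀, ∂_j φ⟩`. Writing
`u₀ = c⁻ + (c⁺ - c⁻) 1_{x·ν > 0}` almost everywhere, the constant part integrates to zero, and the
divergence theorem on the half-space `{x·ν > 0}` turns the rest into `-∫_{ν^⊥} ⟨M, φ⟩`
(`pairing_eq`). The hyperplane `ν^⊥` is parametrised by `ℝ^{n-1}` through a measure-preserving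
linear isomorphism `ℝ × ℝ^{n-1} → ℝⁿ` sending the first axis to `ℝ ν`
(`exists_adapted_coordinates`), so that the divergence theorem reduces to Fubini and the
fundamental theorem of calculus (`setIntegral_fderiv_halfSpace`).

The slice `ν^⊥ ∩ B₁` is the unit ball of `ℝ^{n-1}`, so Cauchy–Schwarz and `|φ| ≤ 1` give the upper
bound `ω_{n-1} |M|` (`pairing_le`). Conversely, `φ = -η M / |M|`, with `η` a cutoff equal to `1` on
`B_r`, is symmetric and admissible and gives at least `r^{n-1} ω_{n-1} |M|`
(`exists_pairing_ge`); let `r → 1`.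
-/

open MeasureTheory
open scoped ENNReal

noncomputable section

/-- The open Euclidean ball `B_r(c)` in `ℝⁿ`. -/
def EBall (n : ℕ) (c : Fin n → ℝ) (r : ℝ) : Set (Fin n → ℝ) :=
  {y | ∑ i, (y i - c i) ^ 2 < r ^ 2}

/-! ### The divergence theorem on a half-space -/

/-- Integration by parts against the constant function `1`. -/
theorem integral_fderiv_apply_eq_zero {E : Type*} [NormedAddCommGroup E] [NormedSpace ℝ E]
    [FiniteDimensional ℝ E] [MeasurableSpace E] [BorelSpace E] (μ : Measure E)
    [μ.IsAddHaarMeasure] {f : E → ℝ} (hf : ContDiff ℝ 1 f) (hc : HasCompactSupport f) (v : E) :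
    ∫ x, fderiv ℝ f x v ∂μ = 0 := by
  have hf' : Continuous fun x => fderiv ℝ f x v :=
    (hf.continuous_fderiv one_ne_zero).clm_apply continuous_const
  have h := integral_mul_fderiv_eq_neg_fderiv_mul_of_integrable (μ := μ) (f := fun _ : E => (1 : ℝ))
    (g := f) (v := v) (by simp)
    (by simpa using hf'.integrable_of_hasCompactSupport (hc.fderiv_apply (𝕜 := ℝ) v))
    (by simpa using hf.continuous.integrable_of_hasCompactSupport hc)
    (by simp) (fun x _ => hf.differentiable one_ne_zero x)
  simpa using h

/-- Divergence theorem on the model half-space `{t > 0}` of `ℝ × ℝᵐ`, for a constant direction `v`.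
The component of `v` along the first factor is integrated first in `t`, which leaves the boundary
value; the remaining component is integrated first over the slices `{t} × ℝᵐ`, where it
contributes nothing. -/
theorem setIntegral_fderiv_halfSpace {m : ℕ} {f : ℝ × (Fin m → ℝ) → ℝ} (hf : ContDiff ℝ 1 f)
    (hc : HasCompactSupport f) (v : ℝ × (Fin m → ℝ)) :
    ∫ p in {p : ℝ × (Fin m → ℝ) | 0 < p.1}, fderiv ℝ f p v = -(v.1 * ∫ y, f (0, y)) := by
  have hcont : ∀ w, Continuous fun x => fderiv ℝ f x w := fun w =>
    (hf.continuous_fderiv one_ne_zero).clm_apply continuous_const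
  have hint : ∀ w, Integrable fun x => fderiv ℝ f x w := fun w =>
    (hcont w).integrable_of_hasCompactSupport (hc.fderiv_apply (𝕜 := ℝ) w)
  have hset : {p : ℝ × (Fin m → ℝ) | 0 < p.1} = Set.Ioi 0 ×ˢ Set.univ := by
    ext p; simp
  have hv : ∀ p, fderiv ℝ f p v = v.1 * fderiv ℝ f p (1, 0) + fderiv ℝ f p (0, v.2) := by
    intro p
    have : v = v.1 • ((1 : ℝ), (0 : Fin m → ℝ)) + (0, v.2) := by ext <;> simp
    conv_lhs => rw [this, map_add, map_smul]
    simp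
  have hslice : ∀ y : Fin m → ℝ, ContDiff ℝ 1 fun t : ℝ => f (t, y) := fun y =>
    hf.comp (contDiff_id.prodMk contDiff_const)
  have hslice' : ∀ t : ℝ, ContDiff ℝ 1 fun y : Fin m → ℝ => f (t, y) := fun t =>
    hf.comp (contDiff_const.prodMk contDiff_id)
  have hcs : ∀ y : Fin m → ℝ, HasCompactSupport fun t : ℝ => f (t, y) := fun y =>
    hc.comp_isClosedEmbedding (g := fun t : ℝ => (t, y)) 
      (Isometry.of_dist_eq fun a b => by simp [Prod.dist_eq]).isClosedEmbedding
  have hcs' : ∀ t : ℝ, HasCompactSupport fun y : Fin m → ℝ => f (t, y) := fun t =>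
    hc.comp_isClosedEmbedding (g := fun y : Fin m → ℝ => (t, y)) 
      (Isometry.of_dist_eq fun a b => by simp [Prod.dist_eq]).isClosedEmbedding
  have hd : ∀ (t : ℝ) (y : Fin m → ℝ), fderiv ℝ f (t, y) (1, 0) = deriv (fun t => f (t, y)) t := by
    intro t y
    have h1 := (hf.differentiable one_ne_zero (t, y)).hasFDerivAt
    have h2 : HasDerivAt (fun t : ℝ => (t, y)) ((1 : ℝ), (0 : Fin m → ℝ)) t :=
      (hasDerivAt_id t).prodMk (hasDerivAt_const t y)
    exact (h1.comp_hasDerivAt t h2).deriv.symm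
  have hd' : ∀ (t : ℝ) (y : Fin m → ℝ),
      fderiv ℝ f (t, y) (0, v.2) = fderiv ℝ (fun y => f (t, y)) y v.2 := by
    intro t y
    have h1 := (hf.differentiable one_ne_zero (t, y)).hasFDerivAt
    have h2 := hasFDerivAt_prodMk_right (𝕜 := ℝ) t y
    have h3 := (h1.comp y h2).fderiv
    have h4 : (f ∘ fun y => (t, y)) = fun y => f (t, y) := rfl
    rw [← h4, h3]
    simp
  simp_rw [hv]
  rw [integral_add ((hint _).const_mul _).integrableOn (hint _).integrableOn, integral_const_mul]
  have e1 : ∫ p in {p : ℝ × (Fin m → ℝ) | 0 < p.1}, fderiv ℝ f p (1, 0) = - ∫ y, f (0, y) := by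
    rw [hset, Measure.volume_eq_prod, ← Measure.prod_restrict, integral_prod_symm]
    · simp_rw [hd]
      rw [Measure.restrict_univ, ← integral_neg]
      exact integral_congr_ae (.of_forall fun y => (hcs y).integral_Ioi_deriv_eq (hslice y) 0)
    · rw [Measure.prod_restrict]
      exact (hint _).integrableOn
  have e2 : ∫ p in {p : ℝ × (Fin m → ℝ) | 0 < p.1}, fderiv ℝ f p (0, v.2) = 0 := by
    rw [hset, Measure.volume_eq_prod, setIntegral_prod]
    · simp_rw [hd', Measure.restrict_univ]
      simp [integral_fderiv_apply_eq_zero volume (hslice' _) (hcs' _)]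
    · exact (hint _).integrableOn
  rw [e1, e2]
  ring

/-- Measure-preserving linear coordinates `(t, y)` adapted to the unit vector `ν`: the signed
distance to the hyperplane `ν^⊥` is `t`, and the Euclidean norm is `√(t² + |y|²)`. They come from
an orthonormal basis whose first vector is `ν`. -/
theorem exists_adapted_coordinates {m : ℕ} (ν : Fin (m + 1) → ℝ) (hν : ∑ i, (ν i) ^ 2 = 1) :
    ∃ T : (ℝ × (Fin m → ℝ)) ≃L[ℝ] (Fin (m + 1) → ℝ),
      MeasurePreserving T volume volume ∧ (∀ p, ∑ i, T p i * ν i = p.1) ∧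
      ∀ p, ∑ i, (T p i) ^ 2 = p.1 ^ 2 + ∑ i, (p.2 i) ^ 2 := by
  let ν' : EuclideanSpace ℝ (Fin (m + 1)) := WithLp.toLp 2 ν
  have hν' : ‖ν'‖ = 1 := by
    rw [EuclideanSpace.norm_eq]; simp [ν', hν]
  have hon : Orthonormal ℝ (({0} : Set (Fin (m + 1))).domRestrict fun _ => ν') := by
    constructor
    · intro i; exact hν'
    · intro i j hij; exact absurd (Subsingleton.elim i j) hij
  obtain ⟨b, hb⟩ := hon.exists_orthonormalBasis_extension_of_card_eq (by simp)
  have hb0 : b 0 = ν' := hb 0 rfl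
  let C := Fin.consEquivL ℝ (fun _ : Fin (m + 1) => ℝ)
  let L := (EuclideanSpace.equiv (Fin (m + 1)) ℝ)
  let T : (ℝ × (Fin m → ℝ)) ≃L[ℝ] (Fin (m + 1) → ℝ) :=
    C.trans (L.symm.trans (b.repr.symm.toContinuousLinearEquiv.trans L))
  have hT : ∀ p, T p = WithLp.ofLp (b.repr.symm (WithLp.toLp 2 (Fin.cons p.1 p.2))) := fun p => rfl
  refine ⟨T, ?_, ?_, ?_⟩
  · have h1 : MeasurePreserving (fun p : ℝ × (Fin m → ℝ) => C p) volume volume := by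
      have h := (volume_preserving_piFinSuccAbove (fun _ : Fin (m + 1) => ℝ) 0).symm
      have hC : (fun p : ℝ × (Fin m → ℝ) => C p) =
          (MeasurableEquiv.piFinSuccAbove (fun _ : Fin (m + 1) => ℝ) 0).symm := by
        funext p
        simp [C, MeasurableEquiv.piFinSuccAbove_symm_apply, Fin.insertNthEquiv]
        rfl
      rw [hC]
      exact h
    exact (PiLp.volume_preserving_ofLp _).comp
      (b.repr.symm.measurePreserving.comp ((PiLp.volume_preserving_toLp _).comp h1))
  · intro p
    have h1 : ∑ i, T p i * ν i = inner ℝ (b 0) (WithLp.toLp 2 (T p)) := by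
      rw [hb0, PiLp.inner_apply]; simp [ν']
    rw [h1, ← b.repr_apply_apply, hT]
    simp
  · intro p
    have h1 : ∑ i, (T p i) ^ 2 = ‖(WithLp.toLp 2 (T p))‖ ^ 2 := by
      rw [EuclideanSpace.norm_sq_eq]; simp
    rw [h1, hT]
    simp only [WithLp.toLp_ofLp, LinearIsometryEquiv.norm_map]
    rw [EuclideanSpace.norm_sq_eq, Fin.sum_univ_succ]
    simp

/-! ### The Frobenius pairing and the adjoint -/

/-- The Frobenius pairing `X ↦ ⟨M, X⟩` as a continuous linear functional. -/
def frobPair {n : ℕ} (M : Fin n → Fin n → ℝ) : (Fin n → Fin n → ℝ) →L[ℝ] ℝ :=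
  ∑ k, ∑ l, M k l • ((ContinuousLinearMap.proj l : (Fin n → ℝ) →L[ℝ] ℝ).comp
    (ContinuousLinearMap.proj k : (Fin n → Fin n → ℝ) →L[ℝ] (Fin n → ℝ)))

theorem frobPair_apply {n : ℕ} (M X : Fin n → Fin n → ℝ) :
    frobPair M X = ∑ k, ∑ l, M k l * X k l := by
  simp [frobPair]

theorem frobPair_comm {n : ℕ} (M X : Fin n → Fin n → ℝ) : frobPair M X = frobPair X M := by
  simp only [frobPair_apply, mul_comm]

theorem frobPair_self {n : ℕ} (M : Fin n → Fin n → ℝ) : frobPair M M = frobNorm M ^ 2 := by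
  rw [frobPair_apply, frobNorm, Real.sq_sqrt (by positivity)]
  simp only [sq]

theorem frobNorm_nonneg {n : ℕ} (M : Fin n → Fin n → ℝ) : 0 ≤ frobNorm M := Real.sqrt_nonneg _

theorem frobNorm_smul {n : ℕ} (c : ℝ) (M : Fin n → Fin n → ℝ) :
    frobNorm (c • M) = |c| * frobNorm M := by
  simp only [frobNorm, Pi.smul_apply, smul_eq_mul, mul_pow, ← Finset.mul_sum]
  rw [Real.sqrt_mul (sq_nonneg c), Real.sqrt_sq_eq_abs]

theorem abs_frobPair_le {n : ℕ} (M X : Fin n → Fin n → ℝ) :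
    |frobPair M X| ≤ frobNorm M * frobNorm X := by
  rw [frobPair_apply, frobNorm, frobNorm, ← Fintype.sum_prod_type' (f := fun k l => M k l * X k l),
    ← Fintype.sum_prod_type' (f := fun k l => M k l ^ 2),
    ← Fintype.sum_prod_type' (f := fun k l => X k l ^ 2), ← Real.sqrt_mul (by positivity)]
  exact Real.abs_le_sqrt (Finset.sum_mul_sq_le_sq_mul_sq _ _ _)

/-- The adjoint relation `w · A_j^* X = ⟨A_j w, X⟩`. -/
theorem sum_mul_Aadj {n : ℕ} (A : Fin n → ((Fin n → ℝ) →ₗ[ℝ] (Fin n → Fin n → ℝ))) (j : Fin n)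
    (w : Fin n → ℝ) (X : Fin n → Fin n → ℝ) :
    ∑ i, w i * Aadj n A j X i = frobPair (A j w) X := by
  have h : ∀ i, Aadj n A j X i = frobPair X (A j (Pi.single i 1)) := fun i => by
    rw [frobPair_apply]; rfl
  rw [frobPair_comm, LinearMap.pi_apply_eq_sum_univ (A j) w, map_sum]
  refine Finset.sum_congr rfl fun i _ => ?_
  rw [map_smul, smul_eq_mul, h]
  congr 3
  ext k
  simp [Pi.single_apply, eq_comm]

/-! ### The pairing of the jump function with a test field -/

theorem volume_hyperplane_eq_zero {m : ℕ} {ν : Fin (m + 1) → ℝ}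
    {T : (ℝ × (Fin m → ℝ)) ≃L[ℝ] (Fin (m + 1) → ℝ)} (hT : MeasurePreserving T volume volume)
    (hTν : ∀ p, ∑ i, T p i * ν i = p.1) :
    volume {x : Fin (m + 1) → ℝ | ∑ i, x i * ν i = 0} = 0 := by
  rw [← hT.measure_preimage_emb T.toHomeomorph.measurableEmbedding]
  have : T ⁻¹' {x : Fin (m + 1) → ℝ | ∑ i, x i * ν i = 0} = {0} ×ˢ Set.univ := by
    ext p; simp [hTν]
  rw [this, Measure.volume_eq_prod, Measure.prod_prod]
  simp

/-- Divergence theorem on the half-space `{x · ν > 0}`, the hyperplane `ν^⊥` being parametrised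
by `y ↦ T (0, y)` in adapted coordinates `T`. -/
theorem setIntegral_fderiv_of_coordinates {m : ℕ} {ν : Fin (m + 1) → ℝ}
    {T : (ℝ × (Fin m → ℝ)) ≃L[ℝ] (Fin (m + 1) → ℝ)} (hT : MeasurePreserving T volume volume)
    (hTν : ∀ p, ∑ i, T p i * ν i = p.1) {ψ : (Fin (m + 1) → ℝ) → ℝ} (hψ : ContDiff ℝ 1 ψ)
    (hc : HasCompactSupport ψ) (v : Fin (m + 1) → ℝ) :
    ∫ x in {x | 0 < ∑ i, x i * ν i}, fderiv ℝ ψ x v =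
      -((∑ i, v i * ν i) * ∫ y, ψ (T (0, y))) := by
  have h := setIntegral_fderiv_halfSpace (f := ψ ∘ T) (hψ.comp T.contDiff)
    (hc.comp_homeomorph T.toHomeomorph) (T.symm v)
  have hv : (T.symm v).1 = ∑ i, v i * ν i := by rw [← hTν]; simp
  rw [hv] at h
  rw [← hT.setIntegral_preimage_emb T.toHomeomorph.measurableEmbedding]
  simp only [Set.preimage_ofPred_eq, hTν]
  refine Eq.trans ?_ h
  congr 1
  ext p
  rw [T.comp_right_fderiv]
  simp

/-- The distributional `𝔸`-gradient of the jump function is `((c⁺ - c⁻) ⊗_𝔸 ν)` times the surface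
measure of the hyperplane `ν^⊥`. -/
theorem pairing_eq_s13 {m : ℕ}
    (A : Fin (m + 1) → ((Fin (m + 1) → ℝ) →ₗ[ℝ] (Fin (m + 1) → Fin (m + 1) → ℝ)))
    {cp cm ν : Fin (m + 1) → ℝ}
    {u₀ : (Fin (m + 1) → ℝ) → (Fin (m + 1) → ℝ)}
    (hup : ∀ y, 0 < ∑ i, y i * ν i → u₀ y = cp)
    (hum : ∀ y, ∑ i, y i * ν i < 0 → u₀ y = cm)
    {T : (ℝ × (Fin m → ℝ)) ≃L[ℝ] (Fin (m + 1) → ℝ)} (hT : MeasurePreserving T volume volume)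
    (hTν : ∀ p, ∑ i, T p i * ν i = p.1) {U : Set (Fin (m + 1) → ℝ)}
    {φ : (Fin (m + 1) → ℝ) → (Fin (m + 1) → Fin (m + 1) → ℝ)} (hφ : IsTest (m + 1) U φ) :
    pairing (m + 1) A u₀ U φ = -∫ y, frobPair (∑ j, ν j • A j (cp - cm)) (φ (T (0, y))) := by
  obtain ⟨hφ1, hφc, hφU, -, -⟩ := hφ
  have hψ1 : ∀ M, ContDiff ℝ 1 fun x => frobPair M (φ x) := fun M =>
    (frobPair M).contDiff.comp hφ1
  have hψc : ∀ M, HasCompactSupport fun x => frobPair M (φ x) := fun M =>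
    hφc.comp_left (g := frobPair M) (map_zero _)
  have hfd : ∀ M x v, frobPair M (fderiv ℝ φ x v) = fderiv ℝ (fun x => frobPair M (φ x)) x v := by
    intro M x v
    have h := ((frobPair M).hasFDerivAt.comp x (hφ1.differentiable one_ne_zero x).hasFDerivAt).fderiv
    have h' : (frobPair M ∘ φ) = fun x => frobPair M (φ x) := rfl
    rw [← h', h]; rfl
  have hint : ∀ M v, Integrable fun x => fderiv ℝ (fun x => frobPair M (φ x)) x v := fun M v =>
    (((hψ1 M).continuous_fderiv one_ne_zero).clm_apply
      continuous_const).integrable_of_hasCompactSupport ((hψc M).fderiv_apply (𝕜 := ℝ) v)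
  have hH : MeasurableSet {x : Fin (m + 1) → ℝ | 0 < ∑ i, x i * ν i} :=
    (isOpen_lt continuous_const (by fun_prop)).measurableSet
  have hterm : ∀ j, ∫ x in U, ∑ i, u₀ x i * Aadj (m + 1) A j (fderiv ℝ φ x (Pi.single j 1)) i
      = -(ν j * ∫ y, frobPair (A j (cp - cm)) (φ (T (0, y)))) := by
    intro j
    simp_rw [sum_mul_Aadj]
    rw [setIntegral_eq_integral_of_forall_compl_eq_zero]
    -- Off the null hyperplane, `𝔸`-pairing with `u₀` is pairing with the constant `c⁻`, plus
    -- pairing with the jump `c⁺ - c⁻` on the positive side only.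
    · have hae : (fun x => frobPair (A j (u₀ x)) (fderiv ℝ φ x (Pi.single j 1))) =ᵐ[volume]
          fun x => {x : Fin (m + 1) → ℝ | 0 < ∑ i, x i * ν i}.indicator
            (fun x => fderiv ℝ (fun x => frobPair (A j (cp - cm)) (φ x)) x (Pi.single j 1)) x
            + fderiv ℝ (fun x => frobPair (A j cm) (φ x)) x (Pi.single j 1) := by
        have h0 : ∀ᵐ x : Fin (m + 1) → ℝ, ∑ i, x i * ν i ≠ 0 :=
          measure_eq_zero_iff_ae_notMem.1 (volume_hyperplane_eq_zero hT hTν)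
        filter_upwards [h0] with x hx
        rw [← hfd]
        rcases lt_or_gt_of_ne hx with h | h
        · rw [Set.indicator_of_notMem (by simpa using h.le), hum x h, zero_add]
        · rw [Set.indicator_of_mem (by exact h), hup x h, ← hfd, frobPair_comm, frobPair_comm (A j _),
            frobPair_comm (A j _), ← map_add, ← map_add, sub_add_cancel]
      rw [integral_congr_ae hae, integral_add ((hint _ _).indicator hH) (hint _ _),
        integral_indicator hH, integral_fderiv_apply_eq_zero volume (hψ1 _) (hψc _),
        setIntegral_fderiv_of_coordinates hT hTν (hψ1 _) (hψc _)]
      simp [Pi.single_apply]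
    · intro x hx
      have : fderiv ℝ φ x = 0 := by
        by_contra h
        exact hx (hφU (support_fderiv_subset ℝ h))
      rw [this]; simp
  have hint' : ∀ M, Integrable fun y => frobPair M (φ (T (0, y))) := by
    intro M
    refine Continuous.integrable_of_hasCompactSupport ?_ ?_
    · exact (hψ1 M).continuous.comp (T.continuous.comp (by fun_prop))
    · exact ((hψc M).comp_homeomorph T.toHomeomorph).comp_isClosedEmbedding
        (g := fun y : Fin m → ℝ => ((0 : ℝ), y))
        (Isometry.of_dist_eq fun a b => by simp [Prod.dist_eq]).isClosedEmbedding
  have hlin : ∀ X, frobPair (∑ j, ν j • A j (cp - cm)) X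
      = ∑ j, ν j * frobPair (A j (cp - cm)) X := by
    intro X
    rw [frobPair_comm, map_sum]
    refine Finset.sum_congr rfl fun j _ => ?_
    rw [map_smul, smul_eq_mul, frobPair_comm]
  rw [pairing, Finset.sum_congr rfl fun j _ => hterm j]
  simp_rw [hlin]
  rw [integral_finsetSum _ fun j _ => (hint' _).const_mul _, Finset.sum_neg_distrib]
  simp_rw [integral_const_mul]

/-! ### Euclidean balls and cutoffs -/

theorem isBounded_sum_sq_le {n : ℕ} (s : ℝ) :
    Bornology.IsBounded {y : Fin n → ℝ | ∑ i, (y i) ^ 2 ≤ s} := by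
  refine (Metric.isBounded_closedBall (x := (0 : Fin n → ℝ)) (r := Real.sqrt s)).subset fun y hy => ?_
  rw [mem_closedBall_zero_iff, pi_norm_le_iff_of_nonneg (Real.sqrt_nonneg _)]
  intro i
  rw [Real.norm_eq_abs]
  refine Real.abs_le_sqrt (le_trans ?_ hy)
  exact Finset.single_le_sum (f := fun i => y i ^ 2) (fun i _ => sq_nonneg _) (Finset.mem_univ i)

theorem volume_sum_sq_lt_ne_top {n : ℕ} (s : ℝ) :
    volume {y : Fin n → ℝ | ∑ i, (y i) ^ 2 < s} ≠ ∞ := by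
  refine ((isBounded_sum_sq_le s).subset fun y hy => ?_).measure_lt_top.ne
  rw [Set.mem_ofPred_eq] at hy ⊢
  exact hy.le

open scoped Pointwise in
theorem volume_sum_sq_lt_sq {m : ℕ} {r : ℝ} (hr : 0 < r) :
    (volume {y : Fin m → ℝ | ∑ i, (y i) ^ 2 < r ^ 2}).toReal
      = r ^ m * (volume {y : Fin m → ℝ | ∑ i, (y i) ^ 2 < 1}).toReal := by
  have : {y : Fin m → ℝ | ∑ i, (y i) ^ 2 < r ^ 2} = r • {y : Fin m → ℝ | ∑ i, (y i) ^ 2 < 1} := by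
    ext y
    rw [Set.mem_smul_set_iff_inv_smul_mem₀ hr.ne']
    simp only [Set.mem_ofPred_eq, Pi.smul_apply, smul_eq_mul, mul_pow, ← Finset.mul_sum]
    rw [inv_pow, inv_mul_lt_iff₀ (by positivity), mul_one]
  rw [this, Measure.addHaar_smul, ENNReal.toReal_mul, ENNReal.toReal_ofReal (abs_nonneg _)]
  simp [abs_of_pos hr]

/-- A cutoff equal to `1` on the closed Euclidean ball of radius `r < 1` and compactly supported in
the open unit ball. -/
theorem exists_cutoff {n : ℕ} {r : ℝ} (hr0 : 0 < r) (hr : r < 1) :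
    ∃ η : (Fin n → ℝ) → ℝ, ContDiff ℝ 1 η ∧ HasCompactSupport η ∧ tsupport η ⊆ EBall n 0 1 ∧
      (∀ x, 0 ≤ η x) ∧ (∀ x, η x ≤ 1) ∧ ∀ x, ∑ i, (x i) ^ 2 ≤ r ^ 2 → η x = 1 := by
  obtain ⟨s, hrs, hs⟩ := exists_between hr
  have hd : 0 < s ^ 2 - r ^ 2 := by nlinarith
  let η : (Fin n → ℝ) → ℝ := fun x =>
    Real.smoothTransition ((s ^ 2 - ∑ i, (x i) ^ 2) / (s ^ 2 - r ^ 2))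
  have hcl : IsClosed {x : Fin n → ℝ | ∑ i, (x i) ^ 2 ≤ s ^ 2} :=
    isClosed_le (by fun_prop) continuous_const
  have hts : tsupport η ⊆ {x : Fin n → ℝ | ∑ i, (x i) ^ 2 ≤ s ^ 2} := by
    refine closure_minimal (fun x hx => ?_) hcl
    by_contra h
    refine hx (Real.smoothTransition.zero_of_nonpos (div_nonpos_of_nonpos_of_nonneg ?_ hd.le))
    simp only [Set.mem_ofPred_eq, not_le] at h
    linarith
  refine ⟨η, ?_, ?_, ?_, fun x => Real.smoothTransition.nonneg _,
    fun x => Real.smoothTransition.le_one _, fun x hx => ?_⟩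
  · exact (Real.smoothTransition.contDiff (n := 1)).comp (by fun_prop)
  · exact (Metric.isCompact_of_isClosed_isBounded hcl (isBounded_sum_sq_le _)).of_isClosed_subset
      (isClosed_tsupport _) hts
  · intro x hx
    have := hts hx
    simp only [Set.mem_ofPred_eq, EBall, Pi.zero_apply, sub_zero] at this ⊢
    nlinarith
  · refine Real.smoothTransition.one_of_one_le ?_
    rw [le_div_iff₀ hd]
    linarith

/-! ### The two bounds on the variation -/

/-- On the hyperplane a test field lives in the `m`-dimensional unit ball and has norm at most `1`,
so Cauchy–Schwarz bounds the pairing. -/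
theorem pairing_le {m : ℕ}
    (A : Fin (m + 1) → ((Fin (m + 1) → ℝ) →ₗ[ℝ] (Fin (m + 1) → Fin (m + 1) → ℝ)))
    {cp cm ν : Fin (m + 1) → ℝ}
    {u₀ : (Fin (m + 1) → ℝ) → (Fin (m + 1) → ℝ)}
    (hup : ∀ y, 0 < ∑ i, y i * ν i → u₀ y = cp)
    (hum : ∀ y, ∑ i, y i * ν i < 0 → u₀ y = cm)
    {T : (ℝ × (Fin m → ℝ)) ≃L[ℝ] (Fin (m + 1) → ℝ)} (hT : MeasurePreserving T volume volume)
    (hTν : ∀ p, ∑ i, T p i * ν i = p.1)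
    (hTn : ∀ p, ∑ i, (T p i) ^ 2 = p.1 ^ 2 + ∑ i, (p.2 i) ^ 2)
    {φ : (Fin (m + 1) → ℝ) → (Fin (m + 1) → Fin (m + 1) → ℝ)}
    (hφ : IsTest (m + 1) (EBall (m + 1) 0 1) φ) :
    pairing (m + 1) A u₀ (EBall (m + 1) 0 1) φ ≤
      (volume {y : Fin m → ℝ | ∑ i, (y i) ^ 2 < 1}).toReal
        * frobNorm (∑ j, ν j • A j (cp - cm)) := by
  rw [pairing_eq_s13 A hup hum hT hTν hφ]
  obtain ⟨-, -, hφU, -, hφn⟩ := hφ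
  set M := ∑ j, ν j • A j (cp - cm)
  rw [← setIntegral_eq_integral_of_forall_compl_eq_zero
    (s := {y : Fin m → ℝ | ∑ i, (y i) ^ 2 < 1})]
  · refine (neg_le_abs _).trans ?_
    rw [mul_comm]
    refine norm_setIntegral_le_of_norm_le_const
      (f := fun y => frobPair M (φ (T (0, y)))) (volume_sum_sq_lt_ne_top 1).lt_top fun y _ => ?_
    exact (abs_frobPair_le _ _).trans
      (mul_le_of_le_one_right (frobNorm_nonneg M) (hφn _))
  · intro y hy
    have : φ (T (0, y)) = 0 := by
      by_contra h
      have h2 := hφU (subset_tsupport φ h)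
      simp only [EBall, Set.mem_ofPred_eq, Pi.zero_apply, sub_zero, hTn] at h2 hy
      apply hy
      linarith
    rw [this, map_zero]

/-- Almost optimal test fields: `-η M / |M|` with `M = (c⁺ - c⁻) ⊗_𝔸 ν` and `η` a cutoff that is
`1` on the ball of radius `r`. -/
theorem exists_pairing_ge {m : ℕ}
    (A : Fin (m + 1) → ((Fin (m + 1) → ℝ) →ₗ[ℝ] (Fin (m + 1) → Fin (m + 1) → ℝ)))
    (hsymA : ∀ j w k l, A j w k l = A j w l k)
    {cp cm ν : Fin (m + 1) → ℝ}
    {u₀ : (Fin (m + 1) → ℝ) → (Fin (m + 1) → ℝ)}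
    (hup : ∀ y, 0 < ∑ i, y i * ν i → u₀ y = cp)
    (hum : ∀ y, ∑ i, y i * ν i < 0 → u₀ y = cm)
    {T : (ℝ × (Fin m → ℝ)) ≃L[ℝ] (Fin (m + 1) → ℝ)} (hT : MeasurePreserving T volume volume)
    (hTν : ∀ p, ∑ i, T p i * ν i = p.1)
    (hTn : ∀ p, ∑ i, (T p i) ^ 2 = p.1 ^ 2 + ∑ i, (p.2 i) ^ 2)
    {r : ℝ} (hr0 : 0 < r) (hr : r < 1) :
    ∃ φ, IsTest (m + 1) (EBall (m + 1) 0 1) φ ∧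
      r ^ m * (volume {y : Fin m → ℝ | ∑ i, (y i) ^ 2 < 1}).toReal
        * frobNorm (∑ j, ν j • A j (cp - cm)) ≤
      pairing (m + 1) A u₀ (EBall (m + 1) 0 1) φ := by
  set M := ∑ j, ν j • A j (cp - cm) with hM
  have hMs : ∀ k l, M k l = M l k := fun k l => by
    simp only [hM, Finset.sum_apply, Pi.smul_apply, hsymA _ _ k l]
  obtain ⟨η, hη1, hηc, hηU, hη0, hηle, hηr⟩ := exists_cutoff (n := m + 1) hr0 hr
  -- If `M = 0`, the junk value `0⁻¹ = 0` makes this the zero field, which is admissible.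
  let φ : (Fin (m + 1) → ℝ) → (Fin (m + 1) → Fin (m + 1) → ℝ) :=
    fun x => η x • (-(frobNorm M)⁻¹ • M)
  have hφ : IsTest (m + 1) (EBall (m + 1) 0 1) φ := by
    refine ⟨hη1.smul contDiff_const, hηc.smul_right, ?_, ?_, ?_⟩
    · exact (closure_mono (Function.support_smul_subset_left η _)).trans hηU
    · intro x k l
      simp only [φ, Pi.smul_apply, hMs k l]
    · intro x
      rw [frobNorm_smul, frobNorm_smul, abs_neg, abs_inv, abs_of_nonneg (frobNorm_nonneg M),
        abs_of_nonneg (hη0 x)]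
      exact mul_le_one₀ (hηle x) (mul_nonneg (inv_nonneg.2 (frobNorm_nonneg M)) (frobNorm_nonneg M))
        inv_mul_le_one
  refine ⟨φ, hφ, ?_⟩
  rw [pairing_eq_s13 A hup hum hT hTν hφ, ← integral_neg]
  have hval : ∀ y, -frobPair M (φ (T (0, y))) = η (T (0, y)) * frobNorm M := by
    intro y
    simp only [φ, map_smul, smul_eq_mul, frobPair_self]
    rcases eq_or_ne (frobNorm M) 0 with h | h
    · simp [h]
    · field_simp
  simp_rw [← hM, hval]
  rw [integral_mul_const, ← volume_sum_sq_lt_sq hr0]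
  refine mul_le_mul_of_nonneg_right ?_ (frobNorm_nonneg M)
  have hS : MeasurableSet {y : Fin m → ℝ | ∑ i, (y i) ^ 2 < r ^ 2} :=
    (isOpen_lt (by fun_prop) continuous_const).measurableSet
  have hle : ∫ y, {y : Fin m → ℝ | ∑ i, (y i) ^ 2 < r ^ 2}.indicator (fun _ => (1 : ℝ)) y
      ≤ ∫ y, η (T (0, y)) := by
    refine integral_mono ((integrable_indicator_iff hS).2
      (integrableOn_const (volume_sum_sq_lt_ne_top _))) ?_ fun y => ?_
    · refine Continuous.integrable_of_hasCompactSupport ?_ ?_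
      · exact hη1.continuous.comp (T.continuous.comp (by fun_prop))
      · exact (hηc.comp_homeomorph T.toHomeomorph).comp_isClosedEmbedding
          (g := fun y : Fin m → ℝ => ((0 : ℝ), y))
          (Isometry.of_dist_eq fun a b => by simp [Prod.dist_eq]).isClosedEmbedding
    · by_cases hy : y ∈ {y : Fin m → ℝ | ∑ i, (y i) ^ 2 < r ^ 2}
      · rw [Set.indicator_of_mem hy]
        refine (hηr _ ?_).ge
        rw [Set.mem_ofPred_eq] at hy
        rw [hTn]
        simpa using hy.le
      · rw [Set.indicator_of_notMem hy]
        exact hη0 _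
  rw [integral_indicator hS] at hle
  simpa [Measure.real] using hle

/-- the total `𝔸`-variation on the unit ball of the elementary jump
function `u₀ = c⁺` on `{y·ν > 0}`, `u₀ = c⁻` on `{y·ν < 0}` equals
`ω_{n−1} |(c⁺ − c⁻) ⊗_𝔸 ν|`, where `ω_{n−1}` is the Lebesgue measure of the unit ball
of `ℝ^{n−1}` and `w ⊗_𝔸 z = ∑ j, z_j A_j w`. -/
theorem statement13 (n : ℕ) (hn : 2 ≤ n)
    (A : Fin n → ((Fin n → ℝ) →ₗ[ℝ] (Fin n → Fin n → ℝ)))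
    (hsymA : ∀ j w k l, A j w k l = A j w l k)
    (hcross : ∀ i j, A j (Pi.single i 1) = A i (Pi.single j 1))
    (cp cm ν : Fin n → ℝ) (hν : ∑ i, (ν i) ^ 2 = 1)
    (u₀ : (Fin n → ℝ) → (Fin n → ℝ))
    (hup : ∀ y, 0 < ∑ i, y i * ν i → u₀ y = cp)
    (hum : ∀ y, ∑ i, y i * ν i < 0 → u₀ y = cm) :
    AvarE n A u₀ (EBall n 0 1)
      = ENNReal.ofReal
          ((volume {y : Fin (n - 1) → ℝ | ∑ i, (y i) ^ 2 < 1}).toReal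
            * frobNorm (∑ j, ν j • A j (cp - cm))) := by
  obtain ⟨m, rfl⟩ : ∃ m, n = m + 1 := ⟨n - 1, by omega⟩
  obtain ⟨T, hT, hTν, hTn⟩ := exists_adapted_coordinates ν hν
  change _ = ENNReal.ofReal ((volume {y : Fin m → ℝ | ∑ i, (y i) ^ 2 < 1}).toReal
    * frobNorm (∑ j, ν j • A j (cp - cm)))
  apply le_antisymm
  · exact iSup_le fun φ => ENNReal.ofReal_le_ofReal (pairing_le A hup hum hT hTν hTn φ.2)
  · have hcont : Continuous fun r : ℝ => ENNReal.ofReal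
        (r ^ m * (volume {y : Fin m → ℝ | ∑ i, (y i) ^ 2 < 1}).toReal
          * frobNorm (∑ j, ν j • A j (cp - cm))) :=
      ENNReal.continuous_ofReal.comp (by fun_prop)
    have hlim := (hcont.tendsto 1).mono_left (nhdsWithin_le_nhds (s := Set.Iio 1))
    simp only [one_pow, one_mul] at hlim
    refine le_of_tendsto hlim ?_
    filter_upwards [Ioo_mem_nhdsLT (zero_lt_one' ℝ)] with r hr
    obtain ⟨φ, hφ, hle⟩ := exists_pairing_ge A hsymA hup hum hT hTν hTn hr.1 hr.2
    exact (ENNReal.ofReal_le_ofReal hle).trans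
      (le_iSup (fun φ : {φ // IsTest (m + 1) (EBall (m + 1) 0 1) φ} =>
        ENNReal.ofReal (pairing (m + 1) A u₀ (EBall (m + 1) 0 1) φ.1)) ⟨φ, hφ⟩)
end
end

section
/- Let n, m ≥ 1, let l ∈ ℕ, let B ⊂ ℝⁿ be an open ball, and let (p_k) be a sequence of polynomial maps ℝⁿ → ℝ^m of (total) degree at most l. If p_k(x) converges in ℝ^m for Lebesgue-almost every x ∈ B, then there exists a polynomial map p : ℝⁿ → ℝ^m of degree at most l such that p_k → p uniformly on B; in particular the a.e. pointwise limit coincides a.e. on B with p. -/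
/-! Polynomials of total degree at most `l` form a finite-dimensional space `V`. Let `E` be the set of
points of the ball where the sequence converges. Since `E` has full measure in the ball it is dense
there, so an element of `V` vanishing on `E` vanishes on the ball, and is therefore zero
(`eq_zero_of_ae_eval_eq_zero`). Equivalently, the evaluations at points of `E` have trivial common
kernel, so by finite dimensionality they span the dual of `V`. Every linear functional on `V` is
thus a finite linear combination of evaluations along which the sequence converges
(`exists_tendsto_dual`); in particular the coordinates of `P k` in a fixed basis of `V` converge.
A polynomial depends jointly continuously on its coordinates and the evaluation point, so
convergence of the coordinates gives uniform convergence on compact sets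
(`tendstoUniformlyOn_of_tendsto_coord`). -/

open MeasureTheory

noncomputable section

lemma isOpen_EBall (n : ℕ) (c : Fin n → ℝ) (r : ℝ) : IsOpen (EBall n c r) :=
  isOpen_lt (by fun_prop) continuous_const

/-- The Euclidean ball lies in the sup-norm ball of the same radius, which is compact. -/
lemma EBall_subset_closedBall (n : ℕ) (c : Fin n → ℝ) (r : ℝ) (hr : 0 < r) :
    EBall n c r ⊆ Metric.closedBall c r := by
  intro y hy
  rw [Metric.mem_closedBall, dist_pi_le_iff hr.le]
  intro i
  rw [Real.dist_eq]
  refine abs_le_of_sq_le_sq ?_ hr.le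
  have h : ∑ i, (y i - c i) ^ 2 < r ^ 2 := hy
  exact (Finset.single_le_sum (f := fun i => (y i - c i) ^ 2)
    (fun j _ => sq_nonneg _) (Finset.mem_univ i)).trans h.le

lemma eq_zero_of_ae_eval_eq_zero {n : ℕ} {U : Set (Fin n → ℝ)} (hU : IsOpen U)
    {c : Fin n → ℝ} (hc : c ∈ U) (p : MvPolynomial (Fin n) ℝ)
    (h : ∀ᵐ x : Fin n → ℝ ∂volume, x ∈ U → MvPolynomial.eval x p = 0) : p = 0 := by
  have hEq : Set.EqOn (fun x => MvPolynomial.eval x p) (fun _ => 0) U :=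
    Measure.eqOn_open_of_ae_eq (μ := volume) ((ae_restrict_iff' hU.measurableSet).2 h) hU
      (MvPolynomial.continuous_eval p).continuousOn continuousOn_const
  obtain ⟨ε, hε, hsub⟩ := Metric.isOpen_iff.1 hU c hc
  -- A sup-norm ball is a product of infinite sets, on which a nonzero polynomial cannot vanish.
  refine MvPolynomial.funext_set (fun i => Metric.ball (c i) ε) (fun i => ?_) (fun x hx => ?_)
  · rw [Real.ball_eq_Ioo]
    exact Set.Ioo_infinite (by linarith)
  · rw [← ball_pi c hε] at hx
    simpa using hEq (hsub hx)

/-- If the elements of `E`, a set of functionals on a finite-dimensional space, have trivial common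
kernel and converge along `u`, then every functional converges along `u`. -/
lemma exists_tendsto_dual {V : Type*} [AddCommGroup V] [Module ℝ V] [FiniteDimensional ℝ V]
    (u : ℕ → V) (E : Set (Module.Dual ℝ V))
    (hE : ∀ v : V, (∀ φ ∈ E, φ v = 0) → v = 0)
    (hconv : ∀ φ ∈ E, ∃ y, Filter.Tendsto (fun k => φ (u k)) Filter.atTop (nhds y))
    (φ : Module.Dual ℝ V) :
    ∃ y, Filter.Tendsto (fun k => φ (u k)) Filter.atTop (nhds y) := by
  have hbot : (Submodule.span ℝ E).dualCoannihilator = ⊥ := by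
    rw [eq_bot_iff]
    intro v hv
    rw [Submodule.mem_dualCoannihilator] at hv
    exact hE v fun φ hφ => hv φ (Submodule.subset_span hφ)
  have htop : Submodule.span ℝ E = ⊤ := by
    rw [← Subspace.dualCoannihilator_dualAnnihilator_eq (W := Submodule.span ℝ E), hbot,
      Submodule.dualAnnihilator_bot]
  have hφ : φ ∈ Submodule.span ℝ E := htop ▸ Submodule.mem_top
  induction hφ using Submodule.span_induction with
  | mem φ h => exact hconv φ h
  | zero => exact ⟨0, by simp⟩
  | add φ ψ _ _ h₁ h₂ =>
    obtain ⟨y, hy⟩ := h₁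
    obtain ⟨z, hz⟩ := h₂
    exact ⟨y + z, hy.add hz⟩
  | smul a φ _ h =>
    obtain ⟨y, hy⟩ := h
    exact ⟨a * y, hy.const_mul a⟩

/-- Currying `(a, x) ↦ ∑ j, a j * b j (x)` gives a map into continuous functions that is continuous
for the compact-open topology, so convergence of coordinates is locally uniform convergence. -/
lemma tendstoUniformlyOn_of_tendsto_coord {n m d : ℕ} (b : Fin d → MvPolynomial (Fin n) ℝ)
    (a : ℕ → Fin m → Fin d → ℝ) (a₀ : Fin m → Fin d → ℝ)
    (ha : Filter.Tendsto a Filter.atTop (nhds a₀)) {K : Set (Fin n → ℝ)} (hK : IsCompact K) :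
    TendstoUniformlyOn (fun k x => fun i => ∑ j, a k i j * MvPolynomial.eval x (b j))
      (fun x i => ∑ j, a₀ i j * MvPolynomial.eval x (b j)) Filter.atTop K := by
  have hb : ∀ j, Continuous fun x => MvPolynomial.eval x (b j) :=
    fun j => MvPolynomial.continuous_eval (b j)
  let F : C((Fin m → Fin d → ℝ) × (Fin n → ℝ), Fin m → ℝ) :=
    ⟨fun q i => ∑ j, q.1 i j * MvPolynomial.eval q.2 (b j),
      continuous_pi fun i => continuous_finsetSum _ fun j _ =>
        (by fun_prop : Continuous fun q : (Fin m → Fin d → ℝ) × (Fin n → ℝ) => q.1 i j).mul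
          ((hb j).comp continuous_snd)⟩
  exact ContinuousMap.tendsto_iff_forall_isCompact_tendstoUniformlyOn.1
    ((F.curry.continuous.tendsto a₀).comp ha) K hK

/-- if a sequence of polynomial maps `ℝⁿ → ℝ^m` of degree at most `l`
converges pointwise a.e. on an open ball, then it converges uniformly on the ball to a
polynomial map of degree at most `l`, and the a.e. pointwise limit coincides with it. -/
theorem statement14 (n m : ℕ) (hn : 1 ≤ n) (hm : 1 ≤ m) (l : ℕ)
    (c : Fin n → ℝ) (r : ℝ) (hr : 0 < r)
    (P : ℕ → Fin m → MvPolynomial (Fin n) ℝ)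
    (hdeg : ∀ k i, (P k i).totalDegree ≤ l)
    (hae : ∀ᵐ x : Fin n → ℝ ∂volume, x ∈ EBall n c r →
      ∃ y : Fin m → ℝ,
        Filter.Tendsto (fun k => fun i => MvPolynomial.eval x (P k i))
          Filter.atTop (nhds y)) :
    ∃ Q : Fin m → MvPolynomial (Fin n) ℝ,
      (∀ i, (Q i).totalDegree ≤ l) ∧
      TendstoUniformlyOn (fun k x => fun i => MvPolynomial.eval x (P k i))
        (fun x i => MvPolynomial.eval x (Q i)) Filter.atTop (EBall n c r) ∧
      ∀ᵐ x : Fin n → ℝ ∂volume, x ∈ EBall n c r →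
        Filter.Tendsto (fun k => fun i => MvPolynomial.eval x (P k i))
          Filter.atTop (nhds (fun i => MvPolynomial.eval x (Q i))) := by
  let V := MvPolynomial.restrictTotalDegree (Fin n) ℝ l
  let b := Module.finBasis ℝ V
  let u : ℕ → Fin m → V := fun k i =>
    ⟨P k i, (MvPolynomial.mem_restrictTotalDegree _ _ _).2 (hdeg k i)⟩
  let ev : (Fin n → ℝ) → Module.Dual ℝ V := fun x =>
    (MvPolynomial.aeval x : MvPolynomial (Fin n) ℝ →ₐ[ℝ] ℝ).toLinearMap.comp V.subtype
  have hev : ∀ x (v : V), ev x v = MvPolynomial.eval x (v : MvPolynomial (Fin n) ℝ) := by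
    intro x v
    simp [ev, MvPolynomial.aeval_eq_eval]
  have hexp : ∀ x (v : V), MvPolynomial.eval x (v : MvPolynomial (Fin n) ℝ)
      = ∑ j, b.repr v j * MvPolynomial.eval x (b j : MvPolynomial (Fin n) ℝ) := by
    intro x v
    have h := congrArg (ev x) (b.sum_repr v)
    rw [map_sum, hev] at h
    simp only [map_smul, smul_eq_mul] at h
    simpa only [hev] using h.symm
  have hcoord : ∀ i j, ∃ y, Filter.Tendsto (fun k => b.repr (u k i) j) Filter.atTop (nhds y) := by
    intro i j
    refine exists_tendsto_dual (fun k => u k i)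
      (ev '' {x | ∃ y, Filter.Tendsto (fun k => MvPolynomial.eval x (P k i)) Filter.atTop (nhds y)})
      (fun v hv => ?_) ?_ (b.coord j)
    · have hc : c ∈ EBall n c r := by
        change ∑ i, (c i - c i) ^ 2 < r ^ 2
        simpa using pow_pos hr 2
      refine Subtype.ext (eq_zero_of_ae_eval_eq_zero (isOpen_EBall n c r) hc _ ?_)
      filter_upwards [hae] with x hx hxB
      obtain ⟨y, hy⟩ := hx hxB
      rw [← hev]
      exact hv _ ⟨x, ⟨y i, tendsto_pi_nhds.1 hy i⟩, rfl⟩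
    · rintro _ ⟨x, hx, rfl⟩
      simp only [hev]
      exact hx
  choose a₀ ha₀ using hcoord
  let q : Fin m → V := fun i => ∑ j, a₀ i j • b j
  have hunif : TendstoUniformlyOn (fun k x => fun i => MvPolynomial.eval x (P k i))
      (fun x i => MvPolynomial.eval x (q i : MvPolynomial (Fin n) ℝ)) Filter.atTop
      (EBall n c r) := by
    have h := (tendstoUniformlyOn_of_tendsto_coord (fun j => (b j : MvPolynomial (Fin n) ℝ))
      (fun k i j => b.repr (u k i) j) a₀
      (tendsto_pi_nhds.2 fun i => tendsto_pi_nhds.2 fun j => ha₀ i j)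
      (isCompact_closedBall c r)).mono (EBall_subset_closedBall n c r hr)
    have hP : ∀ k x i, MvPolynomial.eval x (P k i)
        = ∑ j, b.repr (u k i) j * MvPolynomial.eval x (b j : MvPolynomial (Fin n) ℝ) :=
      fun k x i => hexp x (u k i)
    have hq : ∀ x i, MvPolynomial.eval x (q i : MvPolynomial (Fin n) ℝ)
        = ∑ j, a₀ i j * MvPolynomial.eval x (b j : MvPolynomial (Fin n) ℝ) := by
      intro x i
      rw [← hev]
      simp [q, hev]
    simpa only [hP, hq] using h
  exact ⟨fun i => q i, fun i => (MvPolynomial.mem_restrictTotalDegree _ _ _).1 (q i).2, hunif,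
    Filter.Eventually.of_forall fun x hx => hunif.tendsto_at hx⟩
end
end

section
/- Let q > 1 with conjugate exponent q' = q/(q−1), let γ > 0, ε > 0, let ψ : [0,1] → [0,∞) be continuous and decreasing with ψ(1) = 0 and ψ(t) > 0 for t ∈ [0,1), and let ρ ∈ (0,1). Set τ := (γq/q')^{1/q} ε ∫₀^{1−ρ} ψ(s)^{−1/q} ds, a finite positive number. Then the map z ↦ (γq/q')^{1/q} ε ∫₀^z ψ(s)^{−1/q} ds is a strictly increasing C¹ bijection of [0,1−ρ] onto [0,τ], and its inverse w : [0,τ] → [0,1−ρ] is a C¹ strictly increasing solution of the Cauchy problem w'(t) = (q'/(γq))^{1/q} ε^{−1} ψ(w(t))^{1/q}, w(0) = 0, with w(τ) = 1−ρ, and it satisfies the optimal-profile energy identity ∫₀^τ [ ψ(w(t))/ε + γ ε^{q−1} (w'(t))^q ] dt = (q')^{1/q'} (γq)^{1/q} ∫₀^{1−ρ} ψ(s)^{1/q'} ds. -/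
open Set intervalIntegral

noncomputable section

/-!
Write `c = (γ q / q')^{1/q} ε`, so that `F' = c ψ^{-1/q}` on `[0, 1 - ρ]` by the fundamental theorem
of calculus; this derivative is continuous and positive because `ψ > 0` on `[0, 1)`. Everything
about `w` is the one-dimensional inverse function theorem on a compact interval
(`exists_inverse_of_hasDerivWithinAt_pos`): `w' = 1 / F'(w) = c⁻¹ ψ(w)^{1/q}`.

For the energy, `γ ε^{q-1} (w')^q = (q'/q) ψ(w)/ε` and `1 + q'/q = q'`, so the integrand equals
`(q'/ε) ψ(w)`. The substitution `t = F z` turns its integral into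
`(q'/ε) c ∫ ψ · ψ^{-1/q} = q' (γ q / q')^{1/q} ∫ ψ^{1/q'}`, and `q' · q'^{-1/q} = q'^{1/q'}`
because the two exponents are conjugate.
-/

/-- A function with positive derivative on `[0, b]` and vanishing at `0` is a strictly increasing
bijection onto `[0, F b]`, with a strictly increasing differentiable inverse. -/
lemma exists_inverse_of_hasDerivWithinAt_pos {F G : ℝ → ℝ} {b : ℝ} (hb : 0 < b) (hF0 : F 0 = 0)
    (hd : ∀ z ∈ Icc (0 : ℝ) b, HasDerivWithinAt F (G z) (Icc 0 b) z)
    (hpos : ∀ z ∈ Icc (0 : ℝ) b, 0 < G z) :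
    StrictMonoOn F (Icc 0 b) ∧ BijOn F (Icc 0 b) (Icc 0 (F b)) ∧
    ∃ w : ℝ → ℝ, (∀ z ∈ Icc (0 : ℝ) b, w (F z) = z) ∧
      BijOn w (Icc 0 (F b)) (Icc 0 b) ∧ StrictMonoOn w (Icc 0 (F b)) ∧
      ContinuousOn w (Icc 0 (F b)) ∧
      ∀ t ∈ Icc (0 : ℝ) (F b), HasDerivWithinAt w (G (w t))⁻¹ (Icc 0 (F b)) t := by
  have hcont : ContinuousOn F (Icc 0 b) := fun z hz => (hd z hz).continuousWithinAt
  have hmono : StrictMonoOn F (Icc 0 b) :=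
    strictMonoOn_of_hasDerivWithinAt_pos (convex_Icc 0 b) hcont
      (fun x hx => (hd x (interior_subset hx)).mono interior_subset)
      (fun x hx => hpos x (interior_subset hx))
  have h0 : (0 : ℝ) ∈ Icc 0 b := left_mem_Icc.2 hb.le
  have hbb : b ∈ Icc 0 b := right_mem_Icc.2 hb.le
  have hbij : BijOn F (Icc 0 b) (Icc 0 (F b)) := by
    refine ⟨fun z hz => ⟨?_, hmono.monotoneOn hz hbb hz.2⟩, hmono.injOn, ?_⟩
    · rw [← hF0]
      exact hmono.monotoneOn h0 hz hz.1
    · have := intermediate_value_Icc hb.le hcont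
      rwa [hF0] at this
  have hinv : InvOn (Function.invFunOn F (Icc 0 b)) F (Icc 0 b) (Icc 0 (F b)) :=
    hbij.invOn_invFunOn
  generalize Function.invFunOn F (Icc 0 b) = w at hinv
  have hwb : BijOn w (Icc 0 (F b)) (Icc 0 b) := hbij.symm hinv.symm
  have hwm : StrictMonoOn w (Icc 0 (F b)) := by
    intro s hs t ht hst
    rw [← hmono.lt_iff_lt (hwb.mapsTo hs) (hwb.mapsTo ht), hinv.2 hs, hinv.2 ht]
    exact hst
  have hwc : ContinuousOn w (Icc 0 (F b)) := by
    -- `w` pulls a closed set back to the `F`-image of a compact set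
    refine continuousOn_iff_isClosed.2 fun t ht =>
      ⟨F '' (Icc 0 b ∩ t), ((isCompact_Icc.inter_right ht).image_of_continuousOn
        (hcont.mono inter_subset_left)).isClosed, ?_⟩
    ext x
    constructor
    · rintro ⟨hx, hx'⟩
      exact ⟨⟨w x, ⟨hwb.mapsTo hx', hx⟩, hinv.2 hx'⟩, hx'⟩
    · rintro ⟨⟨z, ⟨hz, hzt⟩, rfl⟩, hx'⟩
      refine ⟨?_, hx'⟩
      rw [mem_preimage, hinv.1 hz]
      exact hzt
  refine ⟨hmono, hbij, w, hinv.1, hwb, hwm, hwc, fun t ht => ?_⟩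
  have h1 : HasFDerivWithinAt F
      (ContinuousLinearEquiv.unitsEquivAut ℝ
        (Units.mk0 (G (w t)) (hpos _ (hwb.mapsTo ht)).ne') : ℝ →L[ℝ] ℝ) (Icc 0 b) (w t) :=
    hd (w t) (hwb.mapsTo ht)
  have h2 := h1.of_local_left_inverse
    ((hwc t ht).tendsto_nhdsWithin hwb.mapsTo) ht
    (eventually_mem_nhdsWithin.mono fun x hx => hinv.2 hx)
  simpa using h2.hasDerivWithinAt

/-- the optimal phase-field profile. For `q > 1`, `q' = q/(q−1)`, `γ, ε > 0`,
`ψ` continuous decreasing with `ψ(1) = 0` and `ψ > 0` on `[0,1)`, and `ρ ∈ (0,1)`, with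
`τ = (γq/q')^{1/q} ε ∫₀^{1−ρ} ψ^{−1/q}`, the primitive
`F(z) = (γq/q')^{1/q} ε ∫₀^z ψ^{−1/q}` is a strictly increasing `C¹` bijection of
`[0, 1−ρ]` onto `[0, τ]`; its inverse `w` is a `C¹` strictly increasing solution of
`w' = (q'/(γq))^{1/q} ε⁻¹ ψ(w)^{1/q}`, `w(0) = 0`, with `w(τ) = 1−ρ`, and
`∫₀^τ [ψ(w)/ε + γ ε^{q−1} (w')^q] dt = (q')^{1/q'} (γq)^{1/q} ∫₀^{1−ρ} ψ^{1/q'}`. -/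
theorem statement19 (q : ℝ) (hq : 1 < q) (γ ε : ℝ) (hγ : 0 < γ) (hε : 0 < ε)
    (ψ : ℝ → ℝ) (hψc : ContinuousOn ψ (Set.Icc 0 1))
    (hψa : AntitoneOn ψ (Set.Icc 0 1)) (hψ1 : ψ 1 = 0)
    (hψpos : ∀ t ∈ Set.Ico (0 : ℝ) 1, 0 < ψ t)
    (ρ : ℝ) (hρ : ρ ∈ Set.Ioo (0 : ℝ) 1)
    (q' : ℝ) (hq' : q' = q / (q - 1))
    (F : ℝ → ℝ)
    (hF : F = fun z => (γ * q / q') ^ (1 / q) * ε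
      * ∫ s in (0 : ℝ)..z, ψ s ^ (-(1 : ℝ) / q))
    (τ : ℝ) (hτ : τ = F (1 - ρ)) :
    0 < τ ∧
    StrictMonoOn F (Set.Icc 0 (1 - ρ)) ∧
    (∀ z ∈ Set.Icc (0 : ℝ) (1 - ρ),
      HasDerivWithinAt F ((γ * q / q') ^ (1 / q) * ε * ψ z ^ (-(1 : ℝ) / q))
        (Set.Icc 0 (1 - ρ)) z) ∧
    ContinuousOn (fun z => (γ * q / q') ^ (1 / q) * ε * ψ z ^ (-(1 : ℝ) / q))
      (Set.Icc 0 (1 - ρ)) ∧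
    Set.BijOn F (Set.Icc 0 (1 - ρ)) (Set.Icc 0 τ) ∧
    ∃ w : ℝ → ℝ,
      (∀ z ∈ Set.Icc (0 : ℝ) (1 - ρ), w (F z) = z) ∧
      Set.BijOn w (Set.Icc 0 τ) (Set.Icc 0 (1 - ρ)) ∧
      StrictMonoOn w (Set.Icc 0 τ) ∧
      w 0 = 0 ∧ w τ = 1 - ρ ∧
      (∀ t ∈ Set.Icc (0 : ℝ) τ,
        HasDerivWithinAt w ((q' / (γ * q)) ^ (1 / q) * ε⁻¹ * ψ (w t) ^ ((1 : ℝ) / q))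
          (Set.Icc 0 τ) t) ∧
      ContinuousOn (fun t => (q' / (γ * q)) ^ (1 / q) * ε⁻¹ * ψ (w t) ^ ((1 : ℝ) / q))
        (Set.Icc 0 τ) ∧
      (∫ t in (0 : ℝ)..τ, (ψ (w t) / ε + γ * ε ^ (q - 1)
          * ((q' / (γ * q)) ^ (1 / q) * ε⁻¹ * ψ (w t) ^ ((1 : ℝ) / q)) ^ q))
        = q' ^ (1 / q') * (γ * q) ^ (1 / q)
            * ∫ s in (0 : ℝ)..(1 - ρ), ψ s ^ ((1 : ℝ) / q') := by
  obtain ⟨hρ0, hρ1⟩ := hρ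
  have hb : 0 < 1 - ρ := by linarith
  have hq0 : 0 < q := by linarith
  have hqm : 0 < q - 1 := by linarith
  have hq'0 : 0 < q' := by rw [hq']; positivity
  have hq'inv : 1 / q' = 1 - 1 / q := by rw [hq']; field_simp
  have hψp : ∀ z ∈ Icc (0 : ℝ) (1 - ρ), 0 < ψ z := fun z hz =>
    hψpos z ⟨hz.1, by linarith [hz.2]⟩
  have hψc' : ContinuousOn ψ (Icc 0 (1 - ρ)) :=
    hψc.mono (Icc_subset_Icc_right (by linarith))
  have hgc : ContinuousOn (fun z => ψ z ^ (-(1 : ℝ) / q)) (Icc 0 (1 - ρ)) :=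
    hψc'.rpow_const fun z hz => Or.inl (hψp z hz).ne'
  have hA : 0 < (γ * q / q') ^ (1 / q) := by positivity
  have hc : 0 < (γ * q / q') ^ (1 / q) * ε := by positivity
  have hF0 : F 0 = 0 := by simp [hF]
  have hGc : ContinuousOn (fun z => (γ * q / q') ^ (1 / q) * ε * ψ z ^ (-(1 : ℝ) / q))
      (Icc 0 (1 - ρ)) := continuousOn_const.mul hgc
  have hd : ∀ z ∈ Icc (0 : ℝ) (1 - ρ),
      HasDerivWithinAt F ((γ * q / q') ^ (1 / q) * ε * ψ z ^ (-(1 : ℝ) / q))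
        (Icc 0 (1 - ρ)) z := by
    intro z hz
    have : Fact (z ∈ Icc (0 : ℝ) (1 - ρ)) := ⟨hz⟩
    rw [hF]
    refine HasDerivWithinAt.const_mul _ ?_
    refine integral_hasDerivWithinAt_right (t := Icc 0 (1 - ρ)) ?_
      (hgc.stronglyMeasurableAtFilter_nhdsWithin measurableSet_Icc z) (hgc z hz)
    refine (hgc.mono ?_).intervalIntegrable
    rw [uIcc_of_le hz.1]
    exact Icc_subset_Icc_right hz.2
  have hGp : ∀ z ∈ Icc (0 : ℝ) (1 - ρ),
      0 < (γ * q / q') ^ (1 / q) * ε * ψ z ^ (-(1 : ℝ) / q) := fun z hz =>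
    mul_pos hc (Real.rpow_pos_of_pos (hψp z hz) _)
  obtain ⟨hmono, hbij, w, hwF, hwb, hwm, hwc, hwd⟩ :=
    exists_inverse_of_hasDerivWithinAt_pos hb hF0 hd hGp
  have h0 : (0 : ℝ) ∈ Icc 0 (1 - ρ) := left_mem_Icc.2 hb.le
  have hbb : 1 - ρ ∈ Icc 0 (1 - ρ) := right_mem_Icc.2 hb.le
  have hτ0 : 0 < F (1 - ρ) := by
    rw [← hF0]
    exact hmono h0 hbb hb
  have hAinv : (q' / (γ * q)) ^ (1 / q) = ((γ * q / q') ^ (1 / q))⁻¹ := by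
    rw [← Real.inv_rpow (by positivity), inv_div]
  have hψw : ∀ t ∈ Icc 0 (F (1 - ρ)), 0 < ψ (w t) := fun t ht => hψp _ (hwb.mapsTo ht)
  have hψwc : ContinuousOn (fun t => ψ (w t)) (Icc 0 (F (1 - ρ))) :=
    hψc'.comp hwc hwb.mapsTo
  subst hτ
  refine ⟨hτ0, hmono, hd, hGc, hbij, w, hwF, hwb, hwm, ?_, hwF _ hbb, ?_, ?_, ?_⟩
  · have := hwF 0 h0
    rwa [hF0] at this
  · intro t ht
    convert hwd t ht using 1
    rw [hAinv, neg_div, Real.rpow_neg (hψw t ht).le, mul_inv, mul_inv, inv_inv]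
  · exact continuousOn_const.mul (hψwc.rpow_const fun t ht => Or.inl (hψw t ht).ne')
  · have hint : ∀ t ∈ Icc 0 (F (1 - ρ)), ψ (w t) / ε + γ * ε ^ (q - 1)
          * ((q' / (γ * q)) ^ (1 / q) * ε⁻¹ * ψ (w t) ^ ((1 : ℝ) / q)) ^ q
        = q' / ε * ψ (w t) := by
      intro t ht
      have hp := hψw t ht
      rw [Real.mul_rpow (by positivity) (by positivity),
        Real.mul_rpow (by positivity) (by positivity), ← Real.rpow_mul (by positivity),
        ← Real.rpow_mul hp.le, one_div_mul_cancel hq0.ne', Real.rpow_one, Real.rpow_one,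
        Real.inv_rpow hε.le, Real.rpow_sub_one hε.ne']
      have hεq : ε ^ q ≠ 0 := (Real.rpow_pos_of_pos hε q).ne'
      rw [hq']
      field_simp
      ring
    have hsub := integral_comp_mul_deriv'' (a := 0) (b := 1 - ρ) (f := F)
      (f' := fun z => (γ * q / q') ^ (1 / q) * ε * ψ z ^ (-(1 : ℝ) / q))
      (g := fun t => q' / ε * ψ (w t))
      (by rw [uIcc_of_le hb.le]; exact fun z hz => (hd z hz).continuousWithinAt)
      (by
        rw [min_eq_left hb.le, max_eq_right hb.le]
        intro x hx
        exact ((hd x (Ioo_subset_Icc_self hx)).hasDerivAt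
          (Icc_mem_nhds hx.1 hx.2)).hasDerivWithinAt)
      (by rw [uIcc_of_le hb.le]; exact hGc)
      (by rw [uIcc_of_le hb.le, hbij.image_eq]; exact continuousOn_const.mul hψwc)
    rw [hF0] at hsub
    rw [integral_congr (g := fun t => q' / ε * ψ (w t))
      (fun t ht => hint t (by rwa [uIcc_of_le hτ0.le] at ht)), ← hsub,
      ← intervalIntegral.integral_const_mul]
    refine integral_congr fun z hz => ?_
    rw [uIcc_of_le hb.le] at hz
    have hp := hψp z hz
    have e1 : ψ z ^ (1 / q') = ψ z * ψ z ^ (-1 / q) := by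
      rw [hq'inv, sub_eq_add_neg, ← neg_div, Real.rpow_add hp, Real.rpow_one]
    have e2 : q' ^ (1 / q') * (γ * q) ^ (1 / q) = q' * (γ * q / q') ^ (1 / q) := by
      rw [hq'inv, Real.rpow_sub hq'0, Real.rpow_one, Real.div_rpow (by positivity) hq'0.le]
      ring
    simp only [Function.comp_apply]
    rw [hwF z hz, e1, e2]
    field_simp
end
end
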